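/- arXiv:1605.03558 — 2 statements merged into one kernel-verified Lean document; each statement's English description precedes it below -/
import Mathlib

section
/- Let p > 1, C > 0, ρ > 0, x₀ ∈ ℝⁿ, and let V be a nonnegative continuous function on B(x₀,ρ). Let T > 0 and let u ≥ 0 be a classical solution of the differential inequality u_t ≤ Δu + C·V(x)·(1+u)^p on (0,T)×B(x₀,ρ), and assume the type I estimate u(t,x) ≤ M(T−t)^{−α} on (0,T)×B(x₀,ρ) for some M > 0. If V(x₀) = 0, then x₀ is not a blowup point: there exist r ∈ (0,ρ) and a constant K > 0 such that u(t,x) ≤ K for all (t,x) ∈ (T/2,T)×B(x₀,r). -/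
open Set Metric Filter

noncomputable def lap {n : ℕ} (g : EuclideanSpace ℝ (Fin n) → ℝ)
    (x : EuclideanSpace ℝ (Fin n)) : ℝ :=
  ∑ i : Fin n, fderiv ℝ (fun y => fderiv ℝ g y (EuclideanSpace.single i 1)) x
    (EuclideanSpace.single i 1)

/-!
The type I rate turns the reaction term near a zero of `V` into a potential `κ / (T - t)` for
`1 + u`, with `κ` as small as we like. The integrating factor `(T - t)^κ` makes the product
subcaloric with at most power growth, and comparison with the barrier
`(δ(d² - |x - x₀|²)² + T - t)^(-β)`, which blows up only on the sphere of radius `d`, bounds it on a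
smaller ball. Hence `1 + u` grows at most like `(T - t)^(-κ)` there, which makes the potential
integrable in time, and a second integrating factor gives the bound.

The comparison is delicate because a solution is only assumed differentiable separately in `t` and
in `x`, so it need not attain its maximum on a compact cylinder. Mollifications in `x` do, and they
are subcaloric if the inequality holds in weak form in space. By Baire's theorem, if the weak form
failed somewhere, the set of bad times would have a portion on which `Δu` is bounded above; there
`u_t` is bounded above, so one may integrate the pointwise inequality after all.
-/

open MeasureTheory Topology

local notation:max "ℝ^" n:max => EuclideanSpace ℝ (Fin n)

section SecondDerivative

variable {E : Type*} [NormedAddCommGroup E] [NormedSpace ℝ E] {f : E → ℝ} {x : E}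

lemma fderiv_comp_sub_left_apply {y : E} (hf : DifferentiableAt ℝ f (x - y)) (e : E) :
    fderiv ℝ (fun z => f (x - z)) y e = -fderiv ℝ f (x - y) e := by
  have hcomp : HasFDerivAt (fun z => f (x - z)) _ y :=
    hf.hasFDerivAt.comp y ((hasFDerivAt_id y).const_sub x)
  simp [hcomp.fderiv]

lemma contDiffAt_fderiv_apply (hf : ContDiffAt ℝ 2 f x) (e : E) :
    ContDiffAt ℝ 1 (fun y => fderiv ℝ f y e) x :=
  (hf.fderiv_right (m := 1) (by norm_num)).clm_apply contDiffAt_const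

lemma contDiff_fderiv_apply (hf : ContDiff ℝ 2 f) (e : E) :
    ContDiff ℝ 1 fun y => fderiv ℝ f y e :=
  contDiff_iff_contDiffAt.2 fun _ => contDiffAt_fderiv_apply hf.contDiffAt e

lemma continuousAt_fderiv_fderiv_apply (hf : ContDiffAt ℝ 2 f x) (e : E) :
    ContinuousAt (fun y => fderiv ℝ (fun z => fderiv ℝ f z e) y e) x :=
  (((contDiffAt_fderiv_apply hf e).fderiv_right (m := 0) (by norm_num)).clm_apply
    contDiffAt_const).continuousAt

lemma fderiv_fderiv_apply_nonpos_of_isLocalMax (hf : ContDiffAt ℝ 2 f x) (hmax : IsLocalMax f x)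
    (e : E) : fderiv ℝ (fun y => fderiv ℝ f y e) x e ≤ 0 := by
  have hline : ∀ s : ℝ, HasDerivAt (fun s : ℝ => x + s • e) e s := fun s => by
    simpa using ((hasDerivAt_id s).smul_const e).const_add x
  have hlim : Tendsto (fun s : ℝ => x + s • e) (𝓝 0) (𝓝 x) := by
    simpa using (hline 0).continuousAt.tendsto
  set φ : ℝ → ℝ := fun s => f (x + s • e)
  have hφ' : deriv φ =ᶠ[𝓝 0] fun s => fderiv ℝ f (x + s • e) e := by
    filter_upwards [hlim.eventually (hf.eventually (by simp))] with s hs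
    exact ((hs.differentiableAt two_ne_zero).hasFDerivAt.comp_hasDerivAt s (hline s)).deriv
  have hφ'' : deriv (deriv φ) 0 = fderiv ℝ (fun y => fderiv ℝ f y e) x e := by
    have hfe : HasFDerivAt (fun y => fderiv ℝ f y e) (fderiv ℝ (fun y => fderiv ℝ f y e) x)
        (x + (0 : ℝ) • e) := by
      simpa using ((contDiffAt_fderiv_apply hf e).differentiableAt one_ne_zero).hasFDerivAt
    rw [hφ'.deriv_eq]
    exact (hfe.comp_hasDerivAt (0 : ℝ) (hline 0)).deriv
  have hφmax : IsLocalMax φ 0 := by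
    simpa [φ, IsLocalMax, IsMaxFilter] using hlim.eventually hmax
  by_contra! hpos
  -- A positive second derivative makes `0` a local minimum too, so `φ` is locally constant.
  have hφmin : IsLocalMin φ 0 := by
    refine isLocalMin_of_deriv_deriv_pos (hφ'' ▸ hpos) hφmax.deriv_eq_zero ?_
    exact ContinuousAt.comp (f := fun s : ℝ => x + s • e) (by simpa using hf.continuousAt)
      (hline 0).continuousAt
  have hconst : φ =ᶠ[𝓝 0] fun _ => φ 0 := by
    filter_upwards [hφmax, hφmin] with s h₁ h₂ using le_antisymm h₁ h₂
  have hzero := hconst.deriv.deriv_eq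
  simp only [hφ'', deriv_const'] at hzero
  exact hpos.ne' hzero

end SecondDerivative

section Lap

variable {n : ℕ} {f g : ℝ^n → ℝ} {x : ℝ^n}

lemma lap_eq_laplacian (hf : ContDiffAt ℝ 2 f x) : lap f x = Laplacian.laplacian f x := by
  rw [InnerProductSpace.laplacian_eq_iteratedFDeriv_orthonormalBasis f
    (EuclideanSpace.basisFun (Fin n) ℝ)]
  refine Finset.sum_congr rfl fun i _ => ?_
  have hf' : DifferentiableAt ℝ (fderiv ℝ f) x :=
    (hf.fderiv_right (m := 1) (by norm_num)).differentiableAt one_ne_zero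
  rw [fderiv_clm_apply hf' (differentiableAt_const _)]
  simp [iteratedFDeriv_two_apply]

lemma lap_congr (h : f =ᶠ[𝓝 x] g) : lap f x = lap g x := by
  refine Finset.sum_congr rfl fun i _ => ?_
  have hfderiv : (fun y => fderiv ℝ f y (EuclideanSpace.single i 1)) =ᶠ[𝓝 x]
      fun y => fderiv ℝ g y (EuclideanSpace.single i 1) := by
    filter_upwards [h.fderiv (𝕜 := ℝ)] with y hy
    rw [hy]
  rw [hfderiv.fderiv_eq]

@[simp]
lemma lap_const (c : ℝ) : lap (fun _ : ℝ^n => c) x = 0 := by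
  simp [lap]

lemma lap_add (hf : ContDiffAt ℝ 2 f x) (hg : ContDiffAt ℝ 2 g x) :
    lap (fun y => f y + g y) x = lap f x + lap g x := by
  rw [lap_eq_laplacian (hf.add hg), lap_eq_laplacian hf, lap_eq_laplacian hg]
  exact hf.laplacian_add hg

lemma lap_sub (hf : ContDiffAt ℝ 2 f x) (hg : ContDiffAt ℝ 2 g x) :
    lap (fun y => f y - g y) x = lap f x - lap g x := by
  rw [lap_eq_laplacian (hf.sub hg), lap_eq_laplacian hf, lap_eq_laplacian hg]
  exact hf.laplacian_sub hg

lemma lap_const_add (c : ℝ) (hf : ContDiffAt ℝ 2 f x) :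
    lap (fun y => c + f y) x = lap f x := by
  rw [lap_add contDiffAt_const hf, lap_const, zero_add]

lemma lap_const_mul (c : ℝ) (hf : ContDiffAt ℝ 2 f x) :
    lap (fun y => c * f y) x = c * lap f x := by
  rw [lap_eq_laplacian (contDiffAt_const.mul hf), lap_eq_laplacian hf]
  exact InnerProductSpace.laplacian_smul c hf

lemma continuousAt_lap (hf : ContDiffAt ℝ 2 f x) : ContinuousAt (lap f) x :=
  tendsto_finsetSum _ fun _ _ => continuousAt_fderiv_fderiv_apply hf _

lemma support_lap_subset : Function.support (lap f) ⊆ tsupport f := by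
  refine Function.support_subset_iff'.2 fun y hy => ?_
  rw [lap_congr (notMem_tsupport_iff_eventuallyEq.1 hy)]
  exact lap_const 0

lemma lap_comp_sub_left (hf : ContDiff ℝ 2 f) (x y : ℝ^n) :
    lap (fun z => f (x - z)) y = lap f (x - y) := by
  refine Finset.sum_congr rfl fun i _ => ?_
  have hfirst : (fun z => fderiv ℝ (fun z => f (x - z)) z (EuclideanSpace.single i 1)) =
      fun z => -fderiv ℝ f (x - z) (EuclideanSpace.single i 1) :=
    funext fun z => fderiv_comp_sub_left_apply (hf.differentiable two_ne_zero _) _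
  have hdiff : DifferentiableAt ℝ (fun z => fderiv ℝ f z (EuclideanSpace.single i 1)) (x - y) :=
    (contDiffAt_fderiv_apply hf.contDiffAt _).differentiableAt one_ne_zero
  rw [hfirst, fderiv_fun_neg, neg_apply, fderiv_comp_sub_left_apply hdiff, neg_neg]

lemma lap_nonpos_of_isLocalMax (hf : ContDiffAt ℝ 2 f x) (hmax : IsLocalMax f x) : lap f x ≤ 0 :=
  Finset.sum_nonpos fun _ _ => fderiv_fderiv_apply_nonpos_of_isLocalMax hf hmax _

lemma contDiff_norm_sub_sq (x₀ : ℝ^n) : ContDiff ℝ 2 fun y : ℝ^n => ‖y - x₀‖ ^ 2 :=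
  (contDiff_id.sub contDiff_const).norm_sq ℝ

lemma lap_comp_norm_sub_sq {φ φ' : ℝ → ℝ} {φ'' : ℝ} {x₀ : ℝ^n}
    (hφ : ∀ᶠ q in 𝓝 (‖x - x₀‖ ^ 2), HasDerivAt φ (φ' q) q)
    (hφ' : HasDerivAt φ' φ'' (‖x - x₀‖ ^ 2)) :
    lap (fun y => φ (‖y - x₀‖ ^ 2)) x =
      4 * ‖x - x₀‖ ^ 2 * φ'' + 2 * n * φ' (‖x - x₀‖ ^ 2) := by
  have hsq : ∀ y : ℝ^n, HasFDerivAt (fun y : ℝ^n => ‖y - x₀‖ ^ 2) (2 • innerSL ℝ (y - x₀)) y :=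
    fun y => by simpa using ((hasFDerivAt_id y).sub_const x₀).norm_sq
  have hterm : ∀ i : Fin n, fderiv ℝ (fun y => fderiv ℝ (fun y => φ (‖y - x₀‖ ^ 2)) y
      (EuclideanSpace.single i 1)) x (EuclideanSpace.single i 1) =
      4 * (x i - x₀ i) ^ 2 * φ'' + 2 * φ' (‖x - x₀‖ ^ 2) := by
    intro i
    have hfirst : (fun y => fderiv ℝ (fun y => φ (‖y - x₀‖ ^ 2)) y (EuclideanSpace.single i 1))
        =ᶠ[𝓝 x] fun y => φ' (‖y - x₀‖ ^ 2) * (2 * (y i - x₀ i)) := by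
      filter_upwards [(hsq x).continuousAt.tendsto.eventually hφ] with y hy
      have hcomp : HasFDerivAt (fun y : ℝ^n => φ (‖y - x₀‖ ^ 2)) _ y :=
        hy.comp_hasFDerivAt y (hsq y)
      simp [hcomp.fderiv, EuclideanSpace.inner_single_right]
    have hcoord : HasFDerivAt (fun y : ℝ^n => 2 * (y i - x₀ i))
        ((2 : ℝ) • (EuclideanSpace.proj i : ℝ^n →L[ℝ] ℝ)) x :=
      ((EuclideanSpace.proj i : ℝ^n →L[ℝ] ℝ).hasFDerivAt.sub_const (x₀ i)).const_mul (2 : ℝ)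
    have hsecond : HasFDerivAt (fun y : ℝ^n => φ' (‖y - x₀‖ ^ 2) * (2 * (y i - x₀ i))) _ x :=
      (hφ'.comp_hasFDerivAt x (hsq x)).mul hcoord
    rw [hfirst.fderiv_eq, hsecond.fderiv]
    simp only [Function.comp_apply, map_sub, add_apply, smul_apply, PiLp.proj_apply,
      PiLp.single_eq_same, smul_eq_mul, mul_one, sub_apply, coe_innerSL_apply,
      EuclideanSpace.inner_single_right, Real.ringHom_apply, one_mul, nsmul_eq_mul,
      Nat.cast_ofNat]
    ring
  rw [lap, Finset.sum_congr rfl fun i _ => hterm i, Finset.sum_add_distrib, ← Finset.sum_mul,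
    ← Finset.mul_sum, EuclideanSpace.norm_sq_eq]
  simp only [PiLp.sub_apply, Real.norm_eq_abs, sq_abs, Finset.sum_const, Finset.card_univ,
    Fintype.card_fin, nsmul_eq_mul]
  ring

end Lap

section RealLine

lemma image_le_left_of_forall_gap_le {f : ℝ → ℝ} {E : Set ℝ} {a b : ℝ} (hab : a ≤ b)
    (hf : ContinuousOn f (Icc a b)) (hE : IsClosed E) (ha : a ∈ E)
    (hpoint : ∀ σ ∈ E ∩ Ico a b, ∀ᶠ τ in 𝓝[>] σ, f τ ≤ f σ)
    (hgap : ∀ σ ∈ E ∩ Ico a b, ∀ τ ∈ Ioc σ b, Disjoint (Ioo σ τ) E → f τ ≤ f σ) :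
    f b ≤ f a := by
  have hEb : IsClosed (E ∪ {b}) := hE.union isClosed_singleton
  have hclosed : IsClosed ({τ | f τ ≤ f a ∧ τ ∈ E ∪ {b}} ∩ Icc a b) := by
    have hset : {τ | f τ ≤ f a ∧ τ ∈ E ∪ {b}} ∩ Icc a b =
        Icc a b ∩ f ⁻¹' Iic (f a) ∩ (E ∪ {b}) := by
      ext τ
      exact ⟨fun h => ⟨⟨h.2, h.1.1⟩, h.1.2⟩, fun h => ⟨⟨h.1.2, h.2⟩, h.1.1⟩⟩
    rw [hset]
    exact (hf.preimage_isClosed_of_isClosed isClosed_Icc isClosed_Iic).inter hEb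
  refine (hclosed.mem_of_ge_of_forall_exists_gt ⟨le_rfl, .inl ha⟩ hab ?_).1
  rintro σ ⟨⟨hσa, hσE⟩, hσ⟩
  replace hσE : σ ∈ E := hσE.resolve_right hσ.2.ne
  by_cases hacc : ∃ᶠ τ in 𝓝[>] σ, τ ∈ E
  · obtain ⟨τ, hτE, hτσ, hτ⟩ :=
      (hacc.and_eventually ((hpoint σ ⟨hσE, hσ⟩).and (Ioo_mem_nhdsGT hσ.2))).exists
    exact ⟨τ, ⟨hτσ.trans hσa, .inl hτE⟩, hτ.1, hτ.2.le⟩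
  · obtain ⟨m, hm, hmE⟩ := (mem_nhdsGT_iff_exists_Ioo_subset' hσ.2).1 (not_frequently.1 hacc)
    obtain ⟨τ, ⟨hτ, hτE⟩, hτmin⟩ := (isCompact_Icc.inter_right hEb : IsCompact
      (Icc (min m b) b ∩ (E ∪ {b}))).exists_isLeast ⟨b, ⟨min_le_right _ _, le_rfl⟩, .inr rfl⟩
    have hστ : σ < τ := (lt_min hm hσ.2).trans_le hτ.1
    refine ⟨τ, ⟨(hgap σ ⟨hσE, hσ⟩ τ ⟨hστ, hτ.2⟩ ?_).trans hσa, hτE⟩, hστ, hτ.2⟩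
    refine disjoint_left.2 fun s hs hsE => ?_
    rcases lt_or_ge s (min m b) with hsm | hsm
    · exact hmE ⟨hs.1, hsm.trans_le (min_le_left _ _)⟩ hsE
    · exact (hτmin ⟨⟨hsm, hs.2.le.trans hτ.2⟩, .inl hsE⟩).not_gt hs.2

lemma tendsto_slope_nhdsGT {f : ℝ → ℝ} {s : ℝ} (hf : DifferentiableAt ℝ f s) :
    Tendsto (slope f s) (𝓝[>] s) (𝓝 (deriv f s)) :=
  (hasDerivAt_iff_tendsto_slope.1 hf.hasDerivAt).mono_left
    (nhdsWithin_mono s fun _ (hz : s < _) => hz.ne')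

end RealLine

lemma exists_isOpen_inter_subset_of_subset_iUnion {X : Type*} [TopologicalSpace X] [T2Space X]
    [LocallyCompactSpace X] {E : Set X} (hE : IsGδ E) (hne : E.Nonempty) {S : ℕ → Set X}
    (hcover : E ⊆ ⋃ k, S k) (hclosed : ∀ k, closure (S k) ∩ E ⊆ S k) :
    ∃ k, ∃ U, IsOpen U ∧ (E ∩ U).Nonempty ∧ E ∩ U ⊆ S k := by
  have : BaireSpace E := hE.baireSpace_of_t2Space_locallyCompactSpace
  have : Nonempty E := hne.to_subtype
  obtain ⟨k, ⟨x, hxE⟩, hx⟩ := nonempty_interior_of_iUnion_of_closed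
    (f := fun k => ((↑) ⁻¹' closure (S k) : Set E))
    (fun k => isClosed_closure.preimage continuous_subtype_val)
    (eq_univ_of_forall fun x =>
      have ⟨k, hk⟩ := mem_iUnion.1 (hcover x.2)
      mem_iUnion.2 ⟨k, subset_closure hk⟩)
  obtain ⟨V, hV, ⟨U, hU, rfl⟩, hxU⟩ := mem_interior.1 hx
  exact ⟨k, U, hU, ⟨x, hxE, hxU⟩, fun y hy => hclosed k ⟨hV (show ⟨y, hy.1⟩ ∈ _ from hy.2), hy.1⟩⟩

section Integral

variable {X : Type*} [MeasurableSpace X] {μ : Measure X}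

/- Only an upper bound on the difference quotients is available, so dominated convergence is applied
to `max (slope) D`, which is also bounded below. -/
lemma eventually_integral_sub_le_of_slope_le {F : ℝ → X → ℝ} {D bound : X → ℝ} {s c : ℝ}
    (hFs : Integrable (F s) μ) (hF : ∀ᶠ z in 𝓝[>] s, Integrable (F z) μ) (hD : Integrable D μ)
    (hbound : Integrable bound μ)
    (hslope : ∀ᶠ z in 𝓝[>] s, ∀ᵐ x ∂μ, slope (fun τ => F τ x) s z ≤ bound x)
    (hlim : ∀ᵐ x ∂μ, ∃ l ≤ D x, Tendsto (slope (fun τ => F τ x) s) (𝓝[>] s) (𝓝 l))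
    (hc : ∫ x, D x ∂μ < c) :
    ∀ᶠ z in 𝓝[>] s, ∫ x, F z x ∂μ - ∫ x, F s x ∂μ ≤ c * (z - s) := by
  have hint : ∀ᶠ z in 𝓝[>] s, Integrable (fun x => slope (fun τ => F τ x) s z) μ := by
    filter_upwards [hF] with z hz
    simp only [slope_def_module]
    exact (hz.sub hFs).smul (z - s)⁻¹
  have htendsto : Tendsto (fun z => ∫ x, max (slope (fun τ => F τ x) s z) (D x) ∂μ) (𝓝[>] s)
      (𝓝 (∫ x, D x ∂μ)) := by
    refine tendsto_integral_filter_of_dominated_convergence (fun x => |bound x| + |D x|)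
      (hint.mono fun z hz => (hz.sup hD).aestronglyMeasurable) ?_ (hbound.abs.add hD.abs) ?_
    · filter_upwards [hslope] with z hz
      filter_upwards [hz] with x hx
      rw [Real.norm_eq_abs, abs_le]
      refine ⟨?_, max_le ?_ ?_⟩
      · linarith [le_max_right (slope (fun τ => F τ x) s z) (D x), neg_abs_le (D x),
          abs_nonneg (bound x)]
      · linarith [le_abs_self (bound x), abs_nonneg (D x)]
      · linarith [le_abs_self (D x), abs_nonneg (bound x)]
    · filter_upwards [hlim] with x ⟨l, hlD, hl⟩
      have hmax := hl.max (tendsto_const_nhds (x := D x))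
      rwa [max_eq_right hlD] at hmax
  filter_upwards [hF, hint, htendsto.eventually_lt_const hc, self_mem_nhdsWithin]
    with z hz hzint hlt hsz
  have hpos : 0 < z - s := sub_pos.2 hsz
  calc ∫ x, F z x ∂μ - ∫ x, F s x ∂μ = (z - s) * ∫ x, slope (fun τ => F τ x) s z ∂μ := by
        simp only [slope_def_field, integral_div, integral_sub hz hFs]
        field_simp
    _ ≤ (z - s) * ∫ x, max (slope (fun τ => F τ x) s z) (D x) ∂μ :=
        mul_le_mul_of_nonneg_left
          (integral_mono hzint (hzint.sup hD) fun x => le_max_left _ _) hpos.le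
    _ ≤ c * (z - s) := by rw [mul_comm c]; gcongr

end Integral

section MaximumPrinciple

variable {n : ℕ} {v w : ℝ → ℝ^n → ℝ} {t t₁ t₂ d : ℝ} {x y : ℝ^n}

/-- `v_t ≤ Δv` at the point `(t, x)`, where `v_t` is the upper left Dini derivative: this is the
notion of subsolution for mollifications, which need not be differentiable in time. -/
structure IsSubcaloricAt (v : ℝ → ℝ^n → ℝ) (t : ℝ) (x : ℝ^n) : Prop where
  contDiffAt : ContDiffAt ℝ 2 (v t) x
  eventually_sub_le : ∀ c, lap (v t) x < c → ∀ᶠ s in 𝓝[<] t, v t x - v s x ≤ c * (t - s)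

/-- `w_t > Δw` at the point `(t, x)`, classically: the notion of strict supersolution against which
subsolutions are compared. -/
structure IsStrictSupercaloricAt (w : ℝ → ℝ^n → ℝ) (t : ℝ) (x : ℝ^n) : Prop where
  contDiffAt : ContDiffAt ℝ 2 (w t) x
  exists_hasDerivAt : ∃ w', HasDerivAt (fun s => w s x) w' t ∧ lap (w t) x < w'

lemma IsSubcaloricAt.eventually_sub_lt_sub_of_isLocalMax (hv : IsSubcaloricAt v t x)
    (hw : IsStrictSupercaloricAt w t x) (hmax : IsLocalMax (fun z => v t z - w t z) x) :
    ∀ᶠ s in 𝓝[<] t, v t x - w t x < v s x - w s x := by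
  obtain ⟨w', hw', hlt⟩ := hw.exists_hasDerivAt
  have hlap := lap_nonpos_of_isLocalMax (hv.contDiffAt.sub hw.contDiffAt) hmax
  rw [lap_sub hv.contDiffAt hw.contDiffAt] at hlap
  obtain ⟨c, hlc, hcw⟩ := exists_between hlt
  have hslope : ∀ᶠ s in 𝓝[<] t, c < slope (fun s => w s x) t s :=
    ((hasDerivAt_iff_tendsto_slope.1 hw').mono_left
      (nhdsWithin_mono t fun _ => ne_of_lt)).eventually_const_lt hcw
  filter_upwards [hv.eventually_sub_le c (by linarith), hslope, self_mem_nhdsWithin]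
    with s hvs hws (hst : s < t)
  rw [slope_def_field, lt_div_iff_of_neg (sub_neg.2 hst)] at hws
  linarith

theorem le_of_isSubcaloricAt_of_isStrictSupercaloricAt
    (hv : ContinuousOn (fun q : ℝ × ℝ^n => v q.1 q.2) (Icc t₁ t₂ ×ˢ closedBall y d))
    (hw : ContinuousOn (fun q : ℝ × ℝ^n => w q.1 q.2) (Icc t₁ t₂ ×ˢ closedBall y d))
    (hsub : ∀ t ∈ Ioc t₁ t₂, ∀ x ∈ ball y d, IsSubcaloricAt v t x)
    (hsup : ∀ t ∈ Ioc t₁ t₂, ∀ x ∈ ball y d, IsStrictSupercaloricAt w t x)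
    (hinit : ∀ x ∈ closedBall y d, v t₁ x ≤ w t₁ x)
    (hlateral : ∀ t ∈ Icc t₁ t₂, ∀ x ∈ sphere y d, v t x ≤ w t x)
    (ht : t ∈ Icc t₁ t₂) (hx : x ∈ closedBall y d) : v t x ≤ w t x := by
  obtain ⟨⟨t', x'⟩, ⟨ht', hx'⟩, hmax⟩ := (isCompact_Icc.prod
    (isCompact_closedBall y d)).exists_isMaxOn ⟨(t, x), ht, hx⟩ (hv.sub hw)
  replace hmax : ∀ s ∈ Icc t₁ t₂, ∀ z ∈ closedBall y d, v s z - w s z ≤ v t' x' - w t' x' :=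
    fun s hs z hz => hmax (show (s, z) ∈ _ from ⟨hs, hz⟩)
  suffices v t' x' ≤ w t' x' by linarith [hmax t ht x hx]
  rcases ht'.1.eq_or_lt with (rfl : t₁ = t') | hlt
  · exact hinit x' hx'
  rcases (mem_closedBall.1 hx').eq_or_lt with hsphere | hball
  · exact hlateral t' ht' x' hsphere
  have hlocal : IsLocalMax (fun z => v t' z - w t' z) x' := by
    filter_upwards [isOpen_ball.mem_nhds hball] with z hz
    exact hmax t' ht' z (ball_subset_closedBall hz)
  have hmem : t' ∈ Ioc t₁ t₂ := ⟨hlt, ht'.2⟩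
  obtain ⟨s, hs, hst⟩ := (((hsub t' hmem x' hball).eventually_sub_lt_sub_of_isLocalMax
    (hsup t' hmem x' hball) hlocal).and (Ioo_mem_nhdsLT hlt)).exists
  exact absurd (hmax s ⟨hst.1.le, hst.2.le.trans ht'.2⟩ x' hx') hs.not_ge

end MaximumPrinciple

lemma integral_mul_le_integral_mul_of_le_on_support {X : Type*} [MeasurableSpace X]
    {μ : Measure X} {f g ψ : X → ℝ} (hf : Integrable (fun x => f x * ψ x) μ)
    (hg : Integrable (fun x => g x * ψ x) μ) (hψ : ∀ x, 0 ≤ ψ x)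
    (hfg : ∀ x ∈ Function.support ψ, f x ≤ g x) :
    ∫ x, f x * ψ x ∂μ ≤ ∫ x, g x * ψ x ∂μ := by
  refine integral_mono hf hg fun x => ?_
  by_cases hx : ψ x = 0
  · simp [hx]
  · exact mul_le_mul_of_nonneg_right (hfg x hx) (hψ x)

section IntegrationByParts

lemma integrable_mul_of_hasCompactSupport {X : Type*} [TopologicalSpace X] [MeasurableSpace X]
    [OpensMeasurableSpace X] {μ : Measure X} [IsFiniteMeasureOnCompacts μ] {f g : X → ℝ}
    (hf : ∀ x ∈ tsupport g, ContinuousAt f x) (hg : Continuous g) (hgc : HasCompactSupport g) :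
    Integrable (fun x => f x * g x) μ :=
  (continuous_of_tsupport fun x hx => (hf x (tsupport_mul_subset_right hx)).mul
    hg.continuousAt).integrable_of_hasCompactSupport hgc.mul_left

variable {E : Type*} [NormedAddCommGroup E] [NormedSpace ℝ E] [FiniteDimensional ℝ E]
  [MeasurableSpace E] [BorelSpace E] {μ : Measure E} [μ.IsAddHaarMeasure] {f g : E → ℝ}

lemma integral_mul_fderiv_apply_eq_neg (hf : ∀ x ∈ tsupport g, ContDiffAt ℝ 1 f x)
    (hg : ContDiff ℝ 1 g) (hgc : HasCompactSupport g) (e : E) :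
    ∫ x, f x * fderiv ℝ g x e ∂μ = -∫ x, fderiv ℝ f x e * g x ∂μ := by
  have hcont : ∀ x ∈ tsupport g, ContinuousAt f x := fun x hx => (hf x hx).continuousAt
  have hsub := tsupport_fderiv_apply_subset ℝ (f := g) e
  exact integral_mul_fderiv_eq_neg_fderiv_mul_of_integrable
    (integrable_mul_of_hasCompactSupport
      (fun x hx => ((hf x hx).fderiv_right (m := 0) le_rfl).clm_apply
        contDiffAt_const |>.continuousAt) hg.continuous hgc)
    (integrable_mul_of_hasCompactSupport (fun x hx => hcont x (hsub hx))
      ((hg.continuous_fderiv one_ne_zero).clm_apply continuous_const) (hgc.fderiv_apply ℝ e))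
    (integrable_mul_of_hasCompactSupport hcont hg.continuous hgc)
    (fun x hx => (hf x hx).differentiableAt one_ne_zero)
    (fun x _ => hg.differentiable one_ne_zero x)

end IntegrationByParts

section TestFunction

variable {n : ℕ} {f ψ : ℝ^n → ℝ} {B : Set (ℝ^n)} {x : ℝ^n} {k : ℝ}

lemma continuous_lap (hf : ContDiff ℝ 2 f) : Continuous (lap f) :=
  continuous_iff_continuousAt.2 fun _ => continuousAt_lap hf.contDiffAt

lemma hasCompactSupport_lap (hf : HasCompactSupport f) : HasCompactSupport (lap f) :=
  hf.mono' support_lap_subset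

lemma integral_mul_lap_eq (hf : ∀ x ∈ tsupport ψ, ContDiffAt ℝ 2 f x) (hψ : ContDiff ℝ 2 ψ)
    (hψc : HasCompactSupport ψ) : ∫ x, f x * lap ψ x = ∫ x, lap f x * ψ x := by
  have hψ'c : ∀ e, HasCompactSupport fun y => fderiv ℝ ψ y e := fun e => hψc.fderiv_apply ℝ e
  have hsub : ∀ e, tsupport (fun y => fderiv ℝ ψ y e) ⊆ tsupport ψ := fun e =>
    tsupport_fderiv_apply_subset ℝ e
  simp only [lap, Finset.mul_sum, Finset.sum_mul]
  rw [integral_finsetSum, integral_finsetSum]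
  · refine Finset.sum_congr rfl fun i _ => ?_
    rw [integral_mul_fderiv_apply_eq_neg (fun x hx => (hf x (hsub _ hx)).of_le one_le_two)
        (contDiff_fderiv_apply hψ _) (hψ'c _),
      integral_mul_fderiv_apply_eq_neg (fun x hx => contDiffAt_fderiv_apply (hf x hx) _)
        (hψ.of_le one_le_two) hψc, neg_neg]
  · exact fun i _ => integrable_mul_of_hasCompactSupport
      (fun x hx => continuousAt_fderiv_fderiv_apply (hf x hx) _) hψ.continuous hψc
  · exact fun i _ => integrable_mul_of_hasCompactSupport
      (fun x hx => (hf x (hsub _ (tsupport_fderiv_apply_subset ℝ _ hx))).continuousAt)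
      (continuous_iff_continuousAt.2 fun _ => continuousAt_fderiv_fderiv_apply hψ.contDiffAt _)
      ((hψ'c _).fderiv_apply ℝ _)

/-- Nonnegative `C²` test functions with compact support in `B`, for the weak formulation of
`u_t ≤ Δu`. -/
structure IsTestFunction (B : Set (ℝ^n)) (ψ : ℝ^n → ℝ) : Prop where
  contDiff : ContDiff ℝ 2 ψ
  hasCompactSupport : HasCompactSupport ψ
  tsupport_subset : tsupport ψ ⊆ B
  nonneg : ∀ x, 0 ≤ ψ x

namespace IsTestFunction

lemma integrable_mul (hψ : IsTestFunction B ψ) (hf : ∀ x ∈ B, ContinuousAt f x) :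
    Integrable fun x => f x * ψ x :=
  integrable_mul_of_hasCompactSupport (fun x hx => hf x (hψ.tsupport_subset hx))
    hψ.contDiff.continuous hψ.hasCompactSupport

lemma integral_mul_lap (hψ : IsTestFunction B ψ) (hf : ∀ x ∈ B, ContDiffAt ℝ 2 f x) :
    ∫ x, f x * lap ψ x = ∫ x, lap f x * ψ x :=
  integral_mul_lap_eq (fun x hx => hf x (hψ.tsupport_subset hx)) hψ.contDiff hψ.hasCompactSupport

lemma integral_mul_lap_le (hψ : IsTestFunction B ψ) (hf : ∀ x ∈ B, ContDiffAt ℝ 2 f x)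
    (hk : ∀ x ∈ B, lap f x ≤ k) : ∫ x, f x * lap ψ x ≤ k * ∫ x, ψ x := by
  rw [hψ.integral_mul_lap hf, ← integral_const_mul]
  exact integral_mul_le_integral_mul_of_le_on_support
    (hψ.integrable_mul fun x hx => continuousAt_lap (hf x hx))
    (hψ.integrable_mul fun _ _ => continuousAt_const) hψ.nonneg
    fun x hx => hk x (hψ.tsupport_subset (subset_tsupport _ hx))

end IsTestFunction

end TestFunction

section Mollify

variable {n : ℕ} {f : ℝ^n → ℝ} {B U : Set (ℝ^n)} {x : ℝ^n} {c k ε : ℝ}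

lemma exists_contDiffBump_closedBall_subset (hU : U ∈ 𝓝 x) (hε : 0 < ε) :
    ∃ φ : ContDiffBump (0 : ℝ^n), φ.rOut ≤ ε ∧ closedBall x φ.rOut ⊆ U := by
  obtain ⟨δ, hδ, hδU⟩ := nhds_basis_closedBall.mem_iff.1 hU
  have hpos : 0 < min ε δ := lt_min hε hδ
  exact ⟨⟨min ε δ / 2, min ε δ, half_pos hpos, half_lt_self hpos⟩, min_le_left _ _,
    (closedBall_subset_closedBall (min_le_right _ _)).trans hδU⟩

/-- The mollification of `f` by the bump function `φ`, rescaled to have integral one. -/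
noncomputable def mollify (φ : ContDiffBump (0 : ℝ^n)) (f : ℝ^n → ℝ) (x : ℝ^n) : ℝ :=
  ∫ y, f y * φ.normed volume (x - y)

variable (φ : ContDiffBump (0 : ℝ^n))

lemma integral_normed_sub_eq_one (x : ℝ^n) : ∫ y, φ.normed volume (x - y) = 1 := by
  rw [integral_sub_left_eq_self (φ.normed volume) volume x, φ.integral_normed]

lemma isTestFunction_normed_sub (h : closedBall x φ.rOut ⊆ B) :
    IsTestFunction B fun y => φ.normed volume (x - y) where
  contDiff := φ.contDiff_normed.comp (contDiff_const.sub contDiff_id)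
  hasCompactSupport := φ.hasCompactSupport_normed.comp_homeomorph (Homeomorph.subLeft x)
  tsupport_subset := by
    refine (closure_minimal (fun y hy => ?_) isClosed_closedBall).trans h
    have hmem : x - y ∈ closedBall (0 : ℝ^n) φ.rOut :=
      φ.tsupport_normed_eq (μ := volume) ▸ subset_tsupport _ hy
    rwa [mem_closedBall, dist_comm, dist_eq_norm, ← mem_closedBall_zero_iff]
  nonneg _ := φ.nonneg_normed _

lemma integrable_mul_normed_sub (hf : Integrable f) (x : ℝ^n) :
    Integrable fun y => f y * φ.normed volume (x - y) := by
  have hψ := isTestFunction_normed_sub φ (Subset.refl (closedBall x φ.rOut))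
  obtain ⟨G, hG⟩ := hψ.hasCompactSupport.exists_bound_of_continuous hψ.contDiff.continuous
  exact hf.mul_bdd hψ.contDiff.continuous.aestronglyMeasurable (.of_forall hG)

lemma mollify_le (hf : Integrable f) (hc : ∀ y ∈ closedBall x φ.rOut, f y ≤ c) :
    mollify φ f x ≤ c := by
  have hψ := isTestFunction_normed_sub φ (Subset.refl (closedBall x φ.rOut))
  calc mollify φ f x ≤ ∫ y, c * φ.normed volume (x - y) :=
        integral_mul_le_integral_mul_of_le_on_support (integrable_mul_normed_sub φ hf x)
          (hψ.integrable_mul fun _ _ => continuousAt_const) hψ.nonneg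
          fun y hy => hc y (hψ.tsupport_subset (subset_tsupport _ hy))
    _ = c := by rw [integral_const_mul, integral_normed_sub_eq_one, mul_one]

lemma le_mollify (hf : Integrable f) (hc : ∀ y ∈ closedBall x φ.rOut, c ≤ f y) :
    c ≤ mollify φ f x := by
  have h := mollify_le φ hf.neg fun y hy => neg_le_neg (hc y hy)
  simp only [mollify, Pi.neg_apply, neg_mul, integral_neg] at h
  exact neg_le_neg_iff.1 h

lemma le_of_forall_mollify_le (hε : 0 < ε) (hf : Integrable f) (hcont : ContinuousAt f x)
    (h : ∀ φ : ContDiffBump (0 : ℝ^n), φ.rOut ≤ ε → mollify φ f x ≤ c) : f x ≤ c := by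
  refine le_of_forall_lt fun m hm => ?_
  obtain ⟨m', hmm', hm'⟩ := exists_between hm
  obtain ⟨φ, hφε, hφ⟩ := exists_contDiffBump_closedBall_subset (hcont.eventually_const_lt hm') hε
  exact hmm'.trans_le ((le_mollify φ hf fun y hy => (hφ hy).le).trans (h φ hφε))

lemma mollify_sub {g : ℝ^n → ℝ} (hf : Integrable f) (hg : Integrable g) (x : ℝ^n) :
    mollify φ (f - g) x = mollify φ f x - mollify φ g x := by
  simp only [mollify, Pi.sub_apply, sub_mul]
  exact integral_sub (integrable_mul_normed_sub φ hf x) (integrable_mul_normed_sub φ hg x)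

lemma contDiff_mollify (hf : Integrable f) : ContDiff ℝ 2 (mollify φ f) :=
  φ.hasCompactSupport_normed.contDiff_convolution_right (n := 2) (ContinuousLinearMap.mul ℝ ℝ)
    hf.locallyIntegrable φ.contDiff_normed

lemma fderiv_integral_mul_sub_apply {g : ℝ^n → ℝ} (hf : Integrable f) (hg : ContDiff ℝ 1 g)
    (hgc : HasCompactSupport g) (x e : ℝ^n) :
    fderiv ℝ (fun x => ∫ y, f y * g (x - y)) x e = ∫ y, f y * fderiv ℝ g (x - y) e := by
  have hconv : HasFDerivAt (fun x => ∫ y, f y * g (x - y)) _ x :=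
    hgc.hasFDerivAt_convolution_right (ContinuousLinearMap.mul ℝ ℝ) hf.locallyIntegrable hg x
  rw [hconv.fderiv, convolution_precompR_apply (ContinuousLinearMap.mul ℝ ℝ) hf.locallyIntegrable
    (hgc.fderiv ℝ) (hg.continuous_fderiv one_ne_zero) x e]
  rfl

lemma lap_integral_mul_sub {g : ℝ^n → ℝ} (hf : Integrable f) (hg : ContDiff ℝ 2 g)
    (hgc : HasCompactSupport g) (x : ℝ^n) :
    lap (fun x => ∫ y, f y * g (x - y)) x = ∫ y, f y * lap g (x - y) := by
  simp only [lap, Finset.mul_sum]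
  rw [integral_finsetSum]
  · refine Finset.sum_congr rfl fun i _ => ?_
    simp only [fderiv_integral_mul_sub_apply hf (hg.of_le one_le_two) hgc]
    exact fderiv_integral_mul_sub_apply hf (contDiff_fderiv_apply hg _) (hgc.fderiv_apply ℝ _) x _
  · intro i _
    have hcont : Continuous fun y => fderiv ℝ (fun z => fderiv ℝ g z (EuclideanSpace.single i 1)) y
        (EuclideanSpace.single i 1) :=
      continuous_iff_continuousAt.2 fun _ => continuousAt_fderiv_fderiv_apply hg.contDiffAt _
    obtain ⟨G, hG⟩ := ((hgc.fderiv_apply ℝ (EuclideanSpace.single i 1)).fderiv_apply ℝ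
      (EuclideanSpace.single i 1)).exists_bound_of_continuous hcont
    exact hf.mul_bdd (hcont.comp (continuous_const.sub continuous_id)).aestronglyMeasurable
      (.of_forall fun y => hG _)

lemma lap_mollify (hf : Integrable f) (x : ℝ^n) :
    lap (mollify φ f) x = ∫ y, f y * lap (fun z => φ.normed volume (x - z)) y := by
  simp only [lap_comp_sub_left φ.contDiff_normed]
  exact lap_integral_mul_sub hf φ.contDiff_normed φ.hasCompactSupport_normed x

lemma lap_le_of_forall_isTestFunction (hB : B ∈ 𝓝 x) (hf : ∀ x ∈ B, ContDiffAt ℝ 2 f x)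
    (hk : ∀ ψ, IsTestFunction B ψ → ∫ x, f x * lap ψ x ≤ k * ∫ x, ψ x) : lap f x ≤ k := by
  by_contra! hlt
  obtain ⟨m, hkm, hm⟩ := exists_between hlt
  have hcont := continuousAt_lap (hf x (mem_of_mem_nhds hB))
  obtain ⟨φ, -, hφ⟩ := exists_contDiffBump_closedBall_subset
    (inter_mem (hcont.eventually_const_lt hm) hB) one_pos
  have hψ := isTestFunction_normed_sub φ (hφ.trans inter_subset_right)
  have hψ' := isTestFunction_normed_sub φ hφ
  have hle := hk _ hψ
  rw [hψ.integral_mul_lap hf, integral_normed_sub_eq_one, mul_one] at hle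
  have hge : ∫ y, m * φ.normed volume (x - y) ≤ ∫ y, lap f y * φ.normed volume (x - y) :=
    integral_mul_le_integral_mul_of_le_on_support
      (hψ.integrable_mul fun _ _ => continuousAt_const)
      (hψ.integrable_mul fun y hy => continuousAt_lap (hf y hy)) hψ.nonneg
      fun y hy => (hψ'.tsupport_subset (subset_tsupport _ hy)).1.le
  rw [integral_const_mul, integral_normed_sub_eq_one, mul_one] at hge
  exact (hkm.trans_le hge).not_ge hle

end Mollify

section Subsolution

variable {n : ℕ} {u F G : ℝ → ℝ^n → ℝ} {I J : Set ℝ} {U W : Set (ℝ^n)} {N t : ℝ} {g : ℝ^n → ℝ}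

/-- Classical solutions of `u_t ≤ Δu + F` on `I × U`. The regularity is that of the pointwise
inequality, separate in `t` and in `x`: `u` need not be jointly continuous. -/
structure IsHeatSubsolutionOn (u F : ℝ → ℝ^n → ℝ) (I : Set ℝ) (U : Set (ℝ^n)) : Prop where
  differentiableAt : ∀ t ∈ I, ∀ x ∈ U, DifferentiableAt ℝ (fun s => u s x) t
  contDiffAt : ∀ t ∈ I, ∀ x ∈ U, ContDiffAt ℝ 2 (u t) x
  deriv_le : ∀ t ∈ I, ∀ x ∈ U, deriv (fun s => u s x) t ≤ lap (u t) x + F t x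

namespace IsHeatSubsolutionOn

lemma mono_set (h : IsHeatSubsolutionOn u F I U) (hJ : J ⊆ I) (hW : W ⊆ U) :
    IsHeatSubsolutionOn u F J W where
  differentiableAt t ht x hx := h.differentiableAt t (hJ ht) x (hW hx)
  contDiffAt t ht x hx := h.contDiffAt t (hJ ht) x (hW hx)
  deriv_le t ht x hx := h.deriv_le t (hJ ht) x (hW hx)

lemma mono (h : IsHeatSubsolutionOn u F I U) (hFG : ∀ t ∈ I, ∀ x ∈ U, F t x ≤ G t x) :
    IsHeatSubsolutionOn u G I U where
  __ := h
  deriv_le t ht x hx := (h.deriv_le t ht x hx).trans (add_le_add_right (hFG t ht x hx) _)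

lemma const_add (h : IsHeatSubsolutionOn u F I U) (a : ℝ) :
    IsHeatSubsolutionOn (fun t x => a + u t x) F I U where
  differentiableAt t ht x hx := (h.differentiableAt t ht x hx).const_add a
  contDiffAt t ht x hx := contDiffAt_const.add (h.contDiffAt t ht x hx)
  deriv_le t ht x hx := by
    rw [deriv_const_add, lap_const_add a (h.contDiffAt t ht x hx)]
    exact h.deriv_le t ht x hx

lemma integratingFactor_mul {g c : ℝ → ℝ}
    (h : IsHeatSubsolutionOn u (fun t x => c t * u t x) I U) (hg : ∀ t ∈ I, 0 ≤ g t)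
    (hg' : ∀ t ∈ I, HasDerivAt g (-(c t * g t)) t) :
    IsHeatSubsolutionOn (fun t x => g t * u t x) 0 I U where
  differentiableAt t ht x hx := (hg' t ht).differentiableAt.mul (h.differentiableAt t ht x hx)
  contDiffAt t ht x hx := contDiffAt_const.mul (h.contDiffAt t ht x hx)
  deriv_le t ht x hx := by
    rw [((hg' t ht).fun_mul (h.differentiableAt t ht x hx).hasDerivAt).deriv,
      lap_const_mul _ (h.contDiffAt t ht x hx)]
    have hmul := mul_le_mul_of_nonneg_left (h.deriv_le t ht x hx) (hg t ht)
    simp only [Pi.zero_apply]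
    linarith

end IsHeatSubsolutionOn

/-- Solutions of `u_t ≤ Δu` on `I × U` bounded by `N`. They are set to zero outside `U`, so that
they can be integrated and mollified over the whole space. -/
structure IsBoundedHeatSubsolution (u : ℝ → ℝ^n → ℝ) (I : Set ℝ) (U : Set (ℝ^n)) (N : ℝ) : Prop
    extends IsHeatSubsolutionOn u 0 I U where
  isOpen_time : IsOpen I
  isOpen_space : IsOpen U
  volume_lt_top : volume U < ⊤
  abs_apply_le : ∀ t ∈ I, ∀ x, |u t x| ≤ N
  eq_zero : ∀ t, ∀ x ∉ U, u t x = 0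

lemma IsHeatSubsolutionOn.isBoundedHeatSubsolution_indicator (h : IsHeatSubsolutionOn u 0 I U)
    (hI : IsOpen I) (hU : IsOpen U) (hvol : volume U < ⊤) (hN : 0 ≤ N)
    (hu : ∀ t ∈ I, ∀ x ∈ U, |u t x| ≤ N) :
    IsBoundedHeatSubsolution (fun t => U.indicator (u t)) I U N :=
  have heq {t x} (hx : x ∈ U) : U.indicator (u t) =ᶠ[𝓝 x] u t :=
    eqOn_indicator.eventuallyEq_of_mem (hU.mem_nhds hx)
  { isOpen_time := hI
    isOpen_space := hU
    volume_lt_top := hvol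
    eq_zero := fun t x hx => indicator_of_notMem hx _
    abs_apply_le := fun t ht x => by
      by_cases hx : x ∈ U
      · simpa only [indicator_of_mem hx] using hu t ht x hx
      · simpa only [indicator_of_notMem hx, abs_zero] using hN
    differentiableAt := fun t ht x hx => by
      simpa only [indicator_of_mem hx] using h.differentiableAt t ht x hx
    contDiffAt := fun t ht x hx => (h.contDiffAt t ht x hx).congr_of_eventuallyEq (heq hx)
    deriv_le := fun t ht x hx => by
      simpa only [indicator_of_mem hx, lap_congr (heq hx)] using h.deriv_le t ht x hx }

namespace IsBoundedHeatSubsolution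

lemma deriv_le_lap (h : IsBoundedHeatSubsolution u I U N) {x : ℝ^n} (ht : t ∈ I) (hx : x ∈ U) :
    deriv (fun s => u s x) t ≤ lap (u t) x := by
  simpa only [Pi.zero_apply, add_zero] using h.deriv_le t ht x hx

lemma continuousAt_time (h : IsBoundedHeatSubsolution u I U N) (ht : t ∈ I) (x : ℝ^n) :
    ContinuousAt (fun s => u s x) t := by
  by_cases hx : x ∈ U
  · exact (h.differentiableAt t ht x hx).continuousAt
  · simpa only [h.eq_zero _ x hx] using continuousAt_const

lemma measurable (h : IsBoundedHeatSubsolution u I U N) (ht : t ∈ I) : Measurable (u t) := by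
  classical
  have hpiecewise : u t = U.piecewise (u t) fun _ => 0 := by
    ext x
    by_cases hx : x ∈ U
    · rw [piecewise_eq_of_mem _ _ _ hx]
    · rw [piecewise_eq_of_notMem _ _ _ hx, h.eq_zero t x hx]
  rw [hpiecewise]
  exact ContinuousOn.measurable_piecewise
    (fun x hx => (h.contDiffAt t ht x hx).continuousAt.continuousWithinAt) continuousOn_const
    h.isOpen_space.measurableSet

lemma integrable (h : IsBoundedHeatSubsolution u I U N) (ht : t ∈ I) : Integrable (u t) :=
  (integrableOn_iff_integrable_of_support_subset fun x hx => by_contra fun hxU =>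
    hx (h.eq_zero t x hxU)).1 (Measure.integrableOn_of_bounded h.volume_lt_top.ne
      (h.measurable ht).aestronglyMeasurable (.of_forall (h.abs_apply_le t ht)))

lemma continuousOn_integral_mul_sub (h : IsBoundedHeatSubsolution u I U N) (hg : Continuous g)
    (hgc : HasCompactSupport g) :
    ContinuousOn (fun q : ℝ × ℝ^n => ∫ y, u q.1 y * g (q.2 - y)) (I ×ˢ univ) := by
  obtain ⟨G, hG⟩ := hgc.exists_bound_of_continuous hg
  refine continuousOn_of_dominated (bound := U.indicator fun _ => N * G)
    (fun q hq => ?_) (fun q hq => .of_forall fun y => ?_)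
    ((integrableOn_const h.volume_lt_top.ne).integrable_indicator h.isOpen_space.measurableSet)
    (.of_forall fun y q hq => ContinuousAt.continuousWithinAt ?_)
  · exact ((h.measurable hq.1).mul
      (hg.measurable.comp (measurable_const.sub measurable_id))).aestronglyMeasurable
  · by_cases hy : y ∈ U
    · rw [indicator_of_mem hy, norm_mul]
      exact mul_le_mul (h.abs_apply_le _ hq.1 y) (hG _) (norm_nonneg _)
        ((abs_nonneg _).trans (h.abs_apply_le _ hq.1 y))
    · rw [indicator_of_notMem hy, h.eq_zero _ y hy, zero_mul, norm_zero]
  · exact ((h.continuousAt_time hq.1 y).comp continuousAt_fst).mul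
      (hg.comp (continuous_snd.sub continuous_const)).continuousAt

lemma continuousAt_integral_mul (h : IsBoundedHeatSubsolution u I U N) (hg : Continuous g)
    (hgc : HasCompactSupport g) (ht : t ∈ I) : ContinuousAt (fun s => ∫ y, u s y * g y) t := by
  have hjoint := (h.continuousOn_integral_mul_sub (hg.comp continuous_neg)
    (hgc.comp_homeomorph (Homeomorph.neg (ℝ^n)))).continuousAt (x := (t, 0))
    (prod_mem_nhds (h.isOpen_time.mem_nhds ht) univ_mem)
  simpa [Function.comp_def] using
    hjoint.comp (f := fun s => (s, (0 : ℝ^n))) (x := t) (by fun_prop)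

lemma abs_mollify_le (h : IsBoundedHeatSubsolution u I U N) (φ : ContDiffBump (0 : ℝ^n))
    (ht : t ∈ I) (x : ℝ^n) : |mollify φ (u t) x| ≤ N :=
  abs_le.2 ⟨le_mollify φ (h.integrable ht) fun y _ => (abs_le.1 (h.abs_apply_le t ht y)).1,
    mollify_le φ (h.integrable ht) fun y _ => (abs_le.1 (h.abs_apply_le t ht y)).2⟩

end IsBoundedHeatSubsolution

end Subsolution

section WeakInequality

variable {n : ℕ} {u w : ℝ → ℝ^n → ℝ} {I E : Set ℝ} {U B : Set (ℝ^n)} {N : ℝ} {ψ : ℝ^n → ℝ}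
  {x y : ℝ^n} {t s t₁ t₂ σ c d k : ℝ}

/-- The weak form in space of `u_t ≤ Δu` at time `t`: for all test functions `ψ` in `B`, the upper
right Dini derivative of `∫ uψ` is at most `∫ uΔψ`. -/
def IsWeaklySubcaloricAt (u : ℝ → ℝ^n → ℝ) (B : Set (ℝ^n)) (t : ℝ) : Prop :=
  ∀ ψ, IsTestFunction B ψ → ∀ c, ∫ x, u t x * lap ψ x < c →
    ∀ᶠ z in 𝓝[>] t, (∫ x, u z x * ψ x) - ∫ x, u t x * ψ x ≤ c * (z - t)

namespace IsBoundedHeatSubsolution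

lemma continuousAt_integral_mul_test (h : IsBoundedHeatSubsolution u I U N)
    (hψ : IsTestFunction B ψ) (ht : t ∈ I) : ContinuousAt (fun s => ∫ x, u s x * ψ x) t :=
  h.continuousAt_integral_mul hψ.contDiff.continuous hψ.hasCompactSupport ht

lemma continuousAt_integral_mul_lap (h : IsBoundedHeatSubsolution u I U N)
    (hψ : IsTestFunction B ψ) (ht : t ∈ I) : ContinuousAt (fun s => ∫ x, u s x * lap ψ x) t :=
  h.continuousAt_integral_mul (continuous_lap hψ.contDiff)
    (hasCompactSupport_lap hψ.hasCompactSupport) ht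

lemma integral_mul_sub_le (h : IsBoundedHeatSubsolution u I U N) (hst : s ≤ t)
    (hI : Icc s t ⊆ I) (hweak : ∀ τ ∈ Ico s t, IsWeaklySubcaloricAt u B τ)
    (hψ : IsTestFunction B ψ) (hc : ∀ τ ∈ Ico s t, ∫ x, u τ x * lap ψ x < c) :
    (∫ x, u t x * ψ x) - ∫ x, u s x * ψ x ≤ c * (t - s) := by
  have hle := image_le_of_liminf_slope_right_le_deriv_boundary
    (f := fun τ => ∫ x, u τ x * ψ x) (a := s) (b := t)
    (B := fun τ => (∫ x, u s x * ψ x) + c * (τ - s)) (B' := fun _ => c)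
    (fun τ hτ => (h.continuousAt_integral_mul_test hψ (hI hτ)).continuousWithinAt)
    (by simp only [sub_self, mul_zero, add_zero, le_refl]) (by fun_prop)
    (fun τ _ => by
      simpa using ((((hasDerivAt_id τ).sub_const s).const_mul c).const_add
        (∫ x, u s x * ψ x)).hasDerivWithinAt)
    (fun τ hτ r hr => by
      refine Eventually.frequently ?_
      filter_upwards [hweak τ hτ ψ hψ c (hc τ hτ), self_mem_nhdsWithin] with z hz (hτz : τ < z)
      rw [slope_def_field]
      exact ((div_le_iff₀ (sub_pos.2 hτz)).2 hz).trans_lt hr)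
  linarith [hle (right_mem_Icc.2 hst)]

lemma isSubcaloricAt_mollify (h : IsBoundedHeatSubsolution u I U N) (φ : ContDiffBump (0 : ℝ^n))
    (hst : s < t) (hI : Ioc s t ⊆ I) (hweak : ∀ τ ∈ Ioo s t, IsWeaklySubcaloricAt u B τ)
    (hx : closedBall x φ.rOut ⊆ B) : IsSubcaloricAt (fun s => mollify φ (u s)) t x where
  contDiffAt := (contDiff_mollify φ (h.integrable (hI ⟨hst, le_rfl⟩))).contDiffAt
  eventually_sub_le c hc := by
    have ht : t ∈ I := hI ⟨hst, le_rfl⟩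
    have hψ := isTestFunction_normed_sub φ hx
    rw [lap_mollify φ (h.integrable ht)] at hc
    obtain ⟨l, hl, hlc⟩ := (mem_nhdsLT_iff_exists_Ioo_subset' hst).1 (mem_nhdsWithin_of_mem_nhds
      ((h.continuousAt_integral_mul_lap hψ ht).eventually_lt_const hc))
    filter_upwards [Ioo_mem_nhdsLT (max_lt hst hl)] with r hr
    have hsr : s < r := (le_max_left s l).trans_lt hr.1
    exact h.integral_mul_sub_le hr.2.le (fun τ hτ => hI ⟨hsr.trans_le hτ.1, hτ.2⟩)
      (fun τ hτ => hweak τ ⟨hsr.trans_le hτ.1, hτ.2⟩) hψ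
      fun τ hτ => hlc ⟨((le_max_right s l).trans_lt hr.1).trans_le hτ.1, hτ.2⟩

theorem mollify_le_of_isStrictSupercaloricAt (h : IsBoundedHeatSubsolution u I U N)
    (φ : ContDiffBump (0 : ℝ^n)) (hI : Icc t₁ t₂ ⊆ I)
    (hweak : ∀ τ ∈ Ioo t₁ t₂, IsWeaklySubcaloricAt u B τ) (hB : ball y (d + φ.rOut) ⊆ B)
    (hw : ContinuousOn (fun q : ℝ × ℝ^n => w q.1 q.2) (Icc t₁ t₂ ×ˢ closedBall y d))
    (hsup : ∀ t ∈ Ioc t₁ t₂, ∀ x ∈ ball y d, IsStrictSupercaloricAt w t x)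
    (hinit : ∀ x ∈ closedBall y d, mollify φ (u t₁) x ≤ w t₁ x)
    (hlateral : ∀ t ∈ Icc t₁ t₂, ∀ x ∈ sphere y d, mollify φ (u t) x ≤ w t x)
    (ht : t ∈ Icc t₁ t₂) (hx : x ∈ closedBall y d) : mollify φ (u t) x ≤ w t x :=
  le_of_isSubcaloricAt_of_isStrictSupercaloricAt (v := fun t => mollify φ (u t))
    ((h.continuousOn_integral_mul_sub (φ.contDiff_normed (n := 2)).continuous
      φ.hasCompactSupport_normed).mono fun _ hq => ⟨hI hq.1, mem_univ _⟩) hw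
    (fun s hs z hz => h.isSubcaloricAt_mollify φ hs.1
      (fun τ hτ => hI ⟨hτ.1.le, hτ.2.trans hs.2⟩)
      (fun τ hτ => hweak τ ⟨hτ.1, hτ.2.trans_le hs.2⟩)
      ((closedBall_subset_ball' (by linarith [mem_ball.1 hz])).trans hB))
    hsup hinit hlateral ht hx

end IsBoundedHeatSubsolution

lemma lap_norm_sub_sq (y x : ℝ^n) : lap (fun z => ‖z - y‖ ^ 2) x = 2 * n := by
  have hlap := lap_comp_norm_sub_sq (x₀ := y) (x := x) (φ := id) (φ' := fun _ => 1) (φ'' := 0)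
    (.of_forall fun q => hasDerivAt_id q) (hasDerivAt_const _ _)
  simpa only [id_eq, mul_zero, zero_add, mul_one] using hlap

lemma isStrictSupercaloricAt_add_paraboloid {f : ℝ^n → ℝ} (hf : ContDiffAt ℝ 2 f x)
    (hk : lap f x ≤ k) (y : ℝ^n) (σ a t : ℝ) :
    IsStrictSupercaloricAt
      (fun s z => f z + ((k + 1) * (s - σ) + a * (‖z - y‖ ^ 2 + 2 * n * (s - σ)))) t x where
  contDiffAt := hf.add (contDiffAt_const.add (contDiffAt_const.mul
    ((contDiff_norm_sub_sq y).contDiffAt.add contDiffAt_const)))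
  exists_hasDerivAt := by
    have hq := (contDiff_norm_sub_sq y).contDiffAt (x := x)
    have hs : HasDerivAt (fun s => s - σ) 1 t := (hasDerivAt_id t).sub_const σ
    refine ⟨_, ((hs.const_mul (k + 1)).add (((hs.const_mul (2 * n : ℝ)).const_add
      (‖x - y‖ ^ 2)).const_mul a)).const_add (f x), ?_⟩
    rw [lap_add hf (contDiffAt_const.add (contDiffAt_const.mul (hq.add contDiffAt_const))),
      lap_const_add _ (contDiffAt_const.mul (hq.add contDiffAt_const)),
      lap_const_mul _ (hq.add contDiffAt_const), lap_add hq contDiffAt_const, lap_norm_sub_sq,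
      lap_const]
    linarith

namespace IsBoundedHeatSubsolution

lemma mollify_sub_mollify_le (h : IsBoundedHeatSubsolution u I U N) (φ : ContDiffBump (0 : ℝ^n))
    (hk : 0 ≤ k) (htest : ∀ ψ, IsTestFunction B ψ → ∫ x, u σ x * lap ψ x ≤ k * ∫ x, ψ x)
    (hσt : σ ≤ t) (hI : Icc σ t ⊆ I) (hweak : ∀ τ ∈ Ioo σ t, IsWeaklySubcaloricAt u B τ)
    (hd : 0 < d) (hφ : φ.rOut ≤ d) (hy : ball y (2 * d) ⊆ B) :
    mollify φ (u t) y - mollify φ (u σ) y ≤ (k + 1 + 4 * n * N / d ^ 2) * (t - σ) := by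
  have hσ : σ ∈ I := hI ⟨le_rfl, hσt⟩
  have hN : 0 ≤ N := (abs_nonneg _).trans (h.abs_apply_le σ hσ y)
  have hyφ : ball y (d + φ.rOut) ⊆ B := (ball_subset_ball (by linarith)).trans hy
  have hsmooth := contDiff_mollify φ (h.integrable hσ)
  have hlap : ∀ x ∈ ball y d, lap (mollify φ (u σ)) x ≤ k := fun x hx => by
    rw [lap_mollify φ (h.integrable hσ)]
    simpa only [integral_normed_sub_eq_one, mul_one] using htest _ (isTestFunction_normed_sub φ
      ((closedBall_subset_ball' (by linarith [mem_ball.1 hx])).trans hyφ))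
  have hle := h.mollify_le_of_isStrictSupercaloricAt φ
    (w := fun s x => mollify φ (u σ) x +
      ((k + 1) * (s - σ) + 2 * N / d ^ 2 * (‖x - y‖ ^ 2 + 2 * n * (s - σ))))
    hI hweak hyφ
    (((hsmooth.continuous.comp continuous_snd).add (by fun_prop)).continuousOn)
    (fun s _ x hx => isStrictSupercaloricAt_add_paraboloid hsmooth.contDiffAt (hlap x hx) _ _ _ _)
    (fun x _ => by
      rw [sub_self, mul_zero, mul_zero, add_zero, zero_add]
      exact le_add_of_nonneg_right (by positivity))
    (fun s hs x hx => by
      have hσs : 0 ≤ s - σ := sub_nonneg.2 hs.1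
      have hcancel : 2 * N / d ^ 2 * d ^ 2 = 2 * N := by field_simp
      have hpos : 0 ≤ (k + 1) * (s - σ) + 2 * N / d ^ 2 * (2 * n * (s - σ)) := by positivity
      rw [mem_sphere_iff_norm.1 hx, mul_add (2 * N / d ^ 2), hcancel]
      linarith [(abs_le.1 (h.abs_mollify_le φ (hI hs) x)).2,
        (abs_le.1 (h.abs_mollify_le φ hσ x)).1])
    ⟨hσt, le_rfl⟩ (mem_closedBall_self hd.le)
  have hcoeff : 2 * N / d ^ 2 * (2 * n * (t - σ)) = 4 * n * N / d ^ 2 * (t - σ) := by ring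
  simp only [sub_self, norm_zero, ne_eq, OfNat.ofNat_ne_zero, not_false_eq_true, zero_pow,
    zero_add, hcoeff] at hle
  linarith

lemma sub_le_of_isWeaklySubcaloricAt (h : IsBoundedHeatSubsolution u I U N) (hBU : B ⊆ U)
    (hk : 0 ≤ k) (htest : ∀ ψ, IsTestFunction B ψ → ∫ x, u σ x * lap ψ x ≤ k * ∫ x, ψ x)
    (hσt : σ ≤ t) (hI : Icc σ t ⊆ I) (hweak : ∀ τ ∈ Ioo σ t, IsWeaklySubcaloricAt u B τ)
    (hd : 0 < d) (hy : ball y (2 * d) ⊆ B) :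
    u t y - u σ y ≤ (k + 1 + 4 * n * N / d ^ 2) * (t - σ) := by
  have hσ : σ ∈ I := hI ⟨le_rfl, hσt⟩
  have ht : t ∈ I := hI ⟨hσt, le_rfl⟩
  have hyU : y ∈ U := hBU (hy (mem_ball_self (by positivity)))
  refine le_of_forall_mollify_le hd ((h.integrable ht).sub (h.integrable hσ))
    ((h.contDiffAt t ht y hyU).continuousAt.sub (h.contDiffAt σ hσ y hyU).continuousAt)
    fun φ hφ => ?_
  rw [mollify_sub φ (h.integrable ht) (h.integrable hσ)]
  exact h.mollify_sub_mollify_le φ hk htest hσt hI hweak hd hφ hy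

/- Across a gap of `E` the weak inequality gives the bound, by comparison with a paraboloid. At a
point of `E` the test function bound is `lap (u σ) ≤ k`, so `u_t ≤ k` there. -/
lemma sub_le_of_isClosed (h : IsBoundedHeatSubsolution u I U N) (hB : IsOpen B) (hBU : B ⊆ U)
    (hE : IsClosed E) (hweak : ∀ τ ∈ Ioo s t, τ ∉ E → IsWeaklySubcaloricAt u B τ) (hk : 0 ≤ k)
    (htest : ∀ σ ∈ E ∩ Icc s t, ∀ ψ, IsTestFunction B ψ → ∫ x, u σ x * lap ψ x ≤ k * ∫ x, ψ x)
    (hst : s ≤ t) (hI : Icc s t ⊆ I) (hs : s ∈ E) (hd : 0 < d) (hy : ball y (2 * d) ⊆ B) :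
    u t y - u s y ≤ (k + 1 + 4 * n * N / d ^ 2) * (t - s) := by
  set C := k + 1 + 4 * n * N / d ^ 2 with hC
  have hN : 0 ≤ N := (abs_nonneg _).trans (h.abs_apply_le s (hI ⟨le_rfl, hst⟩) y)
  have hkC : k < C := by
    have hquot : 0 ≤ 4 * n * N / d ^ 2 := by positivity
    linarith
  have hyB : y ∈ B := hy (mem_ball_self (by positivity))
  suffices u t y - C * t ≤ u s y - C * s by linarith
  refine image_le_left_of_forall_gap_le (f := fun τ => u τ y - C * τ) hst
    (fun τ hτ => ((h.continuousAt_time (hI hτ) y).sub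
      (by fun_prop : Continuous fun τ => C * τ).continuousAt).continuousWithinAt)
    hE hs (fun σ hσ => ?_) fun σ hσ τ hτ hdisj => ?_
  · have hσI : σ ∈ I := hI (Ico_subset_Icc_self hσ.2)
    have hderiv : deriv (fun s => u s y) σ ≤ k := (h.deriv_le_lap hσI (hBU hyB)).trans
      (lap_le_of_forall_isTestFunction (hB.mem_nhds hyB)
        (fun x hx => h.contDiffAt σ hσI x (hBU hx)) (htest σ ⟨hσ.1, Ico_subset_Icc_self hσ.2⟩))
    have hslope := tendsto_slope_nhdsGT (h.differentiableAt σ hσI y (hBU hyB))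
    filter_upwards [hslope.eventually_lt_const (hderiv.trans_lt hkC), self_mem_nhdsWithin]
      with τ hτ (hστ : σ < τ)
    rw [slope_def_field, div_lt_iff₀ (sub_pos.2 hστ)] at hτ
    linarith
  · have hsub : Icc σ τ ⊆ Icc s t := Icc_subset_Icc hσ.2.1 hτ.2
    have hgap := h.sub_le_of_isWeaklySubcaloricAt hBU hk
      (htest σ ⟨hσ.1, Ico_subset_Icc_self hσ.2⟩) hτ.1.le (hsub.trans hI)
      (fun r hr => hweak r (Ioo_subset_Ioo hσ.2.1 hτ.2 hr) (disjoint_left.1 hdisj hr)) hd hy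
    rw [← hC] at hgap
    linarith

lemma isWeaklySubcaloricAt_of_sub_le (h : IsBoundedHeatSubsolution u I U N) (hBU : B ⊆ U)
    (hs : s ∈ I) (hle : ∀ K ⊆ B, IsCompact K →
      ∃ C, ∀ᶠ z in 𝓝[>] s, ∀ y ∈ K, u z y - u s y ≤ C * (z - s)) :
    IsWeaklySubcaloricAt u B s := by
  intro ψ hψ c hc
  have hsmooth : ∀ x ∈ B, ContDiffAt ℝ 2 (u s) x := fun x hx => h.contDiffAt s hs x (hBU hx)
  have hint : ∀ z ∈ I, Integrable fun x => u z x * ψ x := fun z hz => by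
    obtain ⟨b, hb⟩ := hψ.hasCompactSupport.exists_bound_of_continuous hψ.contDiff.continuous
    exact (h.integrable hz).mul_bdd hψ.contDiff.continuous.aestronglyMeasurable (.of_forall hb)
  obtain ⟨C, hC⟩ := hle _ hψ.tsupport_subset hψ.hasCompactSupport
  have hslope : ∀ z x, slope (fun τ => u τ x * ψ x) s z = slope (fun τ => u τ x) s z * ψ x :=
    fun z x => by simp only [slope_def_field]; ring
  rw [hψ.integral_mul_lap hsmooth] at hc
  refine eventually_integral_sub_le_of_slope_le (hint s hs)
    (Filter.mem_of_superset (mem_nhdsWithin_of_mem_nhds (h.isOpen_time.mem_nhds hs)) hint)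
    (hψ.integrable_mul fun x hx => continuousAt_lap (hsmooth x hx))
    (bound := fun x => C * ψ x) (hψ.integrable_mul fun _ _ => continuousAt_const) ?_ ?_ hc
  · filter_upwards [hC, self_mem_nhdsWithin] with z hz (hsz : s < z)
    refine .of_forall fun x => ?_
    rw [hslope]
    by_cases hx : x ∈ tsupport ψ
    · refine mul_le_mul_of_nonneg_right ?_ (hψ.nonneg x)
      rw [slope_def_field]
      exact (div_le_iff₀ (sub_pos.2 hsz)).2 (hz x hx)
    · simp only [image_eq_zero_of_notMem_tsupport hx, mul_zero, le_refl]
  · refine .of_forall fun x => ?_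
    by_cases hx : x ∈ tsupport ψ
    · have hxU : x ∈ U := hBU (hψ.tsupport_subset hx)
      refine ⟨_, mul_le_mul_of_nonneg_right (h.deriv_le_lap hs hxU) (hψ.nonneg x), ?_⟩
      exact ((tendsto_slope_nhdsGT (h.differentiableAt s hs x hxU)).mul_const (ψ x)).congr
        fun z => (hslope z x).symm
    · refine ⟨0, by rw [image_eq_zero_of_notMem_tsupport hx, mul_zero], ?_⟩
      exact tendsto_const_nhds.congr fun z => by
        rw [hslope, image_eq_zero_of_notMem_tsupport hx, mul_zero]

lemma isWeaklySubcaloricAt_of_isClosed (h : IsBoundedHeatSubsolution u I U N) (hB : IsOpen B)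
    (hBU : B ⊆ U) (hE : IsClosed E) (hIoo : Ioo t₁ t₂ ⊆ I) (hk : 0 ≤ k)
    (hweak : ∀ τ ∈ Ioo t₁ t₂, τ ∉ E → IsWeaklySubcaloricAt u B τ)
    (htest : ∀ σ ∈ E ∩ Ioo t₁ t₂, ∀ ψ, IsTestFunction B ψ →
      ∫ x, u σ x * lap ψ x ≤ k * ∫ x, ψ x)
    (hs : s ∈ Ioo t₁ t₂) : IsWeaklySubcaloricAt u B s := by
  by_cases hsE : s ∉ E
  · exact hweak s hs hsE
  refine h.isWeaklySubcaloricAt_of_sub_le hBU (hIoo hs) fun K hK hKc => ?_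
  obtain ⟨δ, hδ, hδB⟩ := hKc.exists_cthickening_subset_open hB hK
  refine ⟨k + 1 + 4 * n * N / (δ / 2) ^ 2, ?_⟩
  filter_upwards [Ioo_mem_nhdsGT hs.2] with z hz y hy
  have hsub : Icc s z ⊆ Ioo t₁ t₂ := fun τ hτ => ⟨hs.1.trans_le hτ.1, hτ.2.trans_lt hz.2⟩
  refine h.sub_le_of_isClosed hB hBU hE (fun τ hτ => hweak τ (hsub (Ioo_subset_Icc_self hτ))) hk
    (fun σ hσ => htest σ ⟨hσ.1, hsub hσ.2⟩) hz.1.le (hsub.trans hIoo) (not_not.1 hsE)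
    (half_pos hδ) ?_
  rw [mul_div_cancel₀ δ two_ne_zero]
  exact ball_subset_closedBall.trans ((closedBall_subset_cthickening hy δ).trans hδB)

lemma exists_nat_forall_integral_mul_lap_le (h : IsBoundedHeatSubsolution u I U N)
    (hBc : IsCompact (closure B)) (hBU : closure B ⊆ U) (ht : t ∈ I) :
    ∃ k : ℕ, ∀ ψ, IsTestFunction B ψ → ∫ x, u t x * lap ψ x ≤ k * ∫ x, ψ x := by
  obtain ⟨L, hL⟩ := hBc.exists_bound_of_continuousOn (f := lap (u t))
    fun x hx => (continuousAt_lap (h.contDiffAt t ht x (hBU hx))).continuousWithinAt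
  obtain ⟨k, hk⟩ := exists_nat_ge L
  exact ⟨k, fun ψ hψ => hψ.integral_mul_lap_le
    (fun x hx => h.contDiffAt t ht x (hBU (subset_closure hx)))
    fun x hx => (le_abs_self _).trans ((hL x (subset_closure hx)).trans hk)⟩

/- The times near which the weak inequality holds form an open set. By Baire, its complement `E` in
`I` has a relatively open nonempty part on which a single `k` bounds the Laplacian, and there the
weak inequality holds after all. -/
theorem isWeaklySubcaloricAt (h : IsBoundedHeatSubsolution u I U N) (hB : IsOpen B)
    (hBc : IsCompact (closure B)) (hBU : closure B ⊆ U) (ht : t ∈ I) :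
    IsWeaklySubcaloricAt u B t := by
  set E := (interior {τ | IsWeaklySubcaloricAt u B τ})ᶜ
  have hEc : IsClosed E := isOpen_interior.isClosed_compl
  have hweak : ∀ τ ∉ E, IsWeaklySubcaloricAt u B τ := fun τ hτ => interior_subset (not_not.1 hτ)
  by_contra hnot
  obtain ⟨k, O, hO, ⟨σ, ⟨hσI, hσE⟩, hσO⟩, hk⟩ := exists_isOpen_inter_subset_of_subset_iUnion
    (E := I ∩ E) (h.isOpen_time.isGδ.inter hEc.isGδ)
    ⟨t, ht, fun hint => hnot (interior_subset hint)⟩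
    (S := fun k : ℕ => {t | t ∈ I ∧ ∀ ψ, IsTestFunction B ψ →
      ∫ x, u t x * lap ψ x ≤ k * ∫ x, ψ x})
    (fun s hs => mem_iUnion.2
      ((h.exists_nat_forall_integral_mul_lap_le hBc hBU hs.1).imp fun _ hk => ⟨hs.1, hk⟩))
    fun k s hs => ⟨hs.2.1, fun ψ hψ => by
      by_contra! hlt
      obtain ⟨τ, hτ, hτS⟩ := mem_closure_iff_nhds.1 hs.1 _
        ((h.continuousAt_integral_mul_lap hψ hs.2.1).eventually_const_lt hlt)
      exact (hτS.2 ψ hψ).not_gt hτ⟩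
  obtain ⟨α, β, hσαβ, hαβ⟩ := mem_nhds_iff_exists_Ioo_subset.1
    ((h.isOpen_time.inter hO).mem_nhds ⟨hσI, hσO⟩)
  have hall : Ioo α β ⊆ {τ | IsWeaklySubcaloricAt u B τ} := fun s hs =>
    h.isWeaklySubcaloricAt_of_isClosed hB (subset_closure.trans hBU) hEc
      (fun τ hτ => (hαβ hτ).1) (Nat.cast_nonneg k) (fun τ _ => hweak τ)
      (fun τ hτ => (hk ⟨⟨(hαβ hτ.2).1, hτ.1⟩, (hαβ hτ.2).2⟩).2) hs
  exact hσE (interior_maximal hall isOpen_Ioo hσαβ)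

theorem le_of_isStrictSupercaloricAt {m : ℝ → ℝ} {R : ℝ}
    (h : IsBoundedHeatSubsolution u I (ball y R) N) (hdR : d < R) (hI : Icc t₁ t₂ ⊆ I)
    (hu : ∀ t ∈ Icc t₁ t₂, ∀ x, u t x ≤ m t)
    (hw : ContinuousOn (fun q : ℝ × ℝ^n => w q.1 q.2) (Icc t₁ t₂ ×ˢ closedBall y d))
    (hsup : ∀ t ∈ Ioc t₁ t₂, ∀ x ∈ ball y d, IsStrictSupercaloricAt w t x)
    (hinit : ∀ x ∈ closedBall y d, m t₁ ≤ w t₁ x)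
    (hlateral : ∀ t ∈ Icc t₁ t₂, ∀ x ∈ sphere y d, m t ≤ w t x)
    (ht : t ∈ Icc t₁ t₂) (hx : x ∈ closedBall y d) : u t x ≤ w t x := by
  have hweak : ∀ τ ∈ Ioo t₁ t₂, IsWeaklySubcaloricAt u (ball y ((R + d) / 2)) τ := fun τ hτ =>
    h.isWeaklySubcaloricAt isOpen_ball
      ((isCompact_closedBall y _).of_isClosed_subset isClosed_closure
        closure_ball_subset_closedBall)
      (closure_ball_subset_closedBall.trans (closedBall_subset_ball (by linarith)))
      (hI (Ioo_subset_Icc_self hτ))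
  have ht₁ : t₁ ∈ Icc t₁ t₂ := ⟨le_rfl, ht.1.trans ht.2⟩
  exact le_of_forall_mollify_le (ε := (R - d) / 2) (by linarith) (h.integrable (hI ht))
    (h.contDiffAt t (hI ht) x (closedBall_subset_ball hdR hx)).continuousAt fun φ hφ =>
      h.mollify_le_of_isStrictSupercaloricAt φ hI hweak (ball_subset_ball (by linarith)) hw hsup
        (fun z hz => (mollify_le φ (h.integrable (hI ht₁)) fun ζ _ => hu t₁ ht₁ ζ).trans
          (hinit z hz))
        (fun s hs z hz => (mollify_le φ (h.integrable (hI hs)) fun ζ _ => hu s hs ζ).trans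
          (hlateral s hs z hz)) ht hx

end IsBoundedHeatSubsolution

end WeakInequality

section Barrier

variable {n : ℕ} {w : ℝ → ℝ^n → ℝ} {x₀ x : ℝ^n} {d t r A T β δ : ℝ}

lemma IsStrictSupercaloricAt.const_mul (hw : IsStrictSupercaloricAt w t x) (hA : 0 < A) :
    IsStrictSupercaloricAt (fun s z => A * w s z) t x where
  contDiffAt := contDiffAt_const.mul hw.contDiffAt
  exists_hasDerivAt := by
    obtain ⟨w', hw', hlt⟩ := hw.exists_hasDerivAt
    refine ⟨A * w', hw'.const_mul A, ?_⟩
    rw [lap_const_mul A hw.contDiffAt]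
    exact mul_lt_mul_of_pos_left hlt hA

/-- The barrier `(δ(d² - |x - x₀|²)² + T - t)^(-β)`. It is `(T - t)^(-β)` on the sphere of radius
`d`, yet bounded up to time `T` on smaller balls, and strictly supercaloric for small `δ`. -/
noncomputable def barrier (β δ d T : ℝ) (x₀ : ℝ^n) (t : ℝ) (x : ℝ^n) : ℝ :=
  (δ * (d ^ 2 - ‖x - x₀‖ ^ 2) ^ 2 + (T - t)) ^ (-β)

lemma barrierBase_pos (hδ : 0 < δ) (ht : t < T) (q : ℝ) : 0 < δ * (d ^ 2 - q) ^ 2 + (T - t) :=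
  add_pos_of_nonneg_of_pos (by positivity) (sub_pos.2 ht)

lemma barrier_of_mem_sphere (hx : x ∈ sphere x₀ d) : barrier β δ d T x₀ t x = (T - t) ^ (-β) := by
  rw [barrier, mem_sphere_iff_norm.1 hx, sub_self, zero_pow two_ne_zero, mul_zero, zero_add]

lemma le_barrier (hβ : 0 < β) (hδ : 0 < δ) (ht : t < T) (hx : x ∈ closedBall x₀ d) :
    (δ * (d ^ 2) ^ 2 + (T - t)) ^ (-β) ≤ barrier β δ d T x₀ t x := by
  have hxd : ‖x - x₀‖ ^ 2 ≤ d ^ 2 := by gcongr; exact mem_closedBall_iff_norm.1 hx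
  refine Real.rpow_le_rpow_of_nonpos (barrierBase_pos hδ ht _) ?_ (neg_nonpos.2 hβ.le)
  have hsub : d ^ 2 - ‖x - x₀‖ ^ 2 ≤ d ^ 2 := sub_le_self _ (sq_nonneg _)
  gcongr

lemma barrier_le (hβ : 0 < β) (hδ : 0 < δ) (hrd : r < d) (ht : t < T)
    (hx : x ∈ closedBall x₀ r) : barrier β δ d T x₀ t x ≤ (δ * (d ^ 2 - r ^ 2) ^ 2) ^ (-β) := by
  have hnorm : ‖x - x₀‖ ≤ r := mem_closedBall_iff_norm.1 hx
  have hr : 0 ≤ r := (norm_nonneg _).trans hnorm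
  have hxr : ‖x - x₀‖ ^ 2 ≤ r ^ 2 := by gcongr
  have hdr : 0 < d ^ 2 - r ^ 2 := sub_pos.2 (by gcongr)
  refine Real.rpow_le_rpow_of_nonpos (by positivity) ?_ (neg_nonpos.2 hβ.le)
  calc δ * (d ^ 2 - r ^ 2) ^ 2 ≤ δ * (d ^ 2 - ‖x - x₀‖ ^ 2) ^ 2 := by gcongr
    _ ≤ _ := le_add_of_nonneg_right (sub_pos.2 ht).le

lemma continuousOn_barrier (hδ : 0 < δ) :
    ContinuousOn (fun q : ℝ × ℝ^n => barrier β δ d T x₀ q.1 q.2) (Iio T ×ˢ univ) :=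
  (Continuous.continuousOn (by fun_prop)).rpow_const fun _ hq =>
    Or.inl (barrierBase_pos hδ hq.1 _).ne'

lemma contDiffAt_barrier (hδ : 0 < δ) (ht : t < T) : ContDiffAt ℝ 2 (barrier β δ d T x₀ t) x :=
  ((contDiffAt_const.mul ((contDiffAt_const.sub (contDiff_norm_sub_sq x₀).contDiffAt).pow 2)).add
    contDiffAt_const).rpow_const_of_ne (barrierBase_pos hδ ht _).ne'

lemma hasDerivAt_barrier (hδ : 0 < δ) (ht : t < T) (x : ℝ^n) :
    HasDerivAt (fun s => barrier β δ d T x₀ s x)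
      (β * (δ * (d ^ 2 - ‖x - x₀‖ ^ 2) ^ 2 + (T - t)) ^ (-β - 1)) t := by
  have hbase := ((hasDerivAt_id t).const_sub T).const_add (δ * (d ^ 2 - ‖x - x₀‖ ^ 2) ^ 2)
  exact (hbase.rpow_const (p := -β) (Or.inl (barrierBase_pos hδ ht _).ne')).congr_deriv (by
    simp only [id_eq]; ring)

lemma hasDerivAt_barrierBase (s q : ℝ) :
    HasDerivAt (fun q => δ * (d ^ 2 - q) ^ 2 + s) (-(2 * δ * (d ^ 2 - q))) q :=
  (((((hasDerivAt_id q).const_sub (d ^ 2)).pow 2).const_mul δ).add_const s).congr_deriv (by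
    simp only [id_eq]; norm_num; ring)

lemma lap_barrier (hδ : 0 < δ) (ht : t < T) (x : ℝ^n) {q g : ℝ} (hq : ‖x - x₀‖ ^ 2 = q)
    (hg : δ * (d ^ 2 - q) ^ 2 + (T - t) = g) :
    lap (barrier β δ d T x₀ t) x = β * g ^ (-β - 1) *
      (4 * q * ((β + 1) * (4 * δ * (δ * (d ^ 2 - q) ^ 2 / g)) - 2 * δ) +
        2 * n * (2 * δ * (d ^ 2 - q))) := by
  have hpos : ∀ q, 0 < δ * (d ^ 2 - q) ^ 2 + (T - t) := barrierBase_pos hδ ht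
  have hslope : HasDerivAt (fun q => -(2 * δ * (d ^ 2 - q))) (2 * δ) q :=
    (((hasDerivAt_id q).const_sub (d ^ 2)).const_mul (2 * δ)).neg.congr_deriv (by ring)
  have hprofile : ∀ q e : ℝ, HasDerivAt (fun q => (δ * (d ^ 2 - q) ^ 2 + (T - t)) ^ e)
      (-(2 * δ * (d ^ 2 - q)) * e * (δ * (d ^ 2 - q) ^ 2 + (T - t)) ^ (e - 1)) q :=
    fun q e => (hasDerivAt_barrierBase (T - t) q).rpow_const (Or.inl (hpos q).ne')
  have hradial := lap_comp_norm_sub_sq (x₀ := x₀) (x := x) (.of_forall fun q => hprofile q (-β))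
    (hq ▸ (hslope.mul_const (-β)).mul (hprofile q (-β - 1)))
  have hg0 : g ≠ 0 := hg ▸ (hpos q).ne'
  simp only [hq, hg, Real.rpow_sub_one hg0 (-β - 1)] at hradial
  refine hradial.trans ?_
  field_simp
  ring

lemma isStrictSupercaloricAt_barrier (hβ : 0 < β) (hδ : 0 < δ)
    (hδd : δ * d ^ 2 * (16 * (β + 1) + 4 * n) < 1) (ht : t < T) (hx : x ∈ ball x₀ d) :
    IsStrictSupercaloricAt (barrier β δ d T x₀) t x where
  contDiffAt := contDiffAt_barrier hδ ht
  exists_hasDerivAt := by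
    refine ⟨_, hasDerivAt_barrier hδ ht x, ?_⟩
    rw [lap_barrier hδ ht x rfl rfl]
    set q := ‖x - x₀‖ ^ 2
    set g := δ * (d ^ 2 - q) ^ 2 + (T - t)
    have hq : 0 ≤ q := sq_nonneg _
    have hqd : q ≤ d ^ 2 := by
      simp only [q]
      gcongr
      exact (mem_ball_iff_norm.1 hx).le
    have hg0 : 0 < g := barrierBase_pos hδ ht q
    have hquot : δ * (d ^ 2 - q) ^ 2 / g ≤ 1 := (div_le_one hg0).2 (by linarith)
    refine mul_lt_of_lt_one_right (by positivity) ?_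
    have hsecond : (β + 1) * (4 * δ * (δ * (d ^ 2 - q) ^ 2 / g)) - 2 * δ ≤ (β + 1) * (4 * δ * 1) :=
      (sub_le_self _ (by positivity)).trans (by gcongr)
    calc 4 * q * ((β + 1) * (4 * δ * (δ * (d ^ 2 - q) ^ 2 / g)) - 2 * δ) +
          2 * n * (2 * δ * (d ^ 2 - q))
        ≤ 4 * q * ((β + 1) * (4 * δ * 1)) + 2 * n * (2 * δ * d ^ 2) := by
          refine add_le_add (mul_le_mul_of_nonneg_left hsecond (by positivity)) ?_
          gcongr
          exact sub_le_self _ hq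
      _ ≤ 4 * d ^ 2 * ((β + 1) * (4 * δ * 1)) + 2 * n * (2 * δ * d ^ 2) := by gcongr
      _ = δ * d ^ 2 * (16 * (β + 1) + 4 * n) := by ring
      _ < 1 := hδd

end Barrier

section BlowupRate

variable {n : ℕ} {u : ℝ → ℝ^n → ℝ} {x₀ x : ℝ^n} {a b d t r r' A G M T β δ κ θ : ℝ}

namespace IsHeatSubsolutionOn

lemma le_const_mul_barrier (h : IsHeatSubsolutionOn u 0 (Ioo a T) (ball x₀ r))
    (h0 : ∀ t ∈ Ioo a T, ∀ x ∈ ball x₀ r, 0 ≤ u t x) (hM : 0 < M) (hβ : 0 < β)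
    (hu : ∀ t ∈ Ioo a T, ∀ x ∈ ball x₀ r, u t x ≤ M * (T - t) ^ (-β))
    (hδ : 0 < δ) (hδd : δ * d ^ 2 * (16 * (β + 1) + 4 * n) < 1) (hdr : d < r) (hab : a < b)
    (hMA : M ≤ A) (hinit : M * (T - b) ^ (-β) ≤ A * (δ * (d ^ 2) ^ 2 + (T - b)) ^ (-β))
    (ht : t ∈ Ico b T) (hx : x ∈ closedBall x₀ d) : u t x ≤ A * barrier β δ d T x₀ t x := by
  obtain ⟨τ, htτ, hτT⟩ := exists_between ht.2
  have hA : 0 < A := hM.trans_le hMA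
  have hT : ∀ s ∈ Ioo a τ, s ∈ Ioo a T := fun s hs => ⟨hs.1, hs.2.trans hτT⟩
  have hbt : ∀ s ∈ Icc b t, s ∈ Ioo a τ := fun s hs => ⟨hab.trans_le hs.1, hs.2.trans_lt htτ⟩
  have hrate : ∀ s ∈ Ioo a T, 0 ≤ M * (T - s) ^ (-β) := fun s hs =>
    mul_nonneg hM.le (Real.rpow_nonneg (sub_pos.2 hs.2).le _)
  have hbdd := (h.mono_set hT Subset.rfl).isBoundedHeatSubsolution_indicator isOpen_Ioo isOpen_ball
    measure_ball_lt_top (mul_nonneg hM.le (Real.rpow_nonneg (sub_pos.2 hτT).le (-β)))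
    fun s hs z hz => by
      rw [abs_of_nonneg (h0 s (hT s hs) z hz)]
      refine (hu s (hT s hs) z hz).trans (mul_le_mul_of_nonneg_left ?_ hM.le)
      exact Real.rpow_le_rpow_of_nonpos (sub_pos.2 hτT) (by linarith [hs.2]) (neg_nonpos.2 hβ.le)
  have hle := hbdd.le_of_isStrictSupercaloricAt (w := fun s z => A * barrier β δ d T x₀ s z)
    (m := fun s => M * (T - s) ^ (-β)) hdr hbt
    (fun s hs z => indicator_apply_le' (hu s (hT s (hbt s hs)) z)
      fun _ => hrate s (hT s (hbt s hs)))
    (((continuousOn_barrier hδ).const_smul A).mono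
      fun q hq => ⟨hq.1.2.trans_lt ht.2, mem_univ _⟩)
    (fun s hs z hz =>
      (isStrictSupercaloricAt_barrier hβ hδ hδd (hs.2.trans_lt ht.2) hz).const_mul hA)
    (fun z hz => hinit.trans
      (mul_le_mul_of_nonneg_left (le_barrier hβ hδ (ht.1.trans_lt ht.2) hz) hA.le))
    (fun s hs z hz => by
      rw [barrier_of_mem_sphere hz]
      exact mul_le_mul_of_nonneg_right hMA
        (Real.rpow_nonneg (sub_pos.2 (hs.2.trans_lt ht.2)).le _))
    ⟨ht.1, le_rfl⟩ hx
  rwa [indicator_of_mem (closedBall_subset_ball hdr hx)] at hle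

theorem exists_forall_le_of_le_rpow (h : IsHeatSubsolutionOn u 0 (Ioo a T) (ball x₀ r))
    (h0 : ∀ t ∈ Ioo a T, ∀ x ∈ ball x₀ r, 0 ≤ u t x) (hM : 0 < M) (hβ : 0 < β)
    (hu : ∀ t ∈ Ioo a T, ∀ x ∈ ball x₀ r, u t x ≤ M * (T - t) ^ (-β))
    (hab : a < b) (hbT : b < T) (hr' : 0 < r') (hr : r' < r) :
    ∃ K > 0, ∀ t ∈ Ioo b T, ∀ x ∈ ball x₀ r', u t x ≤ K := by
  obtain ⟨d, hrd, hdr⟩ := exists_between hr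
  have hd : 0 < d := hr'.trans hrd
  have hTb : 0 < T - b := sub_pos.2 hbT
  obtain ⟨δ, hδ, hδd⟩ := exists_pos_mul_lt one_pos (d ^ 2 * (16 * (β + 1) + 4 * n))
  set Q := δ * (d ^ 2) ^ 2 + (T - b)
  have hQ0 : 0 < Q := by positivity
  have hratio : 1 ≤ Q / (T - b) := (one_le_div hTb).2 (le_add_of_nonneg_left (by positivity))
  have hMA : M ≤ M * (Q / (T - b)) ^ β :=
    le_mul_of_one_le_right hM.le (Real.one_le_rpow hratio hβ.le)
  have hinit : M * (T - b) ^ (-β) = M * (Q / (T - b)) ^ β * Q ^ (-β) := by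
    rw [Real.div_rpow hQ0.le hTb.le, Real.rpow_neg hTb.le, Real.rpow_neg hQ0.le]
    field_simp
  have hrd2 : 0 < d ^ 2 - r' ^ 2 := sub_pos.2 (by gcongr)
  refine ⟨M * (Q / (T - b)) ^ β * (δ * (d ^ 2 - r' ^ 2) ^ 2) ^ (-β), by positivity,
    fun t ht x hx => ?_⟩
  calc u t x ≤ M * (Q / (T - b)) ^ β * barrier β δ d T x₀ t x :=
        h.le_const_mul_barrier h0 hM hβ hu hδ (by rwa [mul_assoc, mul_comm]) hdr hab hMA hinit.le
          (Ioo_subset_Ico_self ht) (ball_subset_closedBall (ball_subset_ball hrd.le hx))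
    _ ≤ _ := mul_le_mul_of_nonneg_left (barrier_le hβ hδ hrd ht.2 (ball_subset_closedBall hx))
        (by positivity)

theorem exists_forall_integratingFactor_mul_le {g c : ℝ → ℝ}
    (h : IsHeatSubsolutionOn u (fun t x => c t * u t x) (Ioo a T) (ball x₀ r))
    (hg : ∀ t ∈ Ioo a T, 0 ≤ g t) (hgG : ∀ t ∈ Ioo a T, g t ≤ G) (hG : 0 < G)
    (hg' : ∀ t ∈ Ioo a T, HasDerivAt g (-(c t * g t)) t)
    (h0 : ∀ t ∈ Ioo a T, ∀ x ∈ ball x₀ r, 0 ≤ u t x) (hM : 0 < M) (hβ : 0 < β)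
    (hu : ∀ t ∈ Ioo a T, ∀ x ∈ ball x₀ r, u t x ≤ M * (T - t) ^ (-β))
    (hab : a < b) (hbT : b < T) (hr' : 0 < r') (hr : r' < r) :
    ∃ K > 0, ∀ t ∈ Ioo b T, ∀ x ∈ ball x₀ r', g t * u t x ≤ K :=
  (h.integratingFactor_mul hg hg').exists_forall_le_of_le_rpow
    (fun t ht x hx => mul_nonneg (hg t ht) (h0 t ht x hx)) (mul_pos hG hM) hβ
    (fun t ht x hx => by
      rw [mul_assoc]
      exact mul_le_mul (hgG t ht) (hu t ht x hx) (h0 t ht x hx) hG.le) hab hbT hr' hr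

lemma exists_forall_le_rpow_of_potential_inv
    (h : IsHeatSubsolutionOn u (fun t x => κ * (T - t)⁻¹ * u t x) (Ioo a T) (ball x₀ r))
    (hκ : 0 ≤ κ) (h0 : ∀ t ∈ Ioo a T, ∀ x ∈ ball x₀ r, 0 ≤ u t x) (hM : 0 < M) (hβ : 0 < β)
    (hu : ∀ t ∈ Ioo a T, ∀ x ∈ ball x₀ r, u t x ≤ M * (T - t) ^ (-β))
    (hab : a < b) (hbT : b < T) (hr' : 0 < r') (hr : r' < r) :
    ∃ K > 0, ∀ t ∈ Ioo b T, ∀ x ∈ ball x₀ r', u t x ≤ K * (T - t) ^ (-κ) := by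
  have hT : ∀ t ∈ Ioo a T, 0 < T - t := fun t ht => sub_pos.2 ht.2
  obtain ⟨K, hK, hle⟩ := h.exists_forall_integratingFactor_mul_le (g := fun t => (T - t) ^ κ)
    (G := (T - a) ^ κ) (fun t ht => Real.rpow_nonneg (hT t ht).le κ)
    (fun t ht => Real.rpow_le_rpow (hT t ht).le (by linarith [ht.1]) hκ)
    (Real.rpow_pos_of_pos (by linarith) κ)
    (fun t ht => by
      refine (((hasDerivAt_id t).const_sub T).rpow_const (p := κ)
        (Or.inl (hT t ht).ne')).congr_deriv ?_
      rw [id_eq, Real.rpow_sub_one (hT t ht).ne']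
      ring) h0 hM hβ hu hab hbT hr' hr
  refine ⟨K, hK, fun t ht x hx => ?_⟩
  have hTt : 0 < T - t := sub_pos.2 ht.2
  rw [Real.rpow_neg hTt.le, ← div_eq_mul_inv, le_div_iff₀' (Real.rpow_pos_of_pos hTt κ)]
  exact hle t ht x hx

lemma exists_forall_le_of_potential_rpow (hθ : θ < 1) (hκ : 0 ≤ κ)
    (h : IsHeatSubsolutionOn u (fun t x => κ * (T - t) ^ (-θ) * u t x) (Ioo a T) (ball x₀ r))
    (h0 : ∀ t ∈ Ioo a T, ∀ x ∈ ball x₀ r, 0 ≤ u t x) (hM : 0 < M) (hβ : 0 < β)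
    (hu : ∀ t ∈ Ioo a T, ∀ x ∈ ball x₀ r, u t x ≤ M * (T - t) ^ (-β))
    (hab : a < b) (hbT : b < T) (hr' : 0 < r') (hr : r' < r) :
    ∃ K > 0, ∀ t ∈ Ioo b T, ∀ x ∈ ball x₀ r', u t x ≤ K := by
  have hθ' : 0 < 1 - θ := sub_pos.2 hθ
  have hT : ∀ t ∈ Ioo a T, 0 < T - t := fun t ht => sub_pos.2 ht.2
  obtain ⟨K, hK, hle⟩ := h.exists_forall_integratingFactor_mul_le
    (g := fun t => Real.exp (κ / (1 - θ) * (T - t) ^ (1 - θ)))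
    (G := Real.exp (κ / (1 - θ) * (T - a) ^ (1 - θ))) (fun t _ => (Real.exp_pos _).le)
    (fun t ht => by
      have hTt := hT t ht
      gcongr
      exact ht.1.le) (Real.exp_pos _)
    (fun t ht => by
      have hrpow := ((hasDerivAt_id t).const_sub T).rpow_const (p := 1 - θ) (Or.inl (hT t ht).ne')
      refine (hrpow.const_mul (κ / (1 - θ))).exp.congr_deriv ?_
      rw [id_eq, sub_sub_cancel_left]
      field_simp) h0 hM hβ hu hab hbT hr' hr
  refine ⟨K, hK, fun t ht x hx => (le_mul_of_one_le_left ?_ ?_).trans (hle t ht x hx)⟩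
  · exact h0 t ⟨hab.trans ht.1, ht.2⟩ x (ball_subset_ball hr.le hx)
  · have hTt : 0 < T - t := sub_pos.2 ht.2
    exact Real.one_le_exp (by positivity)

end IsHeatSubsolutionOn

end BlowupRate

section TypeOne

variable {n : ℕ} {u : ℝ → ℝ^n → ℝ} {V : ℝ^n → ℝ} {x₀ : ℝ^n} {I : Set ℝ} {U : Set (ℝ^n)}
  {a b p r r' s v y C L M T α γ η : ℝ}

lemma reaction_le (hp : 1 ≤ p) (hC : 0 ≤ C) (hη : 0 ≤ η) (hv : v ≤ η) (hs : 0 ≤ s) (hL : 0 ≤ L)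
    (hy : 0 < y) (hyL : y ≤ L * s ^ (-γ)) :
    C * v * y ^ p ≤ C * η * L ^ (p - 1) * s ^ (-(γ * (p - 1))) * y := by
  have hpow : y ^ (p - 1) ≤ L ^ (p - 1) * s ^ (-(γ * (p - 1))) :=
    (Real.rpow_le_rpow hy.le hyL (sub_nonneg.2 hp)).trans_eq (by
      rw [Real.mul_rpow hL (Real.rpow_nonneg hs _), ← Real.rpow_mul hs, neg_mul])
  calc C * v * y ^ p ≤ C * η * y ^ p := by gcongr
    _ = C * η * (y ^ (p - 1) * y) := by rw [← Real.rpow_add_one hy.ne', sub_add_cancel]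
    _ ≤ C * η * (L ^ (p - 1) * s ^ (-(γ * (p - 1))) * y) := by gcongr
    _ = _ := by ring

lemma IsHeatSubsolutionOn.one_add
    (h : IsHeatSubsolutionOn u (fun t x => C * V x * (1 + u t x) ^ p) I U) (hp : 1 ≤ p)
    (hC : 0 ≤ C) (hη : 0 ≤ η) (hV : ∀ x ∈ U, V x ≤ η) (hI : I ⊆ Iic T) (hL : 0 ≤ L)
    (h0 : ∀ t ∈ I, ∀ x ∈ U, 0 ≤ u t x)
    (hu : ∀ t ∈ I, ∀ x ∈ U, 1 + u t x ≤ L * (T - t) ^ (-γ)) :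
    IsHeatSubsolutionOn (fun t x => 1 + u t x)
      (fun t x => C * η * L ^ (p - 1) * (T - t) ^ (-(γ * (p - 1))) * (1 + u t x)) I U :=
  (h.mono fun t ht x hx => reaction_le hp hC hη (hV x hx) (sub_nonneg.2 (hI ht)) hL
    (add_pos_of_pos_of_nonneg one_pos (h0 t ht x hx)) (hu t ht x hx)).const_add 1

lemma one_add_le_mul_rpow_neg (hα : 0 ≤ α) (hs : 0 < s) (hsT : s ≤ T) (hy : y ≤ M * s ^ (-α)) :
    1 + y ≤ (T ^ α + M) * s ^ (-α) := by
  have hone : 1 ≤ T ^ α * s ^ (-α) := by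
    rw [Real.rpow_neg hs.le, ← div_eq_mul_inv, one_le_div (Real.rpow_pos_of_pos hs α)]
    exact Real.rpow_le_rpow hs.le hsT hα
  linarith

/- Put `κ = C η L^(p - 1)`. The type I rate makes `1 + u` a subsolution with potential
`κ / (T - t)`, which improves the rate to `κ`. The potential then has exponent `κ (p - 1) < 1`,
so it is integrable in time. -/
theorem IsHeatSubsolutionOn.exists_forall_one_add_le
    (h : IsHeatSubsolutionOn u (fun t x => C * V x * (1 + u t x) ^ p) (Ioo a T) (ball x₀ r))
    (hp : 1 < p) (hC : 0 < C) (hη : 0 < η) (hV : ∀ x ∈ ball x₀ r, V x ≤ η)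
    (h0 : ∀ t ∈ Ioo a T, ∀ x ∈ ball x₀ r, 0 ≤ u t x) (hL : 0 < L)
    (hu : ∀ t ∈ Ioo a T, ∀ x ∈ ball x₀ r, 1 + u t x ≤ L * (T - t) ^ (-(1 / (p - 1))))
    (hsmall : C * η * L ^ (p - 1) * (p - 1) < 1) (hab : a < b) (hbT : b < T) (hr' : 0 < r')
    (hr : r' < r) : ∃ K > 0, ∀ t ∈ Ioo b T, ∀ x ∈ ball x₀ r', 1 + u t x ≤ K := by
  obtain ⟨a', haa', hab'⟩ := exists_between hab
  obtain ⟨d, hrd, hdr⟩ := exists_between hr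
  have hp1 : 0 < p - 1 := sub_pos.2 hp
  have hone : ∀ t ∈ Ioo a T, ∀ x ∈ ball x₀ r, 0 ≤ 1 + u t x := fun t ht x hx =>
    add_nonneg zero_le_one (h0 t ht x hx)
  have hpot := h.one_add hp.le hC.le hη.le hV (fun t ht => ht.2.le) hL.le h0 hu
  rw [one_div_mul_cancel hp1.ne'] at hpot
  simp only [Real.rpow_neg_one] at hpot
  obtain ⟨K, hK, hrate⟩ := hpot.exists_forall_le_rpow_of_potential_inv (by positivity) hone hL
    (one_div_pos.2 hp1) hu haa' (hab'.trans hbT) (hr'.trans hrd) hdr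
  have ht' : Ioo a' T ⊆ Ioo a T := Ioo_subset_Ioo_left haa'.le
  have hd : ball x₀ d ⊆ ball x₀ r := ball_subset_ball hdr.le
  have hpot' := (h.mono_set ht' hd).one_add hp.le hC.le hη.le (fun x hx => hV x (hd hx))
    (fun t ht => ht.2.le) hK.le (fun t ht x hx => h0 t (ht' ht) x (hd hx)) hrate
  exact hpot'.exists_forall_le_of_potential_rpow hsmall (by positivity)
    (fun t ht x hx => hone t (ht' ht) x (hd hx)) hK (by positivity) hrate hab' hbT hr' hrd

end TypeOne

theorem stmt14_general
    (n : ℕ) (p C ρ : ℝ) (hp : 1 < p) (hC : 0 < C) (hρ : 0 < ρ)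
    (x₀ : EuclideanSpace ℝ (Fin n))
    (V : EuclideanSpace ℝ (Fin n) → ℝ) (hV : UpperSemicontinuousAt V x₀) (hVx₀ : V x₀ ≤ 0)
    (T : ℝ) (hT : 0 < T)
    (u : ℝ → EuclideanSpace ℝ (Fin n) → ℝ)
    (hu_nonneg : ∀ t ∈ Ioo 0 T, ∀ x ∈ ball x₀ ρ, 0 ≤ u t x)
    (hu : IsHeatSubsolutionOn u (fun t x => C * V x * (1 + u t x) ^ p) (Ioo 0 T) (ball x₀ ρ))
    (M : ℝ) (hM : 0 < M)
    (hTypeI : ∀ t ∈ Ioo 0 T, ∀ x ∈ ball x₀ ρ, u t x ≤ M * (T - t) ^ (-(1 / (p - 1)))) :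
    ∃ r : ℝ, 0 < r ∧ r < ρ ∧ ∃ K > 0,
      ∀ t ∈ Ioo (T / 2) T, ∀ x ∈ ball x₀ r, u t x ≤ K := by
  have hα : 0 < 1 / (p - 1) := one_div_pos.2 (sub_pos.2 hp)
  set L := T ^ (1 / (p - 1)) + M
  obtain ⟨η, hη, hsmall⟩ := exists_pos_mul_lt one_pos (C * L ^ (p - 1) * (p - 1))
  obtain ⟨R, hR, hRV⟩ := Metric.eventually_nhds_iff_ball.1 (hV η (hVx₀.trans_lt hη))
  have hr : 0 < min R ρ := lt_min hR hρ
  have hrρ : ball x₀ (min R ρ) ⊆ ball x₀ ρ := ball_subset_ball (min_le_right R ρ)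
  obtain ⟨K, hK, hle⟩ := (hu.mono_set Subset.rfl hrρ).exists_forall_one_add_le hp hC hη
    (fun x hx => (hRV x (ball_subset_ball (min_le_left R ρ) hx)).le)
    (fun t ht x hx => hu_nonneg t ht x (hrρ hx)) (by positivity)
    (fun t ht x hx => one_add_le_mul_rpow_neg hα.le (sub_pos.2 ht.2) (sub_le_self T ht.1.le)
      (hTypeI t ht x (hrρ hx))) (by linarith) (half_pos hT) (half_lt_self hT) (half_pos hr)
    (half_lt_self hr)
  exact ⟨_, half_pos hr, (half_lt_self hr).trans_le (min_le_right R ρ), K, hK, fun t ht x hx =>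
    (le_add_of_nonneg_left zero_le_one).trans (hle t ht x hx)⟩

theorem stmt14
    (n : ℕ) (p C ρ : ℝ) (hp : 1 < p) (hC : 0 < C) (hρ : 0 < ρ)
    (x₀ : EuclideanSpace ℝ (Fin n))
    (V : EuclideanSpace ℝ (Fin n) → ℝ)
    (hV_cont : ContinuousOn V (ball x₀ ρ)) (hV_nonneg : ∀ x ∈ ball x₀ ρ, 0 ≤ V x)
    (T : ℝ) (hT : 0 < T)
    (u : ℝ → EuclideanSpace ℝ (Fin n) → ℝ)
    (hu_nonneg : ∀ t ∈ Ioo 0 T, ∀ x ∈ ball x₀ ρ, 0 ≤ u t x)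
    (hu_t : ∀ t ∈ Ioo 0 T, ∀ x ∈ ball x₀ ρ, DifferentiableAt ℝ (fun s => u s x) t)
    (hu_x : ∀ t ∈ Ioo 0 T, ∀ x ∈ ball x₀ ρ, ContDiffAt ℝ 2 (fun y => u t y) x)
    (hineq : ∀ t ∈ Ioo 0 T, ∀ x ∈ ball x₀ ρ,
      deriv (fun s => u s x) t ≤ lap (fun y => u t y) x + C * V x * (1 + u t x) ^ p)
    (M : ℝ) (hM : 0 < M)
    (hTypeI : ∀ t ∈ Ioo 0 T, ∀ x ∈ ball x₀ ρ, u t x ≤ M * (T - t) ^ (-(1 / (p - 1))))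
    (hVx₀ : V x₀ = 0) :
    ∃ r : ℝ, 0 < r ∧ r < ρ ∧ ∃ K > 0,
      ∀ t ∈ Ioo (T / 2) T, ∀ x ∈ ball x₀ r, u t x ≤ K := by
  exact stmt14_general n p C ρ hp hC hρ x₀ V
    (hV_cont.continuousAt (ball_mem_nhds x₀ hρ)).upperSemicontinuousAt hVx₀.le T hT u hu_nonneg
    ⟨hu_t, hu_x, hineq⟩ M hM hTypeI
end

section
/- Let f(u) = u·(log(1+u))^a with 1 < a < 2. Let V, φ ∈ C¹([−1,1]) be nonnegative even functions with V(0) > 0, φ(0) > 0, φ(1) = 0, with V′ ≤ 0 and φ′ ≤ 0 on [0,1/3], and with 0 ≤ V(x) ≤ V(1/3) and 0 ≤ φ(x) ≤ φ(1/3) for all x ∈ [1/3,1]. Let λ > 0, let 0 < T < ∞, and let u be a nonnegative classical solution on [0,T)×[−1,1] of u_t = u_xx + V(x)f(u) with u(t,±1) = 0 and u(0,·) = λφ, which blows up at time T in the sense that limsup_{t→T⁻} max_{x∈[−1,1]} u(t,x) = +∞. Then blowup is global: lim_{t→T⁻} u(t,x) = +∞ for every x ∈ (−1,1). -/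
open Set Metric Filter

open Function (uncurry)
open scoped Topology

/-!
Write `f(u) = u g(log (1 + u))` and `0 ≤ V ≤ B`. Reflecting at `±ℓ`, the comparison principle shows
that the maximum of `u t` over `[-1, 1]` is attained in a fixed interval `[-R, R]` with `R < 1`.
Take a late time `t₀` at which the running maximum `M = exp L - 1` is attained. A maximum-principle
argument for `u(t, x) - u(t, y)` (doubling of variables) shows that the solution is at least `M / 2`
on an interval of length comparable to `(1 + g(L)) ^ (-1/2)`. Comparison with an ODE shows that at
least time `L / (B g(2L))` remains before blowup. During a time `s` of this order, a Dirichlet mode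
travelling on a short moving interval carries the peak across the whole domain; the loss is a factor
`exp (-(2 / s + O(1 + g(L)) s))`, which is at least `exp (-(L / 4 + o(L)))` because
`g(L) = o(L ^ 2)`. So the solution becomes arbitrarily large on every compact part of `(-1, 1)`,
and, decaying no faster than a Dirichlet mode of a fixed interval, it remains so until `T`.
-/

/-! ### The one-dimensional heat operator -/

/-- `g` has second derivative `g''` at `x`: it is differentiable near `x`, and its derivative has
derivative `g''` at `x`. Unlike `deriv (deriv g) x = g''`, this excludes junk values. -/
def HasSecondDerivAt (g : ℝ → ℝ) (g'' x : ℝ) : Prop :=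
  ∃ g' : ℝ → ℝ, (∀ᶠ y in 𝓝 x, HasDerivAt g (g' y) y) ∧ HasDerivAt g' g'' x

lemma hasSecondDerivAt_const (c x : ℝ) : HasSecondDerivAt (fun _ => c) 0 x :=
  ⟨fun _ => 0, .of_forall fun y => hasDerivAt_const y c, hasDerivAt_const x 0⟩

lemma hasSecondDerivAt_sq_div (c w x : ℝ) :
    HasSecondDerivAt (fun y => ((y - c) / w) ^ 2) (2 / w ^ 2) x := by
  have hlin (y : ℝ) : HasDerivAt (fun y => (y - c) / w) (1 / w) y :=
    ((hasDerivAt_id' y).sub_const c).div_const w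
  exact ⟨fun y => 2 * ((y - c) / w) * (1 / w),
    .of_forall fun y => ((hlin y).fun_pow 2).congr_deriv (by norm_num),
    (((hlin x).const_mul 2).mul_const (1 / w)).congr_deriv (by ring)⟩

namespace HasSecondDerivAt

variable {g h : ℝ → ℝ} {g'' h'' x : ℝ}

lemma of_contDiffAt (hg : ContDiffAt ℝ 2 g x) : HasSecondDerivAt g (deriv (deriv g) x) x := by
  refine ⟨deriv g, ?_, ?_⟩
  · filter_upwards [hg.eventually (by simp)] with y hy
    exact (hy.differentiableAt two_ne_zero).hasDerivAt
  · have hg' : ContDiffAt ℝ 1 (deriv g) x := hg.derivWithin (by norm_num)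
    exact (hg'.differentiableAt one_ne_zero).hasDerivAt

lemma sub (hg : HasSecondDerivAt g g'' x) (hh : HasSecondDerivAt h h'' x) :
    HasSecondDerivAt (fun y => g y - h y) (g'' - h'') x := by
  obtain ⟨g', hg', hg''⟩ := hg
  obtain ⟨h', hh', hh''⟩ := hh
  refine ⟨fun y => g' y - h' y, ?_, hg''.sub hh''⟩
  filter_upwards [hg', hh'] with y hgy hhy using hgy.sub hhy

lemma const_mul (c : ℝ) (hg : HasSecondDerivAt g g'' x) :
    HasSecondDerivAt (fun y => c * g y) (c * g'') x := by
  obtain ⟨g', hg', hg''⟩ := hg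
  exact ⟨fun y => c * g' y, hg'.mono fun y hy => hy.const_mul c, hg''.const_mul c⟩

lemma comp_const_sub (c : ℝ) (hg : HasSecondDerivAt g g'' (c - x)) :
    HasSecondDerivAt (fun y => g (c - y)) g'' x := by
  obtain ⟨g', hg', hg''⟩ := hg
  refine ⟨fun y => -g' (c - y), ?_, ?_⟩
  · have hcont : ContinuousAt (fun y => c - y) x := by fun_prop
    exact (hcont.eventually hg').mono fun y hy => hy.comp_const_sub c y
  · simpa only [neg_neg] using (hg''.comp_const_sub c x).fun_neg

lemma nonpos_of_isLocalMax (hg : HasSecondDerivAt g g'' x) (hmax : IsLocalMax g x) : g'' ≤ 0 := by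
  obtain ⟨g', hg', hg''⟩ := hg
  have hderiv : deriv g =ᶠ[𝓝 x] g' := hg'.mono fun y hy => hy.deriv
  have hderiv2 : deriv (deriv g) x = g'' := hderiv.deriv_eq.trans hg''.deriv
  by_contra! hpos
  have hmin : IsLocalMin g x :=
    isLocalMin_of_deriv_deriv_pos (hderiv2 ▸ hpos) hmax.deriv_eq_zero
      hg'.self_of_nhds.continuousAt
  have hconst : g =ᶠ[𝓝 x] fun _ => g x := by
    filter_upwards [hmax, hmin] with y hle hge using le_antisymm hle hge
  have hzero : deriv (deriv g) x = 0 := by simpa using hconst.deriv.deriv_eq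
  exact hpos.ne' (hderiv2.symm.trans hzero)

end HasSecondDerivAt

lemma nonneg_of_hasDerivAt_of_isLocalMaxOn_Iio {g : ℝ → ℝ} {g' t : ℝ} (hg : HasDerivAt g g' t)
    (hmax : IsLocalMaxOn g (Iio t) t) : 0 ≤ g' := by
  have hslope : Tendsto (slope g t) (𝓝[<] t) (𝓝 g') :=
    (hasDerivWithinAt_iff_tendsto_slope' self_notMem_Iio).1 hg.hasDerivWithinAt
  refine ge_of_tendsto hslope ?_
  filter_upwards [hmax, self_mem_nhdsWithin] with s hle hlt
  rw [slope_def_field]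
  exact div_nonneg_of_nonpos (sub_nonpos.2 hle) (sub_nonpos.2 (le_of_lt hlt))

/-- The heat operator `∂ₜu - ∂ₓₓu` of `u` exists at `(t, x)` and takes the value `r` there. -/
def HasHeatOperatorAt (u : ℝ → ℝ → ℝ) (r t x : ℝ) : Prop :=
  ∃ ut uxx : ℝ, HasDerivAt (fun s => u s x) ut t ∧ HasSecondDerivAt (u t) uxx x ∧ ut - uxx = r

namespace HasHeatOperatorAt

variable {u v : ℝ → ℝ → ℝ} {r r' t x : ℝ}

lemma sub (hu : HasHeatOperatorAt u r t x) (hv : HasHeatOperatorAt v r' t x) :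
    HasHeatOperatorAt (fun s y => u s y - v s y) (r - r') t x := by
  obtain ⟨ut, uxx, hut, huxx, rfl⟩ := hu
  obtain ⟨vt, vxx, hvt, hvxx, rfl⟩ := hv
  exact ⟨ut - vt, uxx - vxx, hut.sub hvt, huxx.sub hvxx, by ring⟩

lemma const_mul (c : ℝ) (hu : HasHeatOperatorAt u r t x) :
    HasHeatOperatorAt (fun s y => c * u s y) (c * r) t x := by
  obtain ⟨ut, uxx, hut, huxx, rfl⟩ := hu
  exact ⟨c * ut, c * uxx, hut.const_mul c, huxx.const_mul c, by ring⟩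

lemma exp_mul (κ : ℝ) (hu : HasHeatOperatorAt u r t x) :
    HasHeatOperatorAt (fun s y => Real.exp (κ * s) * u s y)
      (Real.exp (κ * t) * (r + κ * u t x)) t x := by
  obtain ⟨ut, uxx, hut, huxx, rfl⟩ := hu
  have hexp : HasDerivAt (fun s => Real.exp (κ * s)) (Real.exp (κ * t) * κ) t := by
    simpa only [mul_one] using ((hasDerivAt_id' t).const_mul κ).exp
  exact ⟨_, _, hexp.mul hut, huxx.const_mul _, by ring⟩

lemma comp_const_sub (c : ℝ) (hu : HasHeatOperatorAt u r t (c - x)) :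
    HasHeatOperatorAt (fun s y => u s (c - y)) r t x := by
  obtain ⟨ut, uxx, hut, huxx, rfl⟩ := hu
  exact ⟨ut, uxx, hut, huxx.comp_const_sub c, rfl⟩

lemma nonneg_of_isLocalMax (hu : HasHeatOperatorAt u r t x)
    (ht : IsLocalMaxOn (fun s => u s x) (Iio t) t) (hx : IsLocalMax (u t) x) : 0 ≤ r := by
  obtain ⟨ut, uxx, hut, huxx, rfl⟩ := hu
  have hut_nonneg := nonneg_of_hasDerivAt_of_isLocalMaxOn_Iio hut ht
  have huxx_nonpos := huxx.nonpos_of_isLocalMax hx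
  linarith

end HasHeatOperatorAt

/-! ### Comparison principle -/

/-- The parabolic interior of a space-time set `D`: the points of `D` around which `D` contains a
short backward time segment and a spatial neighbourhood. Its complement in `D` plays the role of the
parabolic boundary in the maximum principle; the top of a space-time cylinder is thus interior. -/
def parabolicInterior {X : Type*} [TopologicalSpace X] (D : Set (ℝ × X)) : Set (ℝ × X) :=
  {p ∈ D | (∀ᶠ s in 𝓝[<] p.1, (s, p.2) ∈ D) ∧ ∀ᶠ y in 𝓝 p.2, (p.1, y) ∈ D}

lemma parabolicInterior_Icc_prod_Icc (a b c d : ℝ) :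
    parabolicInterior (Icc a b ×ˢ Icc c d) = Ioc a b ×ˢ Ioo c d := by
  ext ⟨t, x⟩
  refine ⟨fun ⟨⟨ht, _⟩, hleft, hspace⟩ => ⟨⟨?_, ht.2⟩, ?_⟩, fun ⟨ht, hx⟩ => ⟨?_, ?_, ?_⟩⟩
  · obtain ⟨s, ⟨hs, _⟩, hst⟩ := (hleft.and self_mem_nhdsWithin).exists
    exact hs.1.trans_lt hst
  · exact Icc_mem_nhds_iff.1 (hspace.mono fun y hy => hy.2)
  · exact ⟨Ioc_subset_Icc_self ht, Ioo_subset_Icc_self hx⟩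
  · filter_upwards [Icc_mem_nhdsLT_of_mem ht] with s hs using ⟨hs, Ioo_subset_Icc_self hx⟩
  · filter_upwards [Icc_mem_nhds hx.1 hx.2] with y hy using ⟨Ioc_subset_Icc_self ht, hy⟩

lemma exists_localMax_mem_parabolicInterior {X : Type*} [TopologicalSpace X] {D : Set (ℝ × X)}
    (hD : IsCompact D) {v : ℝ → X → ℝ} (hv : ContinuousOn (uncurry v) D)
    (hbdry : ∀ t x, (t, x) ∈ D → (t, x) ∉ parabolicInterior D → v t x ≤ 0)
    {t₀ : ℝ} {x₀ : X} (hmem : (t₀, x₀) ∈ D) (hpos : 0 < v t₀ x₀) :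
    ∃ t x, (t, x) ∈ parabolicInterior D ∧ 0 < v t x ∧
      IsLocalMaxOn (fun s => v s x) (Iio t) t ∧ IsLocalMax (v t) x := by
  obtain ⟨⟨t, x⟩, hp, hmax⟩ := hD.exists_isMaxOn ⟨_, hmem⟩ hv
  have hvpos : 0 < v t x := hpos.trans_le (hmax hmem)
  have hint : (t, x) ∈ parabolicInterior D := by
    by_contra hnot
    exact (hbdry t x hp hnot).not_gt hvpos
  exact ⟨t, x, hint, hvpos, hint.2.1.mono fun s hs => hmax hs, hint.2.2.mono fun y hy => hmax hy⟩

theorem nonpos_of_heatOperator_le {D : Set (ℝ × ℝ)} (hD : IsCompact D) {v : ℝ → ℝ → ℝ}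
    (hv : ContinuousOn (uncurry v) D) (K : ℝ)
    (hbdry : ∀ t x, (t, x) ∈ D → (t, x) ∉ parabolicInterior D → v t x ≤ 0)
    (hheat : ∀ t x, (t, x) ∈ parabolicInterior D → 0 < v t x →
      ∃ r ≤ K * v t x, HasHeatOperatorAt v r t x)
    {t x : ℝ} (hmem : (t, x) ∈ D) : v t x ≤ 0 := by
  by_contra! hpos
  -- The factor `exp (-(K + 1) t)` makes the differential inequality strict where `v` is positive.
  let w : ℝ → ℝ → ℝ := fun s y => Real.exp (-(K + 1) * s) * v s y
  have hw : ContinuousOn (uncurry w) D := by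
    have hexp : Continuous fun p : ℝ × ℝ => Real.exp (-(K + 1) * p.1) := by fun_prop
    exact hexp.continuousOn.mul hv
  have hwbdry (s y : ℝ) (hs : (s, y) ∈ D) (hs' : (s, y) ∉ parabolicInterior D) : w s y ≤ 0 :=
    mul_nonpos_of_nonneg_of_nonpos (Real.exp_pos _).le (hbdry s y hs hs')
  obtain ⟨s, y, hint, hwpos, ht, hx⟩ := exists_localMax_mem_parabolicInterior hD hw hwbdry hmem
    (mul_pos (Real.exp_pos _) hpos)
  have hvpos : 0 < v s y := pos_of_mul_pos_right hwpos (Real.exp_pos _).le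
  obtain ⟨r, hr, hvr⟩ := hheat s y hint hvpos
  have hnonneg : 0 ≤ r + -(K + 1) * v s y :=
    nonneg_of_mul_nonneg_right ((hvr.exp_mul (-(K + 1))).nonneg_of_isLocalMax ht hx)
      (Real.exp_pos _)
  linarith

theorem le_of_semilinear_heatOperator_le {D : Set (ℝ × ℝ)} (hD : IsCompact D) {f V : ℝ → ℝ}
    (hf : LocallyLipschitzOn (Ici 0) f) {B : ℝ} (hV : ∀ t x, (t, x) ∈ D → V x ∈ Icc 0 B)
    {u w : ℝ → ℝ → ℝ} (hu : ContinuousOn (uncurry u) D) (hw : ContinuousOn (uncurry w) D)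
    (hw_nonneg : ∀ t x, (t, x) ∈ D → 0 ≤ w t x)
    (hbdry : ∀ t x, (t, x) ∈ D → (t, x) ∉ parabolicInterior D → u t x ≤ w t x)
    (hsub : ∀ t x, (t, x) ∈ parabolicInterior D →
      ∃ r ≤ V x * f (u t x), HasHeatOperatorAt u r t x)
    (hsuper : ∀ t x, (t, x) ∈ parabolicInterior D →
      ∃ r ≥ V x * f (w t x), HasHeatOperatorAt w r t x)
    {t x : ℝ} (hmem : (t, x) ∈ D) : u t x ≤ w t x := by
  obtain ⟨⟨t₁, x₁⟩, -, hmax⟩ := hD.exists_isMaxOn ⟨_, hmem⟩ hu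
  obtain ⟨K, hK⟩ := (hf.mono Icc_subset_Ici_self).exists_lipschitzOnWith_of_compact
    (isCompact_Icc (a := 0) (b := u t₁ x₁))
  rw [← sub_nonpos]
  refine nonpos_of_heatOperator_le hD (v := fun s y => u s y - w s y) (hu.sub hw) (B * K)
    (fun s y hs hs' => sub_nonpos.2 (hbdry s y hs hs')) (fun s y hs hpos => ?_) hmem
  obtain ⟨r, hr, hur⟩ := hsub s y hs
  obtain ⟨r', hr', hwr'⟩ := hsuper s y hs
  refine ⟨r - r', ?_, hur.sub hwr'⟩
  have hw0 := hw_nonneg s y hs.1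
  have hu_le : u s y ≤ u t₁ x₁ := hmax hs.1
  have hlip : f (u s y) - f (w s y) ≤ K * (u s y - w s y) := by
    have hdist := hK.dist_le_mul (u s y) ⟨by linarith, hu_le⟩ (w s y) ⟨hw0, by linarith⟩
    rw [Real.dist_eq, Real.dist_eq, abs_of_pos hpos] at hdist
    exact (le_abs_self _).trans hdist
  calc r - r' ≤ V y * (f (u s y) - f (w s y)) := by linarith
    _ ≤ V y * (K * (u s y - w s y)) := by gcongr; exact (hV s y hs.1).1
    _ ≤ B * (K * (u s y - w s y)) := by gcongr; exact (hV s y hs.1).2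
    _ = B * K * (u s y - w s y) := (mul_assoc _ _ _).symm

/-! ### Solutions and reflection -/

/-- `u` is a nonnegative classical solution of `uₜ = uₓₓ + V(x) f(u)` on `[0, T) × [-1, 1]` with
zero Dirichlet data for positive times. The initial value `u 0` is left free. -/
structure IsNonnegSolution (f V : ℝ → ℝ) (T : ℝ) (u : ℝ → ℝ → ℝ) : Prop where
  continuousOn : ContinuousOn (uncurry u) (Ico 0 T ×ˢ Icc (-1) 1)
  nonneg : ∀ t ∈ Ico 0 T, ∀ x ∈ Icc (-1 : ℝ) 1, 0 ≤ u t x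
  regular : ∀ t ∈ Ioo 0 T, ∀ x ∈ Ioo (-1 : ℝ) 1,
    DifferentiableAt ℝ (fun s => u s x) t ∧ ContDiffAt ℝ 2 (u t) x
  equation : ∀ t ∈ Ioo 0 T, ∀ x ∈ Ioo (-1 : ℝ) 1,
    deriv (fun s => u s x) t = deriv (deriv (u t)) x + V x * f (u t x)
  boundary : ∀ t ∈ Ioo 0 T, u t (-1) = 0 ∧ u t 1 = 0

/-- The values of `g` to the right of `ℓ`, up to `1`, are at most those at the points mirrored
in `ℓ`. For the solution at a fixed time this is the moving-plane inequality at `ℓ`. -/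
def ReflectionLE (ℓ : ℝ) (g : ℝ → ℝ) : Prop :=
  ∀ x ∈ Icc ℓ 1, g x ≤ g (2 * ℓ - x)

/-- `ReflectionLE` for the mirror points `ℓ` and `-ℓ`, the latter with left and right exchanged. -/
def SymmReflectionLE (ℓ : ℝ) (g : ℝ → ℝ) : Prop :=
  ReflectionLE ℓ g ∧ ReflectionLE ℓ fun x => g (-x)

namespace ReflectionLE

variable {ℓ : ℝ} {g h : ℝ → ℝ}

lemma congr (hg : ReflectionLE ℓ g) (hℓ : 0 ≤ ℓ) (h_eq : EqOn h g (Icc (-1) 1)) :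
    ReflectionLE ℓ h := by
  intro x hx
  rw [h_eq ⟨by linarith [hx.1], hx.2⟩, h_eq ⟨by linarith [hx.2], by linarith [hx.1, hx.2]⟩]
  exact hg x hx

lemma const_mul (hg : ReflectionLE ℓ g) {c : ℝ} (hc : 0 ≤ c) :
    ReflectionLE ℓ fun x => c * g x :=
  fun x hx => mul_le_mul_of_nonneg_left (hg x hx) hc

-- Since `ℓ ≥ 1/3`, the reflected interval `[2ℓ - 1, ℓ]` lies within `[-ℓ, ℓ]`.
lemma of_even_of_antitoneOn (hℓ : 1 / 3 ≤ ℓ) (heven : ∀ x ∈ Icc (-1) 1, g (-x) = g x)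
    (hanti : AntitoneOn g (Icc 0 ℓ)) (hle : ∀ x ∈ Icc ℓ 1, g x ≤ g ℓ) : ReflectionLE ℓ g := by
  intro x hx
  have hmem : |2 * ℓ - x| ∈ Icc 0 ℓ :=
    ⟨abs_nonneg _, abs_le.2 ⟨by linarith [hx.2], by linarith [hx.1]⟩⟩
  have habs : g |2 * ℓ - x| = g (2 * ℓ - x) := by
    obtain h | h := abs_choice (2 * ℓ - x)
    · rw [h]
    · rw [h, heven _ ⟨by linarith [hx.2], by linarith [hx.1, hx.2]⟩]
  exact (hle x hx).trans ((hanti hmem ⟨by linarith, le_rfl⟩ hmem.2).trans_eq habs)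

end ReflectionLE

namespace SymmReflectionLE

variable {ℓ : ℝ} {g h : ℝ → ℝ}

lemma const_mul (hg : SymmReflectionLE ℓ g) {c : ℝ} (hc : 0 ≤ c) :
    SymmReflectionLE ℓ fun x => c * g x :=
  ⟨hg.1.const_mul hc, hg.2.const_mul hc⟩

lemma congr (hg : SymmReflectionLE ℓ g) (hℓ : 0 ≤ ℓ) (h_eq : EqOn h g (Icc (-1) 1)) :
    SymmReflectionLE ℓ h :=
  ⟨hg.1.congr hℓ h_eq,
    hg.2.congr hℓ fun _ hx => h_eq (neg_mem_Icc_iff.2 (by simpa only [neg_neg] using hx))⟩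

lemma of_even_of_derivWithin_nonpos (hℓ : ℓ ∈ Icc (1 / 3) 1)
    (hg : DifferentiableOn ℝ g (Icc (-1) 1)) (heven : ∀ x ∈ Icc (-1) 1, g (-x) = g x)
    (hderiv : ∀ x ∈ Icc 0 ℓ, derivWithin g (Icc (-1) 1) x ≤ 0) (hle : ∀ x ∈ Icc ℓ 1, g x ≤ g ℓ) :
    SymmReflectionLE ℓ g := by
  have hinterior {x : ℝ} (hx : x ∈ interior (Icc 0 ℓ)) : Icc (-1) 1 ∈ 𝓝 x := by
    rw [interior_Icc] at hx
    exact Icc_mem_nhds (by linarith [hx.1]) (hx.2.trans_le hℓ.2)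
  have hanti : AntitoneOn g (Icc 0 ℓ) := by
    refine antitoneOn_of_deriv_nonpos (convex_Icc 0 ℓ)
      (hg.continuousOn.mono (Icc_subset_Icc (by norm_num) hℓ.2)) (fun x hx => ?_) fun x hx => ?_
    · exact (hg.differentiableAt (hinterior hx)).differentiableWithinAt
    · rw [← derivWithin_of_mem_nhds (hinterior hx)]
      exact hderiv x (interior_subset hx)
  have hrefl : ReflectionLE ℓ g := .of_even_of_antitoneOn hℓ.1 heven hanti hle
  exact ⟨hrefl, hrefl.congr (by linarith [hℓ.1]) heven⟩

lemma exists_abs_le (hg : SymmReflectionLE ℓ g) {x : ℝ}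
    (hx : x ∈ Icc (-1) 1) :
    ∃ y, |y| ≤ max ℓ (1 - 2 * ℓ) ∧ g x ≤ g y := by
  have hmirror {z : ℝ} (hz : z ∈ Icc ℓ 1) : |2 * ℓ - z| ≤ max ℓ (1 - 2 * ℓ) :=
    abs_le.2 ⟨by linarith [le_max_right ℓ (1 - 2 * ℓ), hz.2],
      by linarith [le_max_left ℓ (1 - 2 * ℓ), hz.1]⟩
  obtain hxℓ | hxℓ := le_total |x| ℓ
  · exact ⟨x, hxℓ.trans (le_max_left _ _), le_rfl⟩
  obtain hx0 | hx0 := le_abs'.1 hxℓ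
  · have hneg : -x ∈ Icc ℓ 1 := ⟨by linarith, by linarith [hx.1]⟩
    refine ⟨-(2 * ℓ - -x), (abs_neg _).trans_le (hmirror hneg), ?_⟩
    simpa only [neg_neg] using hg.2 (-x) hneg
  · exact ⟨2 * ℓ - x, hmirror ⟨hx0, hx.2⟩, hg.1 x ⟨hx0, hx.2⟩⟩

end SymmReflectionLE

namespace IsNonnegSolution

variable {f V : ℝ → ℝ} {T : ℝ} {u : ℝ → ℝ → ℝ}

lemma continuousOn_slab (hu : IsNonnegSolution f V T u) {s t : ℝ} (hs : 0 ≤ s) (ht : t < T) :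
    ContinuousOn (uncurry u) (Icc s t ×ˢ Icc (-1) 1) :=
  hu.continuousOn.mono (prod_mono_left fun _ hr => ⟨hs.trans hr.1, hr.2.trans_lt ht⟩)

lemma hasHeatOperatorAt (hu : IsNonnegSolution f V T u) {t x : ℝ} (ht : t ∈ Ioo 0 T)
    (hx : x ∈ Ioo (-1) 1) : HasHeatOperatorAt u (V x * f (u t x)) t x := by
  obtain ⟨htime, hspace⟩ := hu.regular t ht x hx
  exact ⟨_, _, htime.hasDerivAt, .of_contDiffAt hspace, by rw [hu.equation t ht x hx]; ring⟩

lemma comp_neg (hu : IsNonnegSolution f V T u) :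
    IsNonnegSolution f (fun x => V (-x)) T fun t x => u t (-x) where
  continuousOn := hu.continuousOn.comp (f := fun p : ℝ × ℝ => (p.1, -p.2)) (by fun_prop)
    fun p hp => ⟨hp.1, neg_mem_Icc_iff.2 (by simpa using hp.2)⟩
  nonneg t ht x hx := hu.nonneg t ht (-x) (neg_mem_Icc_iff.2 (by simpa using hx))
  regular t ht x hx := by
    obtain ⟨htime, hspace⟩ := hu.regular t ht (-x) (neg_mem_Ioo_iff.2 (by simpa using hx))
    exact ⟨htime, hspace.comp x contDiffAt_id.neg⟩
  equation t ht x hx := by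
    have hderiv : deriv (fun y => u t (-y)) = fun y => -deriv (u t) (-y) :=
      funext fun y => deriv_comp_neg (u t) y
    rw [hu.equation t ht (-x) (neg_mem_Ioo_iff.2 (by simpa using hx)), hderiv, deriv.fun_neg,
      deriv_comp_neg (deriv (u t)), neg_neg]
  boundary t ht := by simpa only [neg_neg] using (hu.boundary t ht).symm

theorem reflectionLE (hu : IsNonnegSolution f V T u) (hf : LocallyLipschitzOn (Ici 0) f)
    (hf_nonneg : ∀ z, 0 ≤ z → 0 ≤ f z) {B : ℝ} (hV : ∀ x ∈ Icc (-1) 1, V x ∈ Icc 0 B)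
    {ℓ : ℝ} (hℓ : ℓ ∈ Ico 0 1) (hV_refl : ReflectionLE ℓ V) (hu_refl : ReflectionLE ℓ (u 0))
    {t : ℝ} (ht : t ∈ Ico 0 T) : ReflectionLE ℓ (u t) := by
  intro x hx
  obtain ⟨hℓ0, hℓ1⟩ := hℓ
  have hmem {y : ℝ} (hy : y ∈ Icc ℓ 1) : y ∈ Icc (-1) 1 ∧ 2 * ℓ - y ∈ Icc (-1) 1 :=
    ⟨⟨by linarith [hy.1], hy.2⟩, by linarith [hy.2], by linarith [hy.1]⟩
  have hlt {s : ℝ} (hs : s ∈ Icc 0 t) : s ∈ Ico 0 T := ⟨hs.1, hs.2.trans_lt ht.2⟩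
  have hcont := hu.continuousOn_slab le_rfl ht.2
  refine le_of_semilinear_heatOperator_le (D := Icc 0 t ×ˢ Icc ℓ 1) (V := V)
    (w := fun s y => u s (2 * ℓ - y)) (isCompact_Icc.prod isCompact_Icc) hf
    (fun s y h => hV y (hmem h.2).1) (hcont.mono (prod_mono_right fun y hy => (hmem hy).1))
    (hcont.comp (f := fun p : ℝ × ℝ => (p.1, 2 * ℓ - p.2)) (by fun_prop)
      fun p hp => ⟨hp.1, (hmem hp.2).2⟩)
    (fun s y h => hu.nonneg s (hlt h.1) _ (hmem h.2).2)
    (fun s y h h' => ?_) (fun s y h => ?_) (fun s y h => ?_) ⟨right_mem_Icc.2 ht.1, hx⟩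
  · rw [parabolicInterior_Icc_prod_Icc] at h'
    obtain rfl | hs := h.1.1.eq_or_lt
    · exact hu_refl y h.2
    obtain rfl | hyℓ := h.2.1.eq_or_lt
    · rw [two_mul, add_sub_cancel_right]
    have hy1 : y = 1 := by
      by_contra hy1
      exact h' ⟨⟨hs, h.1.2⟩, hyℓ, lt_of_le_of_ne h.2.2 hy1⟩
    rw [hy1, (hu.boundary s ⟨hs, (hlt h.1).2⟩).2]
    exact hu.nonneg s (hlt h.1) _ (hmem (hy1 ▸ h.2)).2
  · rw [parabolicInterior_Icc_prod_Icc] at h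
    exact ⟨_, le_rfl, hu.hasHeatOperatorAt ⟨h.1.1, h.1.2.trans_lt ht.2⟩
      ⟨by linarith [h.2.1], h.2.2⟩⟩
  · rw [parabolicInterior_Icc_prod_Icc] at h
    have hs : s ∈ Ioo 0 T := ⟨h.1.1, h.1.2.trans_lt ht.2⟩
    have hy : y ∈ Icc ℓ 1 := Ioo_subset_Icc_self h.2
    have hy' : 2 * ℓ - y ∈ Ioo (-1) 1 := ⟨by linarith [h.2.2], by linarith [h.2.1]⟩
    refine ⟨_, ?_, (hu.hasHeatOperatorAt hs hy').comp_const_sub _⟩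
    exact mul_le_mul_of_nonneg_right (hV_refl y hy)
      (hf_nonneg _ (hu.nonneg s (Ioo_subset_Ico_self hs) _ (hmem hy).2))

lemma symmReflectionLE (hu : IsNonnegSolution f V T u) (hf : LocallyLipschitzOn (Ici 0) f)
    (hf_nonneg : ∀ z, 0 ≤ z → 0 ≤ f z) {B : ℝ} (hV : ∀ x ∈ Icc (-1) 1, V x ∈ Icc 0 B)
    {ℓ : ℝ} (hℓ : ℓ ∈ Ico 0 1) (hV_refl : SymmReflectionLE ℓ V)
    (hu_refl : SymmReflectionLE ℓ (u 0)) {t : ℝ} (ht : t ∈ Ico 0 T) : SymmReflectionLE ℓ (u t) :=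
  ⟨hu.reflectionLE hf hf_nonneg hV hℓ hV_refl.1 hu_refl.1 ht,
    hu.comp_neg.reflectionLE hf hf_nonneg
      (fun x hx => hV (-x) (neg_mem_Icc_iff.2 (by simpa using hx))) hℓ hV_refl.2 hu_refl.2 ht⟩

end IsNonnegSolution

/-! ### The lifespan bound -/

/-- The nonlinearity `f(z) = z g(log(1 + z))`; the case of interest is `g(L) = L ^ a`. -/
noncomputable def logNonlinearity (g : ℝ → ℝ) (z : ℝ) : ℝ :=
  z * g (Real.log (1 + z))

/-- The maximum over `[-1, 1]` of `u t` is unbounded as `t → T⁻`, i.e. its upper limit is `+∞`. -/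
def BlowsUpAt (u : ℝ → ℝ → ℝ) (T : ℝ) : Prop :=
  ∀ M : ℝ, ∀ δ > 0, ∃ t, T - δ < t ∧ t < T ∧ ∃ x ∈ Icc (-1 : ℝ) 1, M < u t x

lemma logNonlinearity_exp_sub_one (g : ℝ → ℝ) (L : ℝ) :
    logNonlinearity g (Real.exp L - 1) = (Real.exp L - 1) * g L := by
  rw [logNonlinearity, add_sub_cancel, Real.log_exp]

lemma locallyLipschitzOn_logNonlinearity {g : ℝ → ℝ} (hg : ContDiff ℝ 1 g) :
    LocallyLipschitzOn (Ici 0) (logNonlinearity g) := by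
  intro z hz
  have hlog : ContDiffAt ℝ 1 (fun z : ℝ => Real.log (1 + z)) z :=
    (contDiffAt_const.add contDiffAt_id).log (by simp; linarith [mem_Ici.1 hz])
  obtain ⟨K, t, ht, hK⟩ :=
    (contDiffAt_id.mul (hg.contDiffAt.comp z hlog)).exists_lipschitzOnWith
  exact ⟨K, t, mem_nhdsWithin_of_mem_nhds ht, hK⟩

section LogNonlinearity

variable {g : ℝ → ℝ} (hg : MonotoneOn g (Ici 0)) (hg0 : 0 ≤ g 0)
include hg hg0

lemma logNonlinearity_nonneg {z : ℝ} (hz : 0 ≤ z) : 0 ≤ logNonlinearity g z :=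
  mul_nonneg hz (hg0.trans (hg self_mem_Ici (Real.log_nonneg (by linarith))
    (Real.log_nonneg (by linarith))))

lemma logNonlinearity_le_mul {z M : ℝ} (hz : 0 ≤ z) (hzM : z ≤ M) :
    logNonlinearity g z ≤ g (Real.log (1 + M)) * M := by
  have hlog : 0 ≤ Real.log (1 + z) := Real.log_nonneg (by linarith)
  have hlog_le : Real.log (1 + z) ≤ Real.log (1 + M) := Real.log_le_log (by linarith) (by linarith)
  have hle : g (Real.log (1 + z)) ≤ g (Real.log (1 + M)) := hg hlog (hlog.trans hlog_le) hlog_le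
  have hnonneg : 0 ≤ g (Real.log (1 + z)) := hg0.trans (hg self_mem_Ici hlog hlog)
  calc z * g (Real.log (1 + z)) ≤ M * g (Real.log (1 + M)) := by gcongr; linarith
    _ = g (Real.log (1 + M)) * M := mul_comm _ _

end LogNonlinearity

namespace IsNonnegSolution

lemma le_of_deriv_ge {f V : ℝ → ℝ} {B T : ℝ} {u : ℝ → ℝ → ℝ} (hu : IsNonnegSolution f V T u)
    (hf : LocallyLipschitzOn (Ici 0) f) (hV : ∀ x ∈ Icc (-1) 1, V x ∈ Icc 0 B)
    {t₀ t : ℝ} (ht₀ : 0 ≤ t₀) (ht : t ∈ Ico t₀ T) {w w' : ℝ → ℝ}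
    (hw : ContinuousOn w (Icc t₀ t)) (hw_nonneg : ∀ s ∈ Icc t₀ t, 0 ≤ w s)
    (hw' : ∀ s ∈ Ioc t₀ t, HasDerivAt w (w' s) s)
    (hode : ∀ s ∈ Ioc t₀ t, ∀ x ∈ Ioo (-1) 1, V x * f (w s) ≤ w' s)
    (hinit : ∀ x ∈ Icc (-1) 1, u t₀ x ≤ w t₀) {x : ℝ} (hx : x ∈ Icc (-1) 1) :
    u t x ≤ w t := by
  refine le_of_semilinear_heatOperator_le (D := Icc t₀ t ×ˢ Icc (-1) 1) (w := fun s _ => w s)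
    (isCompact_Icc.prod isCompact_Icc) hf (fun s y h => hV y h.2) (hu.continuousOn_slab ht₀ ht.2)
    (hw.comp continuousOn_fst fun p hp => hp.1) (fun s y h => hw_nonneg s h.1)
    (fun s y h h' => ?_) (fun s y h => ?_) (fun s y h => ?_) ⟨right_mem_Icc.2 ht.1, hx⟩
  · rw [parabolicInterior_Icc_prod_Icc] at h'
    obtain rfl | hs := h.1.1.eq_or_lt
    · exact hinit y h.2
    have hy : y = -1 ∨ y = 1 := by
      by_contra! hy
      exact h' ⟨⟨hs, h.1.2⟩, lt_of_le_of_ne h.2.1 hy.1.symm, lt_of_le_of_ne h.2.2 hy.2⟩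
    have hbc := hu.boundary s ⟨ht₀.trans_lt hs, h.1.2.trans_lt ht.2⟩
    have hus : u s y = 0 := by rcases hy with rfl | rfl <;> simp only [hbc]
    exact hus.trans_le (hw_nonneg s h.1)
  · rw [parabolicInterior_Icc_prod_Icc] at h
    exact ⟨_, le_rfl, hu.hasHeatOperatorAt ⟨ht₀.trans_lt h.1.1, h.1.2.trans_lt ht.2⟩ h.2⟩
  · rw [parabolicInterior_Icc_prod_Icc] at h
    exact ⟨_, hode s h.1 y h.2, _, _, hw' s h.1, hasSecondDerivAt_const _ _, sub_zero _⟩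

section LogNonlinearity

variable {g V : ℝ → ℝ} {B T : ℝ} {u : ℝ → ℝ → ℝ}
  (hu : IsNonnegSolution (logNonlinearity g) V T u)
  (hf : LocallyLipschitzOn (Ici 0) (logNonlinearity g))
  (hg : MonotoneOn g (Ici 0)) (hg0 : 0 ≤ g 0) (hV : ∀ x ∈ Icc (-1) 1, V x ∈ Icc 0 B)
include hu hf hg hg0 hV

lemma le_exp_two_mul_sub_one {L t₀ t : ℝ} (hL : 0 ≤ L) (ht₀ : 0 ≤ t₀)
    (hle : ∀ x ∈ Icc (-1) 1, u t₀ x ≤ Real.exp L - 1) (ht : t ∈ Ico t₀ T)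
    (hshort : B * g (2 * L) * (t - t₀) ≤ L) {x : ℝ} (hx : x ∈ Icc (-1) 1) :
    u t x ≤ Real.exp (2 * L) - 1 := by
  set k := B * g (2 * L)
  have hB : 0 ≤ B := (hV x hx).1.trans (hV x hx).2
  have h2L : 0 ≤ 2 * L := by positivity
  have hk0 : 0 ≤ k := mul_nonneg hB (hg0.trans (hg self_mem_Ici h2L h2L))
  let E : ℝ → ℝ := fun s => L + k * (s - t₀)
  have hE_nonneg {s : ℝ} (hs : t₀ ≤ s) : 0 ≤ E s :=
    add_nonneg hL (mul_nonneg hk0 (sub_nonneg.2 hs))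
  have hE_le {s : ℝ} (hs : s ≤ t) : E s ≤ 2 * L := by
    have hmono : k * (s - t₀) ≤ k * (t - t₀) := by gcongr
    linarith
  have hE_deriv (s : ℝ) : HasDerivAt (fun s => Real.exp (E s) - 1) (Real.exp (E s) * k) s := by
    simpa only [mul_one] using
      (((((hasDerivAt_id' s).sub_const t₀).const_mul k).const_add L).exp).sub_const 1
  have hcomparison : u t x ≤ Real.exp (E t) - 1 := by
    refine hu.le_of_deriv_ge (w := fun s => Real.exp (E s) - 1) hf hV ht₀ ht
      (fun s _ => (hE_deriv s).continuousAt.continuousWithinAt)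
      (fun s hs => sub_nonneg.2 (Real.one_le_exp (hE_nonneg hs.1)))
      (fun s _ => hE_deriv s) (fun s hs y hy => ?_) (by simpa [E] using hle) hx
    have hEs := hE_nonneg hs.1.le
    have hexp : 0 ≤ Real.exp (E s) - 1 := sub_nonneg.2 (Real.one_le_exp hEs)
    have hgE : g (E s) ≤ g (2 * L) := hg hEs h2L (hE_le hs.2)
    have hgE_nonneg : 0 ≤ g (E s) := hg0.trans (hg self_mem_Ici hEs hEs)
    rw [logNonlinearity_exp_sub_one]
    calc V y * ((Real.exp (E s) - 1) * g (E s)) ≤ B * (Real.exp (E s) * g (2 * L)) := by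
          gcongr
          · exact (hV y (Ioo_subset_Icc_self hy)).2
          · linarith
      _ = Real.exp (E s) * k := by ring
  exact hcomparison.trans (by gcongr; exact hE_le le_rfl)

theorem lt_mul_of_blowsUpAt (hblow : BlowsUpAt u T) {L t₀ : ℝ} (hL : 0 ≤ L) (ht₀ : t₀ ∈ Ico 0 T)
    (hle : ∀ x ∈ Icc (-1) 1, u t₀ x ≤ Real.exp L - 1) : L < B * g (2 * L) * (T - t₀) := by
  by_contra! hshort
  obtain ⟨t, ht₀t, htT, x, hx, hbig⟩ :=
    hblow (Real.exp (2 * L) - 1) (T - t₀) (sub_pos.2 ht₀.2)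
  have ht : t ∈ Ico t₀ T := ⟨by linarith, htT⟩
  have hB : 0 ≤ B := (hV x hx).1.trans (hV x hx).2
  have h2L : 0 ≤ 2 * L := by positivity
  have hg2L : 0 ≤ g (2 * L) := hg0.trans (hg self_mem_Ici h2L h2L)
  have hshort' : B * g (2 * L) * (t - t₀) ≤ L :=
    (mul_le_mul_of_nonneg_left (by linarith) (mul_nonneg hB hg2L)).trans hshort
  exact hbig.not_ge (hu.le_exp_two_mul_sub_one hf hg hg0 hV hL ht₀.1 hle ht hshort' hx)

end LogNonlinearity

end IsNonnegSolution

/-! ### Doubling of variables at a record maximum -/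

/-- The domain on which `u t x` and `u t y` are compared: `(t, x)` runs through a backward cylinder
with top centre `(t₀, x₀)`, and `y` through the interval of length `δ` to the left of `x`. -/
def doublingDomain (t₀ x₀ τ w δ : ℝ) : Set (ℝ × (ℝ × ℝ)) :=
  {p | p.1 ∈ Icc (t₀ - τ) t₀ ∧ p.2.1 ∈ Icc (x₀ - w) (x₀ + w) ∧ p.2.2 ∈ Icc (p.2.1 - δ) p.2.1}

/-- The barrier for `u t x - u t y` on `doublingDomain`: at least `1` on its parabolic boundary,
except that it is only nonnegative on the diagonal `y = x`, and concave in `x - y`. -/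
noncomputable def doublingBarrier (t₀ x₀ τ w δ t x y : ℝ) : ℝ :=
  (t₀ - t) / τ + ((x - x₀) / w) ^ 2 + (1 - ((y - (x - δ)) / δ) ^ 2)

lemma isCompact_doublingDomain (t₀ x₀ τ w δ : ℝ) : IsCompact (doublingDomain t₀ x₀ τ w δ) := by
  have hsub : doublingDomain t₀ x₀ τ w δ ⊆
      Icc (t₀ - τ) t₀ ×ˢ Icc (x₀ - w) (x₀ + w) ×ˢ Icc (x₀ - w - δ) (x₀ + w) :=
    fun p ⟨ht, hx, hy⟩ => ⟨ht, hx, by linarith [hx.1, hy.1], hy.2.trans hx.2⟩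
  have hclosed : IsClosed (doublingDomain t₀ x₀ τ w δ) := by
    simp only [doublingDomain, mem_Icc, ofPred_and]
    refine .inter (.inter ?_ ?_) (.inter (.inter ?_ ?_) (.inter ?_ ?_)) <;>
      exact isClosed_le (by fun_prop) (by fun_prop)
  exact (isCompact_Icc.prod (isCompact_Icc.prod isCompact_Icc)).of_isClosed_subset hclosed hsub

lemma mem_Icc_of_mem_doublingDomain {t₀ x₀ τ w δ t x y : ℝ} (hτ : τ ≤ t₀) (hδ : 0 ≤ δ)
    (hx₀ : |x₀| + w + δ ≤ 1) (h : (t, x, y) ∈ doublingDomain t₀ x₀ τ w δ) :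
    t ∈ Icc 0 t₀ ∧ x ∈ Icc (-1) 1 ∧ y ∈ Icc (-1) 1 := by
  obtain ⟨⟨ht1, ht2⟩, ⟨hx1, hx2⟩, hy1, hy2⟩ := h
  have habs := abs_le.1 (show |x₀| ≤ 1 - w - δ by linarith)
  refine ⟨⟨?_, ht2⟩, ⟨?_, ?_⟩, ?_, ?_⟩ <;> linarith

lemma mem_parabolicInterior_doublingDomain {t₀ x₀ τ w δ t x y : ℝ} :
    (t, x, y) ∈ parabolicInterior (doublingDomain t₀ x₀ τ w δ) ↔
      t ∈ Ioc (t₀ - τ) t₀ ∧ x ∈ Ioo (x₀ - w) (x₀ + w) ∧ y ∈ Ioo (x - δ) x := by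
  refine ⟨fun ⟨⟨ht, _, _⟩, hleft, hspace⟩ => ⟨⟨?_, ht.2⟩, ?_, ?_⟩,
    fun ⟨ht, hx, hy⟩ => ⟨⟨Ioc_subset_Icc_self ht, Ioo_subset_Icc_self hx, Ioo_subset_Icc_self hy⟩,
      ?_, ?_⟩⟩
  · obtain ⟨s, ⟨hs, _⟩, hst⟩ := (hleft.and self_mem_nhdsWithin).exists
    exact hs.1.trans_lt hst
  · have hcont : ContinuousAt (fun x' => (x', y)) x := by fun_prop
    exact Icc_mem_nhds_iff.1 ((hcont.eventually hspace).mono fun x' h => h.2.1)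
  · have hcont : ContinuousAt (fun y' => (x, y')) y := by fun_prop
    exact Icc_mem_nhds_iff.1 ((hcont.eventually hspace).mono fun y' h => h.2.2)
  · filter_upwards [Icc_mem_nhdsLT_of_mem ht] with s hs
    exact ⟨hs, Ioo_subset_Icc_self hx, Ioo_subset_Icc_self hy⟩
  · have hx' : ∀ᶠ q : ℝ × ℝ in 𝓝 (x, y), q.1 ∈ Icc (x₀ - w) (x₀ + w) :=
      continuousAt_fst.eventually (Icc_mem_nhds hx.1 hx.2)
    have hlower : ∀ᶠ q : ℝ × ℝ in 𝓝 (x, y), q.1 - δ < q.2 :=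
      ContinuousAt.eventually_lt (by fun_prop) (by fun_prop) hy.1
    have hupper : ∀ᶠ q : ℝ × ℝ in 𝓝 (x, y), q.2 < q.1 :=
      ContinuousAt.eventually_lt (by fun_prop) (by fun_prop) hy.2
    filter_upwards [hx', hlower, hupper] with q h1 h2 h3
    exact ⟨Ioc_subset_Icc_self ht, h1, h2.le, h3.le⟩

section DoublingBarrier

variable {t₀ x₀ τ w δ t x y : ℝ}

lemma doublingBarrier_nonneg (hτ : 0 < τ) (hδ : 0 < δ)
    (h : (t, x, y) ∈ doublingDomain t₀ x₀ τ w δ) : 0 ≤ doublingBarrier t₀ x₀ τ w δ t x y := by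
  obtain ⟨ht, -, hy⟩ := h
  have htime : 0 ≤ (t₀ - t) / τ := div_nonneg (sub_nonneg.2 ht.2) hτ.le
  have hgap : ((y - (x - δ)) / δ) ^ 2 ≤ 1 :=
    pow_le_one₀ (div_nonneg (sub_nonneg.2 hy.1) hδ.le) ((div_le_one hδ).2 (by linarith [hy.2]))
  have hspace : 0 ≤ ((x - x₀) / w) ^ 2 := sq_nonneg _
  rw [doublingBarrier]
  linarith

lemma one_le_doublingBarrier (hτ : 0 < τ) (hw : 0 < w) (hδ : 0 < δ)
    (h : (t, x, y) ∈ doublingDomain t₀ x₀ τ w δ)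
    (h' : (t, x, y) ∉ parabolicInterior (doublingDomain t₀ x₀ τ w δ)) (hne : y ≠ x) :
    1 ≤ doublingBarrier t₀ x₀ τ w δ t x y := by
  obtain ⟨ht, hx, hy⟩ := h
  have htime : 0 ≤ (t₀ - t) / τ := div_nonneg (sub_nonneg.2 ht.2) hτ.le
  have hspace : 0 ≤ ((x - x₀) / w) ^ 2 := sq_nonneg _
  have hgap : ((y - (x - δ)) / δ) ^ 2 ≤ 1 :=
    pow_le_one₀ (div_nonneg (sub_nonneg.2 hy.1) hδ.le) ((div_le_one hδ).2 (by linarith [hy.2]))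
  have hcases : t = t₀ - τ ∨ x - x₀ = -w ∨ x - x₀ = w ∨ y = x - δ := by
    by_contra! hcon
    refine h' (mem_parabolicInterior_doublingDomain.2 ⟨⟨lt_of_le_of_ne ht.1 hcon.1.symm, ht.2⟩,
      ⟨lt_of_le_of_ne hx.1 fun hxw => hcon.2.1 (by linarith),
        lt_of_le_of_ne hx.2 fun hxw => hcon.2.2.1 (by linarith)⟩,
      lt_of_le_of_ne hy.1 hcon.2.2.2.symm, lt_of_le_of_ne hy.2 hne⟩)
  rw [doublingBarrier]
  rcases hcases with rfl | hxw | hxw | rfl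
  · have hone : (t₀ - (t₀ - τ)) / τ = 1 := by field_simp; ring
    linarith
  · have hone : ((x - x₀) / w) ^ 2 = 1 := by rw [hxw]; field_simp
    linarith
  · have hone : ((x - x₀) / w) ^ 2 = 1 := by rw [hxw]; field_simp
    linarith
  · have hzero : ((x - δ - (x - δ)) / δ) ^ 2 = 0 := by simp
    linarith

lemma nonneg_of_isLocalMax_sub_doublingBarrier {u : ℝ → ℝ → ℝ} {M r r' : ℝ}
    (hx : HasHeatOperatorAt u r t x) (hy : HasHeatOperatorAt u r' t y)
    (htime : IsLocalMaxOn
      (fun s => u s x - u s y - M * doublingBarrier t₀ x₀ τ w δ s x y) (Iio t) t)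
    (hspace : IsLocalMax
      (fun q : ℝ × ℝ => u t q.1 - u t q.2 - M * doublingBarrier t₀ x₀ τ w δ t q.1 q.2) (x, y)) :
    0 ≤ r - r' + M * (1 / τ + 2 / w ^ 2 - 4 / δ ^ 2) := by
  obtain ⟨ut, uxx, hut, huxx, rfl⟩ := hx
  obtain ⟨ut', uyy, hut', huyy, rfl⟩ := hy
  simp only [doublingBarrier] at htime hspace
  have htime_nonneg : 0 ≤ ut - ut' - M * (-1 / τ) := by
    have hlin : HasDerivAt (fun s => (t₀ - s) / τ) (-1 / τ) t :=
      ((hasDerivAt_id' t).const_sub t₀).div_const τ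
    refine nonneg_of_hasDerivAt_of_isLocalMaxOn_Iio ((hut.sub hut').sub (hlin.const_mul M)) ?_
    filter_upwards [htime] with s hs
    simp only [Pi.sub_apply]
    linarith
  have hxx_nonpos : uxx - M * (2 / w ^ 2 - 2 / δ ^ 2) ≤ 0 := by
    refine (huxx.sub (((hasSecondDerivAt_sq_div x₀ w x).sub
      (hasSecondDerivAt_sq_div (y + δ) δ x)).const_mul M)).nonpos_of_isLocalMax ?_
    have hcont : ContinuousAt (fun x' => (x', y)) x := by fun_prop
    have hsq (x' : ℝ) : ((x' - (y + δ)) / δ) ^ 2 = ((y - (x' - δ)) / δ) ^ 2 := by ring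
    filter_upwards [hcont.eventually hspace] with x' hx'
    rw [hsq, hsq]
    linarith
  have hyy_nonpos : M * (2 / δ ^ 2) - uyy ≤ 0 := by
    refine (((hasSecondDerivAt_sq_div (x - δ) δ y).const_mul M).sub huyy).nonpos_of_isLocalMax ?_
    have hcont : ContinuousAt (fun y' => (x, y')) y := by fun_prop
    filter_upwards [hcont.eventually hspace] with y' hy'
    linarith
  calc 0 ≤ ut - ut' - M * (-1 / τ) - (uxx - M * (2 / w ^ 2 - 2 / δ ^ 2))
      - (M * (2 / δ ^ 2) - uyy) := by linarith
    _ = ut - uxx - (ut' - uyy) + M * (1 / τ + 2 / w ^ 2 - 4 / δ ^ 2) := by ring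

end DoublingBarrier

lemma continuousOn_sub_doublingBarrier {u : ℝ → ℝ → ℝ} {S : Set (ℝ × ℝ)}
    (hu : ContinuousOn (uncurry u) S) {D : Set (ℝ × (ℝ × ℝ))}
    (hD : ∀ p ∈ D, (p.1, p.2.1) ∈ S ∧ (p.1, p.2.2) ∈ S) (t₀ x₀ τ w δ M : ℝ) :
    ContinuousOn (uncurry fun t q =>
      u t q.1 - u t q.2 - M * doublingBarrier t₀ x₀ τ w δ t q.1 q.2) D := by
  have hx : ContinuousOn (fun p : ℝ × (ℝ × ℝ) => u p.1 p.2.1) D :=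
    hu.comp (f := fun p : ℝ × (ℝ × ℝ) => (p.1, p.2.1)) (by fun_prop) fun p hp => (hD p hp).1
  have hy : ContinuousOn (fun p : ℝ × (ℝ × ℝ) => u p.1 p.2.2) D :=
    hu.comp (f := fun p : ℝ × (ℝ × ℝ) => (p.1, p.2.2)) (by fun_prop) fun p hp => (hD p hp).2
  refine (hx.sub hy).sub ?_
  unfold doublingBarrier
  fun_prop

namespace IsNonnegSolution

variable {f V : ℝ → ℝ} {B T : ℝ} {u : ℝ → ℝ → ℝ}

lemma not_isLocalMax_sub_doublingBarrier (hu : IsNonnegSolution f V T u)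
    (hf_nonneg : ∀ z, 0 ≤ z → 0 ≤ f z) (hV : ∀ x ∈ Icc (-1) 1, V x ∈ Icc 0 B)
    {t₀ x₀ τ w δ M m : ℝ} (hM : 0 < M) (hbalance : 1 / τ + 2 / w ^ 2 + B * m < 4 / δ ^ 2)
    {t x y : ℝ} (ht : t ∈ Ioo 0 T) (hx : x ∈ Ioo (-1) 1) (hy : y ∈ Ioo (-1) 1)
    (hfm : f (u t x) ≤ m * M)
    (htime : IsLocalMaxOn
      (fun s => u s x - u s y - M * doublingBarrier t₀ x₀ τ w δ s x y) (Iio t) t) :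
    ¬ IsLocalMax
      (fun q : ℝ × ℝ => u t q.1 - u t q.2 - M * doublingBarrier t₀ x₀ τ w δ t q.1 q.2)
      (x, y) := by
  intro hspace
  have hu_nonneg {z : ℝ} (hz : z ∈ Ioo (-1) 1) : 0 ≤ u t z :=
    hu.nonneg t (Ioo_subset_Ico_self ht) z (Ioo_subset_Icc_self hz)
  have hVx := hV x (Ioo_subset_Icc_self hx)
  have hreaction_x : V x * f (u t x) ≤ B * (m * M) :=
    mul_le_mul hVx.2 hfm (hf_nonneg _ (hu_nonneg hx)) (hVx.1.trans hVx.2)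
  have hreaction_y : 0 ≤ V y * f (u t y) :=
    mul_nonneg (hV y (Ioo_subset_Icc_self hy)).1 (hf_nonneg _ (hu_nonneg hy))
  have hmax := nonneg_of_isLocalMax_sub_doublingBarrier (hu.hasHeatOperatorAt ht hx)
    (hu.hasHeatOperatorAt ht hy) htime hspace
  have hneg : M * (1 / τ + 2 / w ^ 2 + B * m - 4 / δ ^ 2) < 0 :=
    mul_neg_of_pos_of_neg hM (sub_neg.2 hbalance)
  linarith

theorem sub_le_mul_doublingBarrier (hu : IsNonnegSolution f V T u)
    (hf_nonneg : ∀ z, 0 ≤ z → 0 ≤ f z) (hV : ∀ x ∈ Icc (-1) 1, V x ∈ Icc 0 B)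
    {t₀ x₀ τ w δ M m : ℝ} (ht₀ : t₀ < T) (hτ : 0 < τ) (hτt₀ : τ ≤ t₀) (hw : 0 < w) (hδ : 0 < δ)
    (hx₀ : |x₀| + w + δ ≤ 1) (hM : 0 < M)
    (hle : ∀ t ∈ Icc 0 t₀, ∀ x ∈ Icc (-1) 1, u t x ≤ M) (hfm : ∀ z ∈ Icc 0 M, f z ≤ m * M)
    (hbalance : 1 / τ + 2 / w ^ 2 + B * m < 4 / δ ^ 2)
    {t x y : ℝ} (hmem : (t, x, y) ∈ doublingDomain t₀ x₀ τ w δ) :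
    u t x - u t y ≤ M * doublingBarrier t₀ x₀ τ w δ t x y := by
  set D := doublingDomain t₀ x₀ τ w δ
  have hD {t x y : ℝ} (h : (t, x, y) ∈ D) := mem_Icc_of_mem_doublingDomain hτt₀ hδ.le hx₀ h
  have hrange {t x : ℝ} (ht : t ∈ Icc 0 t₀) (hx : x ∈ Icc (-1) 1) : u t x ∈ Icc 0 M :=
    ⟨hu.nonneg t ⟨ht.1, ht.2.trans_lt ht₀⟩ x hx, hle t ht x hx⟩
  by_contra! hpos
  let v : ℝ → ℝ × ℝ → ℝ := fun t q =>
    u t q.1 - u t q.2 - M * doublingBarrier t₀ x₀ τ w δ t q.1 q.2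
  have hv : ContinuousOn (uncurry v) D :=
    continuousOn_sub_doublingBarrier (hu.continuousOn_slab le_rfl ht₀)
      (fun p hp => ⟨⟨(hD hp).1, (hD hp).2.1⟩, (hD hp).1, (hD hp).2.2⟩) _ _ _ _ _ _
  have hbdry (t : ℝ) (q : ℝ × ℝ) (h : (t, q) ∈ D) (h' : (t, q) ∉ parabolicInterior D) :
      v t q ≤ 0 := by
    obtain ⟨x, y⟩ := q
    obtain ⟨ht, hx, hy⟩ := hD h
    rw [sub_nonpos]
    obtain rfl | hne := eq_or_ne y x
    · simpa only [sub_self] using mul_nonneg hM.le (doublingBarrier_nonneg hτ hδ h)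
    · calc u t x - u t y ≤ M := by linarith [(hrange ht hx).2, (hrange ht hy).1]
        _ ≤ M * doublingBarrier t₀ x₀ τ w δ t x y :=
          le_mul_of_one_le_right hM.le (one_le_doublingBarrier hτ hw hδ h h' hne)
  obtain ⟨s, ⟨ξ, η⟩, hint, -, htime, hspace⟩ := exists_localMax_mem_parabolicInterior
    (isCompact_doublingDomain t₀ x₀ τ w δ) hv hbdry hmem (sub_pos.2 hpos)
  obtain ⟨hs, hξ, hη⟩ := mem_parabolicInterior_doublingDomain.1 hint
  have habs := abs_le.1 (show |x₀| ≤ 1 - w - δ by linarith)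
  exact hu.not_isLocalMax_sub_doublingBarrier hf_nonneg hV hM hbalance
    ⟨by linarith [hs.1], hs.2.trans_lt ht₀⟩ ⟨by linarith [hξ.1], by linarith [hξ.2]⟩
    ⟨by linarith [hη.1, hξ.1], by linarith [hη.2, hξ.2]⟩
    (hfm _ (hrange (hD hint.1).1 (hD hint.1).2.1)) htime hspace

theorem mul_sq_le_of_isMaxOn (hu : IsNonnegSolution f V T u) (hf_nonneg : ∀ z, 0 ≤ z → 0 ≤ f z)
    (hV : ∀ x ∈ Icc (-1) 1, V x ∈ Icc 0 B) {t₀ x₀ τ w δ m : ℝ}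
    (ht₀ : t₀ < T) (hτ : 0 < τ) (hτt₀ : τ ≤ t₀) (hw : 0 < w) (hδ : 0 < δ)
    (hx₀ : |x₀| + w + δ ≤ 1) (hM : 0 < u t₀ x₀)
    (hmax : IsMaxOn (uncurry u) (Icc 0 t₀ ×ˢ Icc (-1) 1) (t₀, x₀))
    (hfm : ∀ z ∈ Icc 0 (u t₀ x₀), f z ≤ m * u t₀ x₀)
    (hbalance : 1 / τ + 2 / w ^ 2 + B * m < 4 / δ ^ 2) {y : ℝ} (hy : y ∈ Icc (x₀ - δ) x₀) :
    u t₀ x₀ * ((y - (x₀ - δ)) / δ) ^ 2 ≤ u t₀ y := by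
  have hmem : (t₀, x₀, y) ∈ doublingDomain t₀ x₀ τ w δ :=
    ⟨⟨by linarith, le_rfl⟩, ⟨by linarith, by linarith⟩, hy⟩
  have hdoubling := hu.sub_le_mul_doublingBarrier hf_nonneg hV ht₀ hτ hτt₀ hw hδ hx₀ hM
    (fun t ht x hx => hmax (mk_mem_prod ht hx)) hfm hbalance hmem
  have hbarrier : doublingBarrier t₀ x₀ τ w δ t₀ x₀ y = 1 - ((y - (x₀ - δ)) / δ) ^ 2 := by
    simp only [doublingBarrier, sub_self, zero_div, zero_add, zero_pow two_ne_zero]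
  rw [hbarrier] at hdoubling
  linarith

end IsNonnegSolution

/-! ### Moving Dirichlet modes -/

/-- The region swept between times `t₀` and `t₁` by an interval of radius `ρ` whose centre starts
at `c` and moves with velocity `q`. -/
def movingWindow (t₀ t₁ c q ρ : ℝ) : Set (ℝ × ℝ) :=
  {p | p.1 ∈ Icc t₀ t₁ ∧ p.2 ∈ Icc (c + q * (p.1 - t₀) - ρ) (c + q * (p.1 - t₀) + ρ)}

lemma isCompact_movingWindow (t₀ t₁ c q ρ : ℝ) : IsCompact (movingWindow t₀ t₁ c q ρ) := by
  have himage : movingWindow t₀ t₁ c q ρ =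
      (fun p : ℝ × ℝ => (p.1, c + q * (p.1 - t₀) + p.2)) '' (Icc t₀ t₁ ×ˢ Icc (-ρ) ρ) := by
    ext ⟨t, x⟩
    refine ⟨fun ⟨ht, hx⟩ => ⟨(t, x - (c + q * (t - t₀))), ⟨ht, ?_, ?_⟩, ?_⟩, ?_⟩
    · linarith [hx.1]
    · linarith [hx.2]
    · simp only [add_sub_cancel]
    · rintro ⟨⟨s, z⟩, ⟨hs, hz⟩, heq⟩
      obtain ⟨rfl, rfl⟩ := Prod.mk_inj.1 heq
      exact ⟨hs, by linarith [hz.1], by linarith [hz.2]⟩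
  rw [himage]
  exact (isCompact_Icc.prod isCompact_Icc).image (by fun_prop)

lemma mem_parabolicInterior_movingWindow {t₀ t₁ c q ρ t x : ℝ} :
    (t, x) ∈ parabolicInterior (movingWindow t₀ t₁ c q ρ) ↔
      t ∈ Ioc t₀ t₁ ∧ x ∈ Ioo (c + q * (t - t₀) - ρ) (c + q * (t - t₀) + ρ) := by
  refine ⟨fun ⟨⟨ht, _⟩, hleft, hspace⟩ => ⟨⟨?_, ht.2⟩, ?_⟩, fun ⟨ht, hx⟩ =>
    ⟨⟨Ioc_subset_Icc_self ht, Ioo_subset_Icc_self hx⟩, ?_, ?_⟩⟩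
  · obtain ⟨s, ⟨hs, _⟩, hst⟩ := (hleft.and self_mem_nhdsWithin).exists
    exact hs.1.trans_lt hst
  · exact Icc_mem_nhds_iff.1 (hspace.mono fun y hy => hy.2)
  · have hlower : ∀ᶠ s in 𝓝 t, c + q * (s - t₀) - ρ < x :=
      ContinuousAt.eventually_lt (by fun_prop) (by fun_prop) hx.1
    have hupper : ∀ᶠ s in 𝓝 t, x < c + q * (s - t₀) + ρ :=
      ContinuousAt.eventually_lt (by fun_prop) (by fun_prop) hx.2
    filter_upwards [Icc_mem_nhdsLT_of_mem ht, hlower.filter_mono nhdsWithin_le_nhds,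
      hupper.filter_mono nhdsWithin_le_nhds] with s hs h1 h2
    exact ⟨hs, h1.le, h2.le⟩
  · filter_upwards [Icc_mem_nhds hx.1 hx.2] with y hy using ⟨Ioc_subset_Icc_self ht, hy⟩

lemma eq_or_abs_sub_eq_of_notMem_parabolicInterior_movingWindow {t₀ t₁ c q ρ t x : ℝ}
    (h : (t, x) ∈ movingWindow t₀ t₁ c q ρ)
    (h' : (t, x) ∉ parabolicInterior (movingWindow t₀ t₁ c q ρ)) :
    t = t₀ ∨ |x - (c + q * (t - t₀))| = ρ := by
  obtain ⟨ht, hx⟩ := h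
  by_contra! hcon
  have habs : |x - (c + q * (t - t₀))| < ρ :=
    lt_of_le_of_ne (abs_le.2 ⟨by linarith [hx.1], by linarith [hx.2]⟩) hcon.2
  exact h' (mem_parabolicInterior_movingWindow.2 ⟨⟨lt_of_le_of_ne ht.1 hcon.1.symm, ht.2⟩,
    by linarith [(abs_lt.1 habs).1], by linarith [(abs_lt.1 habs).2]⟩)

/-- The solution of the heat equation which, for `ω = π / (2ρ)`, is the first Dirichlet mode of the
moving window: it vanishes on the lateral boundary and is positive inside. -/
noncomputable def movingMode (t₀ c q ω t x : ℝ) : ℝ :=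
  Real.exp (-(q / 2) * (x - c) + ((q / 2) ^ 2 - ω ^ 2) * (t - t₀)) *
    Real.cos (ω * (x - (c + q * (t - t₀))))

-- `movingMode` is the real part of the complex exponential `exp (k (x - c) + k ^ 2 (t - t₀))`.
lemma hasHeatOperatorAt_movingMode (t₀ c q ω t x : ℝ) :
    HasHeatOperatorAt (movingMode t₀ c q ω) 0 t x := by
  let k : ℂ := ⟨-(q / 2), ω⟩
  let E : ℂ → ℂ → ℂ := fun s z => Complex.exp (k * (z - c) + k ^ 2 * (s - t₀))
  have hmode : movingMode t₀ c q ω = fun s z : ℝ => (E s z).re := by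
    ext s z
    have hre : (k * (z - c) + k ^ 2 * (s - t₀)).re =
        -(q / 2) * (z - c) + ((q / 2) ^ 2 - ω ^ 2) * (s - t₀) := by
      simp [k, pow_two]
    have him : (k * (z - c) + k ^ 2 * (s - t₀)).im = ω * (z - (c + q * (s - t₀))) := by
      simp [k, pow_two]
      ring
    simp only [E, Complex.exp_re, hre, him, movingMode]
  have htime (s z : ℂ) : HasDerivAt (fun s => E s z) (k ^ 2 * E s z) s :=
    ((((hasDerivAt_id' s).sub_const (t₀ : ℂ)).const_mul (k ^ 2)).const_add
      (k * (z - c))).cexp.congr_deriv (by simp only [E]; ring)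
  have hspace (s z : ℂ) : HasDerivAt (E s) (k * E s z) z :=
    ((((hasDerivAt_id' z).sub_const (c : ℂ)).const_mul k).add_const
      (k ^ 2 * (s - t₀))).cexp.congr_deriv (by simp only [E]; ring)
  have hspace2 : HasDerivAt (fun z => k * E t z) (k ^ 2 * E t x) x := by
    simpa only [pow_two, mul_assoc] using (hspace t x).const_mul k
  rw [hmode]
  exact ⟨_, _, (htime t x).real_of_complex, ⟨fun z : ℝ => (k * E t z).re,
    .of_forall fun z => (hspace t z).real_of_complex, hspace2.real_of_complex⟩, sub_self _⟩

lemma movingMode_self_le {t₀ c q ω ρ x : ℝ} (hx : x ∈ Icc (c - ρ) (c + ρ)) :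
    movingMode t₀ c q ω t₀ x ≤ Real.exp (|q| / 2 * ρ) := by
  have habs : |x - c| ≤ ρ := abs_le.2 ⟨by linarith [hx.1], by linarith [hx.2]⟩
  have hexponent : -(q / 2) * (x - c) + ((q / 2) ^ 2 - ω ^ 2) * (t₀ - t₀) ≤ |q| / 2 * ρ :=
    calc -(q / 2) * (x - c) + ((q / 2) ^ 2 - ω ^ 2) * (t₀ - t₀) = -(q / 2) * (x - c) := by ring
      _ ≤ |-(q / 2) * (x - c)| := le_abs_self _
      _ = |q| / 2 * |x - c| := by rw [abs_mul, abs_neg, abs_div, abs_two]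
      _ ≤ |q| / 2 * ρ := by gcongr
  exact (mul_le_of_le_one_right (Real.exp_pos _).le (Real.cos_le_one _)).trans
    (Real.exp_le_exp.2 hexponent)

lemma movingMode_center (t₀ c q ω t : ℝ) :
    movingMode t₀ c q ω t (c + q * (t - t₀)) =
      Real.exp (-((ω ^ 2 + (q / 2) ^ 2) * (t - t₀))) := by
  rw [movingMode, sub_self, mul_zero, Real.cos_zero, mul_one]
  ring_nf

lemma movingMode_eq_zero {t₀ c q ρ t x : ℝ} (hρ : 0 < ρ)
    (hx : |x - (c + q * (t - t₀))| = ρ) : movingMode t₀ c q (Real.pi / (2 * ρ)) t x = 0 := by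
  have hcos : Real.cos (Real.pi / (2 * ρ) * (x - (c + q * (t - t₀)))) = 0 := by
    rw [← Real.cos_abs, abs_mul, hx, abs_of_pos (by positivity),
      show Real.pi / (2 * ρ) * ρ = Real.pi / 2 by field_simp, Real.cos_pi_div_two]
  rw [movingMode, hcos, mul_zero]

theorem mul_exp_le_of_heatOperator_nonneg {u : ℝ → ℝ → ℝ} {t₀ t₁ c q ρ A : ℝ} (ht : t₀ ≤ t₁)
    (hρ : 0 < ρ) (hA : 0 ≤ A) (hu : ContinuousOn (uncurry u) (movingWindow t₀ t₁ c q ρ))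
    (hu_nonneg : ∀ t x, (t, x) ∈ movingWindow t₀ t₁ c q ρ → 0 ≤ u t x)
    (hinit : ∀ x ∈ Icc (c - ρ) (c + ρ), A ≤ u t₀ x)
    (hheat : ∀ t x, (t, x) ∈ parabolicInterior (movingWindow t₀ t₁ c q ρ) →
      ∃ r ≥ 0, HasHeatOperatorAt u r t x) :
    A * Real.exp (-(|q| / 2 * ρ)) *
        Real.exp (-(((Real.pi / (2 * ρ)) ^ 2 + (q / 2) ^ 2) * (t₁ - t₀))) ≤
      u t₁ (c + q * (t₁ - t₀)) := by
  set C := A * Real.exp (-(|q| / 2 * ρ))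
  have hC : 0 ≤ C := mul_nonneg hA (Real.exp_pos _).le
  set mode := movingMode t₀ c q (Real.pi / (2 * ρ))
  have hcont : ContinuousOn (uncurry fun t x => C * mode t x - u t x)
      (movingWindow t₀ t₁ c q ρ) := by
    refine ContinuousOn.sub (Continuous.continuousOn ?_) hu
    simp only [mode, movingMode]
    fun_prop
  have hmem : (t₁, c + q * (t₁ - t₀)) ∈ movingWindow t₀ t₁ c q ρ :=
    ⟨⟨ht, le_rfl⟩, by linarith, by linarith⟩
  rw [← movingMode_center, ← sub_nonpos]
  refine nonpos_of_heatOperator_le (isCompact_movingWindow t₀ t₁ c q ρ) hcont 0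
    (fun t x h h' => ?_) (fun t x h _ => ?_) hmem
  · rw [sub_nonpos]
    obtain rfl | hlateral := eq_or_abs_sub_eq_of_notMem_parabolicInterior_movingWindow h h'
    · have hx : x ∈ Icc (c - ρ) (c + ρ) := by simpa using h.2
      calc C * mode t x ≤ C * Real.exp (|q| / 2 * ρ) :=
            mul_le_mul_of_nonneg_left (movingMode_self_le hx) hC
        _ = A := by rw [mul_assoc, ← Real.exp_add, neg_add_cancel, Real.exp_zero, mul_one]
        _ ≤ u t x := hinit x hx
    · rw [show mode t x = 0 from movingMode_eq_zero hρ hlateral, mul_zero]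
      exact hu_nonneg t x h
  · obtain ⟨r, hr, hur⟩ := hheat t x h
    exact ⟨C * 0 - r, by linarith,
      ((hasHeatOperatorAt_movingMode _ _ _ _ t x).const_mul C).sub hur⟩

namespace IsNonnegSolution

variable {f V : ℝ → ℝ} {T : ℝ} {u : ℝ → ℝ → ℝ}

theorem mul_exp_le_of_movingWindow (hu : IsNonnegSolution f V T u)
    (hf_nonneg : ∀ z, 0 ≤ z → 0 ≤ f z) (hV_nonneg : ∀ x ∈ Icc (-1) 1, 0 ≤ V x)
    {t₀ t₁ c q ρ A : ℝ} (ht₀ : 0 ≤ t₀) (ht₁ : t₁ ∈ Ico t₀ T) (hρ : 0 < ρ) (hA : 0 ≤ A)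
    (hwindow : ∀ t ∈ Icc t₀ t₁, |c + q * (t - t₀)| + ρ ≤ 1)
    (hinit : ∀ x ∈ Icc (c - ρ) (c + ρ), A ≤ u t₀ x) :
    A * Real.exp (-(|q| / 2 * ρ)) *
        Real.exp (-(((Real.pi / (2 * ρ)) ^ 2 + (q / 2) ^ 2) * (t₁ - t₀))) ≤
      u t₁ (c + q * (t₁ - t₀)) := by
  have hcenter {t : ℝ} (ht : t ∈ Icc t₀ t₁) :=
    abs_le.1 (show |c + q * (t - t₀)| ≤ 1 - ρ by linarith [hwindow t ht])
  have hsub : movingWindow t₀ t₁ c q ρ ⊆ Ico 0 T ×ˢ Icc (-1) 1 := fun p ⟨ht, hx⟩ =>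
    ⟨⟨ht₀.trans ht.1, ht.2.trans_lt ht₁.2⟩, by linarith [(hcenter ht).1, hx.1],
      by linarith [(hcenter ht).2, hx.2]⟩
  refine mul_exp_le_of_heatOperator_nonneg ht₁.1 hρ hA (hu.continuousOn.mono hsub)
    (fun t x h => hu.nonneg t (hsub h).1 x (hsub h).2) hinit fun t x h => ?_
  obtain ⟨ht, hx⟩ := mem_parabolicInterior_movingWindow.1 h
  have hcenter_t := hcenter (Ioc_subset_Icc_self ht)
  have hx' : x ∈ Ioo (-1) 1 := ⟨by linarith [hx.1], by linarith [hx.2]⟩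
  refine ⟨_, ?_, hu.hasHeatOperatorAt ⟨ht₀.trans_lt ht.1, ht.2.trans_lt ht₁.2⟩ hx'⟩
  exact mul_nonneg (hV_nonneg x (Ioo_subset_Icc_self hx'))
    (hf_nonneg _ (hu.nonneg t (hsub h.1).1 x (hsub h.1).2))

theorem mul_exp_le_of_forall_abs_sub_le (hu : IsNonnegSolution f V T u)
    (hf_nonneg : ∀ z, 0 ≤ z → 0 ≤ f z) (hV_nonneg : ∀ x ∈ Icc (-1) 1, 0 ≤ V x)
    {t₀ s c y ρ A : ℝ} (ht₀ : 0 ≤ t₀) (hs : 0 < s) (hsT : t₀ + s < T) (hρ : 0 < ρ) (hA : 0 ≤ A)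
    (hc : |c| + ρ ≤ 1) (hy : |y| + ρ ≤ 1) (hinit : ∀ x ∈ Icc (c - ρ) (c + ρ), A ≤ u t₀ x) :
    A * Real.exp (-(2 / s + (Real.pi / (2 * ρ)) ^ 2 * s)) ≤ u (t₀ + s) y := by
  set q := (y - c) / s with hq
  have hwindow (t : ℝ) (ht : t ∈ Icc t₀ (t₀ + s)) : |c + q * (t - t₀)| + ρ ≤ 1 := by
    have hθ : (t - t₀) / s ∈ Icc 0 1 :=
      ⟨div_nonneg (sub_nonneg.2 ht.1) hs.le, (div_le_one hs).2 (by linarith [ht.2])⟩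
    have hconv := (convex_closedBall (0 : ℝ) (1 - ρ)).add_smul_sub_mem
      (x := c) (y := y) (by simpa using by linarith) (by simpa using by linarith) hθ
    rw [mem_closedBall_zero_iff, Real.norm_eq_abs, smul_eq_mul,
      show (t - t₀) / s * (y - c) = q * (t - t₀) by rw [hq]; ring] at hconv
    linarith
  have htransport := hu.mul_exp_le_of_movingWindow hf_nonneg hV_nonneg ht₀ ⟨by linarith, hsT⟩ hρ hA
    hwindow hinit
  have hq_half : |q / 2| ≤ 1 / s := by
    have hyc : |y - c| / 2 ≤ 1 := by linarith [abs_sub y c]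
    calc |q / 2| = |y - c| / 2 / s := by rw [hq, abs_div, abs_div, abs_two, abs_of_pos hs]; ring
      _ ≤ 1 / s := by gcongr
  have hq_abs : |q| / 2 ≤ 1 / s := by rwa [abs_div, abs_two] at hq_half
  have hq_sq : (q / 2) ^ 2 * s ≤ 1 / s :=
    calc (q / 2) ^ 2 * s = |q / 2| ^ 2 * s := by rw [sq_abs]
      _ ≤ (1 / s) ^ 2 * s := by gcongr
      _ = 1 / s := by field_simp
  have hexponent : |q| / 2 * ρ + ((Real.pi / (2 * ρ)) ^ 2 + (q / 2) ^ 2) * s ≤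
      2 / s + (Real.pi / (2 * ρ)) ^ 2 * s := by
    have hρ1 : ρ ≤ 1 := by linarith [abs_nonneg c]
    have hdrift : |q| / 2 * ρ ≤ 1 / s := (mul_le_of_le_one_right (by positivity) hρ1).trans hq_abs
    rw [add_mul, show 2 / s = 1 / s + 1 / s by ring]
    linarith
  have hend : c + q * (t₀ + s - t₀) = y := by
    rw [hq]
    field_simp
    ring
  rw [hend, add_sub_cancel_left, mul_assoc, ← Real.exp_add, ← neg_add] at htransport
  exact (mul_le_mul_of_nonneg_left (Real.exp_le_exp.2 (neg_le_neg hexponent)) hA).trans htransport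

lemma exists_isMaxOn_of_blowsUpAt (hu : IsNonnegSolution f V T u) (hT : 0 < T)
    (hblow : BlowsUpAt u T) {R : ℝ}
    (hcentral : ∀ t ∈ Ico 0 T, ∀ x ∈ Icc (-1) 1, ∃ y, |y| ≤ R ∧ u t x ≤ u t y) (N : ℝ) :
    ∃ t₀ ∈ Ioo (T / 2) T, ∃ x₀, |x₀| ≤ R ∧ N < u t₀ x₀ ∧
      IsMaxOn (uncurry u) (Icc 0 t₀ ×ˢ Icc (-1) 1) (t₀, x₀) := by
  have hcompact (t : ℝ) : IsCompact (Icc 0 t ×ˢ Icc (-1 : ℝ) 1) := isCompact_Icc.prod isCompact_Icc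
  obtain ⟨N₁, hN₁⟩ := (hcompact (T / 2)).bddAbove_image
    (hu.continuousOn_slab le_rfl (half_lt_self hT))
  obtain ⟨t₁, ht₁, ht₁T, x₁, hx₁, hbig⟩ := hblow (max N N₁) (T / 2) (half_pos hT)
  have hmem₁ : (t₁, x₁) ∈ Icc 0 t₁ ×ˢ Icc (-1 : ℝ) 1 := ⟨⟨by linarith, le_rfl⟩, hx₁⟩
  obtain ⟨⟨t₂, x₂⟩, ⟨ht₂, hx₂⟩, hmax⟩ := (hcompact t₁).exists_isMaxOn ⟨_, hmem₁⟩
    (hu.continuousOn_slab le_rfl ht₁T)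
  have hbig₂ : max N N₁ < u t₂ x₂ := hbig.trans_le (hmax hmem₁)
  have ht₂T : t₂ < T := ht₂.2.trans_lt ht₁T
  have ht₂_late : T / 2 < t₂ := by
    by_contra! hearly
    have hmem₂ : (t₂, x₂) ∈ Icc 0 (T / 2) ×ˢ Icc (-1 : ℝ) 1 := ⟨⟨ht₂.1, hearly⟩, hx₂⟩
    have hle : u t₂ x₂ ≤ N₁ := hN₁ (mem_image_of_mem (uncurry u) hmem₂)
    exact (hbig₂.trans_le hle).not_ge (le_max_right _ _)
  obtain ⟨x₀, hx₀, hle⟩ := hcentral t₂ ⟨ht₂.1, ht₂T⟩ x₂ hx₂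
  refine ⟨t₂, ⟨ht₂_late, ht₂T⟩, x₀, hx₀, ((le_max_left _ _).trans_lt hbig₂).trans_le hle, ?_⟩
  exact fun p hp => (hmax (mk_mem_prod ⟨hp.1.1, hp.1.2.trans ht₂.2⟩ hp.2)).trans hle

end IsNonnegSolution

/-! ### Global blowup -/

lemma isLittleO_rpow_rpow_atTop {p q : ℝ} (hpq : p < q) :
    (fun x : ℝ => x ^ p) =o[atTop] fun x : ℝ => x ^ q := by
  refine (Asymptotics.isLittleO_iff_tendsto' ?_).2
    ((tendsto_rpow_neg_atTop (sub_pos.2 hpq)).congr' ?_)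
  · filter_upwards [eventually_gt_atTop 0] with x hx h
    exact absurd h (Real.rpow_pos_of_pos hx q).ne'
  · filter_upwards [eventually_gt_atTop 0] with x hx
    rw [neg_sub, Real.rpow_sub hx]

lemma tendsto_mul_sub_mul_div_atTop {g : ℝ → ℝ} (hg : g =o[atTop] fun L : ℝ => L ^ 2) {κ : ℝ}
    (hκ : 0 < κ) (Q : ℝ) : Tendsto (fun L => κ * L - Q * (g (2 * L) / L)) atTop atTop := by
  have hdouble : Tendsto (fun L : ℝ => 2 * L) atTop atTop := tendsto_id.const_mul_atTop two_pos
  have hsq : (fun L => g (2 * L)) =o[atTop] fun L : ℝ => L * L := by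
    have hcomp := hg.comp_tendsto hdouble
    simp only [Function.comp_def, mul_pow] at hcomp
    simpa only [sq] using hcomp.of_const_mul_right
  have hlinear : (fun L => g (2 * L) / L) =o[atTop] fun L : ℝ => L := by
    refine (hsq.mul_isBigO (Asymptotics.isBigO_refl (fun L : ℝ => L⁻¹) atTop)).congr' ?_ ?_
    · exact .of_forall fun L => (div_eq_mul_inv _ _).symm
    · filter_upwards [eventually_ne_atTop 0] with L hL using mul_inv_cancel_right₀ hL L
  have hlittle : (fun L => Q * (g (2 * L) / L)) =o[atTop] fun L : ℝ => L :=
    hlinear.const_mul_left Q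
  refine tendsto_atTop_mono' _ ?_ (tendsto_id.const_mul_atTop (half_pos hκ))
  filter_upwards [hlittle.bound (half_pos hκ), eventually_ge_atTop 0] with L hbound hL
  rw [Real.norm_eq_abs, Real.norm_of_nonneg hL] at hbound
  simp only [id_eq]
  linarith [(abs_le.1 hbound).2]

lemma div_add_mul_le {C k K L s : ℝ} (hC : 0 ≤ C) (hkK : k ≤ K) (hK : 0 ≤ K) (hL : 0 < L)
    (hs : s = L / (L + 160 * K)) :
    2 / s + 40 * (C + k) * s ≤ L / 4 + 320 * (K / L) + (40 * C + 2) := by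
  have hs0 : 0 ≤ s := by rw [hs]; positivity
  have hs1 : s ≤ 1 := by
    rw [hs]
    exact div_le_one_of_le₀ (by linarith) (by positivity)
  have hks : k * s ≤ L / 160 :=
    calc k * s ≤ K * s := by gcongr
      _ = K / (L + 160 * K) * L := by rw [hs]; ring
      _ ≤ 1 / 160 * L := by
        have hratio : K / (L + 160 * K) ≤ 1 / 160 := by
          rw [div_le_div_iff₀ (by positivity) (by norm_num)]
          linarith
        gcongr
      _ = L / 160 := by ring
  have hinv : 2 / s = 2 + 320 * (K / L) := by
    rw [hs]
    field_simp
    ring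
  have hCs : C * s ≤ C := mul_le_of_le_one_right hC hs1
  linarith

namespace IsNonnegSolution

variable {f V : ℝ → ℝ} {B T : ℝ} {u : ℝ → ℝ → ℝ}

lemma half_le_of_isMaxOn (hu : IsNonnegSolution f V T u) (hf_nonneg : ∀ z, 0 ≤ z → 0 ≤ f z)
    (hV : ∀ x ∈ Icc (-1) 1, V x ∈ Icc 0 B) {t₀ x₀ d δ m : ℝ} (hT : 0 < T)
    (ht₀ : t₀ ∈ Ioo (T / 2) T) (hδ : 0 < δ) (hδd : δ ≤ d) (hx₀ : |x₀| + 2 * d ≤ 1)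
    (hM : 0 < u t₀ x₀) (hmax : IsMaxOn (uncurry u) (Icc 0 t₀ ×ˢ Icc (-1) 1) (t₀, x₀))
    (hfm : ∀ z ∈ Icc 0 (u t₀ x₀), f z ≤ m * u t₀ x₀)
    (hδ_small : 2 / T + 4 / d ^ 2 + B * m ≤ 4 / δ ^ 2) {x : ℝ} (hx : x ∈ Icc (x₀ - δ / 4) x₀) :
    u t₀ x₀ / 2 ≤ u t₀ x := by
  have hd : 0 < d := hδ.trans_le hδd
  have hbalance : 1 / (T / 2) + 2 / d ^ 2 + B * m < 4 / δ ^ 2 := by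
    have : 2 / d ^ 2 < 4 / d ^ 2 := by gcongr; norm_num
    rw [one_div_div]
    linarith
  have hpeak := hu.mul_sq_le_of_isMaxOn hf_nonneg hV ht₀.2 (half_pos hT) ht₀.1.le hd hδ
    (by linarith) hM hmax hfm hbalance (y := x) ⟨by linarith [hx.1], hx.2⟩
  have hratio : 3 / 4 ≤ (x - (x₀ - δ)) / δ := by
    rw [le_div_iff₀ hδ]
    linarith [hx.1]
  calc u t₀ x₀ / 2 ≤ u t₀ x₀ * (3 / 4) ^ 2 := by linarith
    _ ≤ u t₀ x₀ * ((x - (x₀ - δ)) / δ) ^ 2 := by gcongr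
    _ ≤ u t₀ x := hpeak

theorem half_mul_exp_le_of_isMaxOn (hu : IsNonnegSolution f V T u)
    (hf_nonneg : ∀ z, 0 ≤ z → 0 ≤ f z) (hV : ∀ x ∈ Icc (-1) 1, V x ∈ Icc 0 B)
    {t₀ x₀ d m s y : ℝ} (hT : 0 < T) (ht₀ : t₀ ∈ Ioo (T / 2) T) (hs : 0 < s) (hsT : t₀ + s < T)
    (hd : 0 < d) (hx₀ : |x₀| + 2 * d ≤ 1) (hy : |y| + d ≤ 1) (hM : 0 < u t₀ x₀)
    (hmax : IsMaxOn (uncurry u) (Icc 0 t₀ ×ˢ Icc (-1) 1) (t₀, x₀)) (hm : 0 ≤ m)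
    (hfm : ∀ z ∈ Icc 0 (u t₀ x₀), f z ≤ m * u t₀ x₀) :
    u t₀ x₀ / 2 * Real.exp (-(2 / s + 40 * (2 / T + 4 / d ^ 2 + B * m) * s)) ≤ u (t₀ + s) y := by
  have hB : 0 ≤ B := (hV 0 (by norm_num)).1.trans (hV 0 (by norm_num)).2
  set P := 2 / T + 4 / d ^ 2 + B * m with hP_def
  have hP : 0 < P := by positivity
  obtain ⟨δ, hδ, hδP⟩ : ∃ δ > 0, 4 / δ ^ 2 = P :=
    ⟨2 / √P, by positivity, by rw [div_pow, Real.sq_sqrt hP.le]; field_simp; norm_num⟩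
  have hδd : δ ≤ d := by
    have hle : 4 / d ^ 2 ≤ 4 / δ ^ 2 := by
      rw [hδP, hP_def, add_right_comm]
      exact le_add_of_nonneg_left (by positivity)
    rwa [div_le_div_iff_of_pos_left four_pos (by positivity) (by positivity),
      pow_le_pow_iff_left₀ hδ.le hd.le two_ne_zero] at hle
  have hplateau (x : ℝ) (hx : x ∈ Icc (x₀ - δ / 8 - δ / 8) (x₀ - δ / 8 + δ / 8)) :
      u t₀ x₀ / 2 ≤ u t₀ x :=
    hu.half_le_of_isMaxOn hf_nonneg hV hT ht₀ hδ hδd hx₀ hM hmax hfm hδP.ge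
      ⟨by linarith [hx.1], by linarith [hx.2]⟩
  have hcenter : |x₀ - δ / 8| + δ / 8 ≤ 1 := by
    linarith [abs_sub x₀ (δ / 8), abs_of_pos (show 0 < δ / 8 by positivity)]
  have hspread := hu.mul_exp_le_of_forall_abs_sub_le hf_nonneg (fun x hx => (hV x hx).1)
    (by linarith [ht₀.1]) hs hsT (by positivity) (half_pos hM).le hcenter
    (show |y| + δ / 8 ≤ 1 by linarith) hplateau
  have hpi : (Real.pi / (2 * (δ / 8))) ^ 2 ≤ 40 * P := by
    have hpi_sq : Real.pi ^ 2 ≤ 10 := by nlinarith [Real.pi_lt_d2, Real.pi_pos]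
    calc (Real.pi / (2 * (δ / 8))) ^ 2 = 4 * Real.pi ^ 2 * (4 / δ ^ 2) := by field_simp; norm_num
      _ ≤ 4 * 10 * (4 / δ ^ 2) := by gcongr
      _ = 40 * P := by rw [hδP]; norm_num
  exact le_trans (by gcongr) hspread

section LogNonlinearity

variable {g : ℝ → ℝ} (hu : IsNonnegSolution (logNonlinearity g) V T u)
  (hf : LocallyLipschitzOn (Ici 0) (logNonlinearity g))
  (hg : MonotoneOn g (Ici 0)) (hg0 : 0 ≤ g 0) (hV : ∀ x ∈ Icc (-1) 1, V x ∈ Icc 0 B)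
  (hT : 0 < T) (hblow : BlowsUpAt u T)
include hu hf hg hg0 hV hT hblow

lemma exists_exp_le_of_isMaxOn {t₀ x₀ d : ℝ} (ht₀ : t₀ ∈ Ioo (T / 2) T) (hd : 0 < d)
    (hx₀ : |x₀| + 2 * d ≤ 1) (hM : 1 ≤ u t₀ x₀)
    (hmax : IsMaxOn (uncurry u) (Icc 0 t₀ ×ˢ Icc (-1) 1) (t₀, x₀)) {L : ℝ}
    (hL : L = Real.log (1 + u t₀ x₀)) :
    ∃ t₁ ∈ Ioo 0 T, ∀ y, |y| + d ≤ 1 →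
      Real.exp (3 / 4 * L - 320 * B * (g (2 * L) / L) - (40 * (2 / T + 4 / d ^ 2) + 2)) / 4 ≤
        u t₁ y := by
  have hL0 : 0 < L := hL ▸ Real.log_pos (by linarith)
  have hexpL : Real.exp L = 1 + u t₀ x₀ := by rw [hL, Real.exp_log (by linarith)]
  have hB : 0 ≤ B := (hV 0 (by norm_num)).1.trans (hV 0 (by norm_num)).2
  have hgL : 0 ≤ g L := hg0.trans (hg self_mem_Ici hL0.le hL0.le)
  have hgL2 : g L ≤ g (2 * L) := hg hL0.le (mem_Ici.2 (by positivity)) (by linarith)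
  set C := 2 / T + 4 / d ^ 2
  set K := B * g (2 * L)
  have hK : 0 ≤ K := mul_nonneg hB (hgL.trans hgL2)
  have hlifespan : L < K * (T - t₀) := by
    refine hu.lt_mul_of_blowsUpAt hf hg hg0 hV hblow hL0.le ⟨by linarith [ht₀.1], ht₀.2⟩ ?_
    intro x hx
    rw [hexpL, add_sub_cancel_left]
    exact hmax (mk_mem_prod ⟨by linarith [ht₀.1], le_rfl⟩ hx)
  obtain ⟨s, hs⟩ : ∃ s, s = L / (L + 160 * K) := ⟨_, rfl⟩
  have hs0 : 0 < s := by rw [hs]; positivity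
  have hsT : t₀ + s < T := by
    have : s < T - t₀ := by
      rw [hs, div_lt_iff₀ (by positivity)]
      nlinarith [mul_pos hL0 (sub_pos.2 ht₀.2)]
    linarith
  refine ⟨t₀ + s, ⟨by linarith [ht₀.1], hsT⟩, fun y hy => ?_⟩
  have hloss : 2 / s + 40 * (C + B * g L) * s ≤ L / 4 + 320 * (K / L) + (40 * C + 2) :=
    div_add_mul_le (by positivity) (mul_le_mul_of_nonneg_left hgL2 hB) hK hL0 hs
  calc Real.exp (3 / 4 * L - 320 * B * (g (2 * L) / L) - (40 * C + 2)) / 4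
    _ = Real.exp L / 4 * Real.exp (-(L / 4 + 320 * (K / L) + (40 * C + 2))) := by
      rw [div_mul_eq_mul_div (Real.exp L), ← Real.exp_add]
      congr 2
      ring
    _ ≤ u t₀ x₀ / 2 * Real.exp (-(2 / s + 40 * (C + B * g L) * s)) := by
      gcongr ?_ * Real.exp (-?_)
      linarith
    _ ≤ u (t₀ + s) y := hu.half_mul_exp_le_of_isMaxOn (fun z => logNonlinearity_nonneg hg hg0) hV
      hT ht₀ hs0 hsT hd hx₀ hy (by linarith) hmax hgL
      fun z hz => hL ▸ logNonlinearity_le_mul hg hg0 hz.1 hz.2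

theorem exists_forall_le_of_blowsUpAt (hg_sq : g =o[atTop] fun L : ℝ => L ^ 2) {R d : ℝ}
    (hcentral : ∀ t ∈ Ico 0 T, ∀ x ∈ Icc (-1) 1, ∃ y, |y| ≤ R ∧ u t x ≤ u t y) (hd : 0 < d)
    (hRd : R + 2 * d ≤ 1) (N : ℝ) : ∃ t ∈ Ioo 0 T, ∀ y, |y| + d ≤ 1 → N ≤ u t y := by
  set Φ : ℝ → ℝ := fun L =>
    Real.exp (3 / 4 * L - 320 * B * (g (2 * L) / L) - (40 * (2 / T + 4 / d ^ 2) + 2)) / 4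
  have hΦ : Tendsto Φ atTop atTop :=
    (Real.tendsto_exp_atTop.comp (tendsto_atTop_add_const_right _ _
      (tendsto_mul_sub_mul_div_atTop hg_sq (by norm_num) _))).atTop_div_const four_pos
  obtain ⟨L₀, hL₀⟩ := eventually_atTop.1 (hΦ.eventually_ge_atTop N)
  obtain ⟨t₀, ht₀, x₀, hx₀, hbig, hmax⟩ :=
    hu.exists_isMaxOn_of_blowsUpAt hT hblow hcentral (max 1 (Real.exp L₀))
  have hM : 1 < u t₀ x₀ := (le_max_left _ _).trans_lt hbig
  have hlog : L₀ ≤ Real.log (1 + u t₀ x₀) := by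
    rw [Real.le_log_iff_exp_le (by linarith)]
    linarith [(le_max_right 1 (Real.exp L₀)).trans_lt hbig]
  obtain ⟨t, ht, hle⟩ := hu.exists_exp_le_of_isMaxOn hf hg hg0 hV hT hblow ht₀ hd
    (by linarith) hM.le hmax rfl
  exact ⟨t, ht, fun y hy => (hL₀ _ hlog).trans (hle y hy)⟩

end LogNonlinearity

end IsNonnegSolution

namespace IsNonnegSolution

variable {f V : ℝ → ℝ} {T : ℝ} {u : ℝ → ℝ → ℝ}

lemma tendsto_atTop_of_forall_exists_le (hu : IsNonnegSolution f V T u)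
    (hf_nonneg : ∀ z, 0 ≤ z → 0 ≤ f z) (hV_nonneg : ∀ x ∈ Icc (-1) 1, 0 ≤ V x)
    {d x : ℝ} (hd : 0 < d) (hx : |x| + 2 * d ≤ 1)
    (hlarge : ∀ N, ∃ t ∈ Ioo 0 T, ∀ y, |y| + d ≤ 1 → N ≤ u t y) :
    Tendsto (fun t => u t x) (𝓝[<] T) atTop := by
  refine tendsto_atTop.2 fun N => ?_
  set k := (Real.pi / (2 * d)) ^ 2
  obtain ⟨t₁, ht₁, hle⟩ := hlarge (max N 0 * Real.exp (k * T))
  filter_upwards [Ioo_mem_nhdsLT ht₁.2] with t ht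
  have hinit (y : ℝ) (hy : y ∈ Icc (x - d) (x + d)) : max N 0 * Real.exp (k * T) ≤ u t₁ y := by
    refine hle y ?_
    have hyx : |y - x| ≤ d := abs_le.2 ⟨by linarith [hy.1], by linarith [hy.2]⟩
    linarith [abs_add_le (y - x) x, congrArg abs (sub_add_cancel y x)]
  have hpersist := hu.mul_exp_le_of_movingWindow hf_nonneg hV_nonneg (q := 0) ht₁.1.le
    ⟨ht.1.le, ht.2⟩ hd (by positivity) (fun s _ => by rw [zero_mul, add_zero]; linarith) hinit
  simp only [abs_zero, zero_div, zero_mul, neg_zero, Real.exp_zero, mul_one, add_zero,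
    zero_pow two_ne_zero] at hpersist
  have hdecay : 1 ≤ Real.exp (k * T) * Real.exp (-(k * (t - t₁))) := by
    rw [← Real.exp_add, Real.one_le_exp_iff]
    have hkt : 0 ≤ k * (T - (t - t₁)) := mul_nonneg (by positivity) (by linarith [ht₁.1, ht.2])
    linarith
  calc N ≤ max N 0 := le_max_left _ _
    _ ≤ max N 0 * (Real.exp (k * T) * Real.exp (-(k * (t - t₁)))) :=
      le_mul_of_one_le_right (le_max_right _ _) hdecay
    _ ≤ u t x := by rwa [← mul_assoc]

end IsNonnegSolution

theorem stmt16_general {g V : ℝ → ℝ} {T ℓ : ℝ} {u : ℝ → ℝ → ℝ} (hg : MonotoneOn g (Ici 0))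
    (hg0 : 0 ≤ g 0) (hg_sq : g =o[atTop] fun L : ℝ => L ^ 2)
    (hf : LocallyLipschitzOn (Ici 0) (logNonlinearity g)) (hℓ : ℓ ∈ Ioo 0 1)
    (hV_nonneg : ∀ x ∈ Icc (-1) 1, 0 ≤ V x) (hV_bdd : BddAbove (V '' Icc (-1) 1))
    (hV_refl : SymmReflectionLE ℓ V) (hu_refl : SymmReflectionLE ℓ (u 0)) (hT : 0 < T)
    (hu : IsNonnegSolution (logNonlinearity g) V T u) (hblow : BlowsUpAt u T) :
    ∀ x ∈ Ioo (-1 : ℝ) 1, Tendsto (fun t => u t x) (𝓝[<] T) atTop := by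
  intro x hx
  obtain ⟨B, hB⟩ := hV_bdd
  have hV (y : ℝ) (hy : y ∈ Icc (-1) 1) : V y ∈ Icc 0 B :=
    ⟨hV_nonneg y hy, hB (mem_image_of_mem V hy)⟩
  have hf_nonneg (z : ℝ) (hz : 0 ≤ z) : 0 ≤ logNonlinearity g z := logNonlinearity_nonneg hg hg0 hz
  set R := max ℓ (1 - 2 * ℓ)
  have hcentral (t : ℝ) (ht : t ∈ Ico 0 T) (y : ℝ) (hy : y ∈ Icc (-1) 1) :
      ∃ z, |z| ≤ R ∧ u t y ≤ u t z :=
    (hu.symmReflectionLE hf hf_nonneg hV ⟨hℓ.1.le, hℓ.2⟩ hV_refl hu_refl ht).exists_abs_le hy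
  obtain ⟨d, hd, hRd, hxd⟩ : ∃ d > 0, R + 2 * d ≤ 1 ∧ |x| + 2 * d ≤ 1 := by
    have hlt : max R |x| < 1 :=
      max_lt (max_lt hℓ.2 (by linarith [hℓ.1])) (abs_lt.2 hx)
    exact ⟨(1 - max R |x|) / 2, by linarith, by linarith [le_max_left R |x|],
      by linarith [le_max_right R |x|]⟩
  exact hu.tendsto_atTop_of_forall_exists_le hf_nonneg hV_nonneg hd hxd
    (hu.exists_forall_le_of_blowsUpAt hf hg hg0 hV hT hblow hg_sq hcentral hd hRd)

theorem stmt16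
    (a : ℝ) (ha1 : 1 < a) (ha2 : a < 2)
    (V φ : ℝ → ℝ)
    (hV_C1 : ContDiffOn ℝ 1 V (Icc (-1) 1)) (hφ_C1 : ContDiffOn ℝ 1 φ (Icc (-1) 1))
    (hV_nonneg : ∀ x ∈ Icc (-1:ℝ) 1, 0 ≤ V x) (hφ_nonneg : ∀ x ∈ Icc (-1:ℝ) 1, 0 ≤ φ x)
    (hV_even : ∀ x ∈ Icc (-1:ℝ) 1, V (-x) = V x) (hφ_even : ∀ x ∈ Icc (-1:ℝ) 1, φ (-x) = φ x)
    (hV0 : 0 < V 0) (hφ0 : 0 < φ 0) (hφ1 : φ 1 = 0)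
    (hV' : ∀ x ∈ Icc (0:ℝ) (1/3), derivWithin V (Icc (-1) 1) x ≤ 0)
    (hφ' : ∀ x ∈ Icc (0:ℝ) (1/3), derivWithin φ (Icc (-1) 1) x ≤ 0)
    (hVbd : ∀ x ∈ Icc (1/3:ℝ) 1, V x ≤ V (1/3))
    (hφbd : ∀ x ∈ Icc (1/3:ℝ) 1, φ x ≤ φ (1/3))
    (lam : ℝ) (hlam : 0 < lam)
    (T : ℝ) (hT : 0 < T)
    (u : ℝ → ℝ → ℝ)
    (hu_cont : ContinuousOn (fun q : ℝ × ℝ => u q.1 q.2) (Ico 0 T ×ˢ Icc (-1) 1))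
    (hu_nonneg : ∀ t ∈ Ico 0 T, ∀ x ∈ Icc (-1:ℝ) 1, 0 ≤ u t x)
    (hu_reg : ∀ t ∈ Ioo 0 T, ∀ x ∈ Ioo (-1:ℝ) 1,
      DifferentiableAt ℝ (fun s => u s x) t ∧ ContDiffAt ℝ 2 (u t) x)
    (heq : ∀ t ∈ Ioo 0 T, ∀ x ∈ Ioo (-1:ℝ) 1,
      deriv (fun s => u s x) t = deriv (deriv (u t)) x + V x * (u t x * Real.log (1 + u t x) ^ a))
    (hbc : ∀ t ∈ Ioo 0 T, u t (-1) = 0 ∧ u t 1 = 0)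
    (hic : ∀ x ∈ Icc (-1:ℝ) 1, u 0 x = lam * φ x)
    (hblow : ∀ M : ℝ, ∀ δ > 0, ∃ t, T - δ < t ∧ t < T ∧ ∃ x ∈ Icc (-1:ℝ) 1, M < u t x)
    :
    ∀ x ∈ Ioo (-1:ℝ) 1, Tendsto (fun t => u t x) (nhdsWithin T (Iio T)) atTop := by
  have hV_refl : SymmReflectionLE (1 / 3) V :=
    .of_even_of_derivWithin_nonpos (by norm_num) (hV_C1.differentiableOn one_ne_zero) hV_even hV'
      hVbd
  have hφ_refl : SymmReflectionLE (1 / 3) φ :=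
    .of_even_of_derivWithin_nonpos (by norm_num) (hφ_C1.differentiableOn one_ne_zero) hφ_even hφ'
      hφbd
  exact stmt16_general (Real.monotoneOn_rpow_Ici_of_exponent_nonneg (by linarith))
    (Real.zero_rpow (by linarith)).ge
    (by simpa only [Real.rpow_two] using isLittleO_rpow_rpow_atTop ha2)
    (locallyLipschitzOn_logNonlinearity (Real.contDiff_rpow_const_of_le (by simpa using ha1.le)))
    (by norm_num) hV_nonneg (isCompact_Icc.bddAbove_image hV_C1.continuousOn) hV_refl
    ((hφ_refl.const_mul hlam.le).congr (by norm_num) hic) hT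
    ⟨hu_cont, hu_nonneg, hu_reg, heq, hbc⟩ hblow
end
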